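/- Let q ≥ 1 and let A be an L_q(X,μ)-valued d-indexed array. There is a constant C(d) depending only on d such that for every p ≥ 1: (1/C(d)) q^{(1−d)/2} Σ_{J⊆[d]} Σ_{P∈P(J)} p^{|P|/2} |||A|||^{L_q}_P ≤ ‖ Σ_{i∈[n]^d} a_i g^1_{i_1} ⋯ g^d_{i_d} ‖_p ≤ C(d) q^{d−1/2} Σ_{J⊆[d]} Σ_{P∈P(J)} p^{|P|/2} |||A|||^{L_q}_P, where (g^k_i)_{k∈[d], i∈[n]} are i.i.d. standard Gaussian and ‖X‖_p = (E‖X‖_{L_q}^p)^{1/p}. -/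

import Mathlib

/-!
A *block* is a nonempty set `I` of coordinates, carrying either a standard Gaussian array or a
deterministic array of Euclidean norm at most one (a unit array), indexed by `i_I`.

**Upper bound.** It is obtained first in an arbitrary normed space (`banach_upper`), by removing the
Gaussian blocks one at a time. Suppose the blocks of `P` carry unit arrays, over which a supremum is
taken, the norm is averaged over the Gaussian blocks of `P'`, and the blocks of `K` together with a
further block `L` are Gaussian and subject to the `p`-th moment (`Zs`). With `K` frozen this is the
`p`-th moment of the supremum of a Gaussian process, linear in the Gaussian array on `L` and affine
in each unit array. Such a supremum is bounded by the lemma `key` without any chaining: replace the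
parameter `x` by `x + p^{-1/2} G` with `G` Gaussian; by multi-affinity some choice of signs of the
blocks of `G` does not decrease the norming functional of the value at `x`; with probability at least
one half the mean and the weak variance at all the perturbed points are comparable to their averages,
so the process may be truncated at these levels; Gaussian concentration (`gsup_moment`) handles the
truncated process at each fixed point, and by the Cameron–Martin formula averages over
`x + p^{-1/2} G` are bounded by averages over `p^{-1/2} G`, uniformly in the index `x`, after doubling
the moment and up to a factor `exp (c p)`, which the `p`-th root absorbs. Expanding the product over
the blocks of `P` at the perturbed point, each block keeps its unit array or becomes Gaussian at the price `p^{-1/2}`. In the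
mean (`proc_mean`) the new Gaussian blocks and `L` join `P'`; in the weak variance (`proc_var`) they
merge with `L` into one larger block carrying a unit array, with a gain `√p`. In both cases the
weights `√p ^ |P|` match (`bound_step`), and iteration leaves only deterministic arrays and means
(`bound_all`). In `L_q`, Fubini and the moments of scalar chaoses (`chaos_upper`) compare the mean
with the square function in the definition of `tNormLq` at a loss of order `q^{d/2} ≤ q^{d-1/2}`
(`nrm_upper`, `base_bound`).

**Lower bound.** Given a partition `P` of `J` and unit arrays on its blocks, a norming functional and
the lower bound for moments of scalar chaoses (`chaos_lower`) replace the Gaussian variables with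
coordinates in one block by the unit array on it, at a gain of order `√p` (`block_step`,
`blocks_lower`). For the coordinates outside `J` the moment is bounded below by the mean, and
Minkowski's integral inequality with the scalar first moment bound `chaos_lower_one` produces the
square function (`nrm_lower`). No power of `q` is lost here, and `q^{(1-d)/2} ≤ 1`.

Fubini and Minkowski need σ-finiteness; a finite family in `L_q` lives on a σ-finite part of the
measure space (`exists_sigmaFinite_support`).
-/

open MeasureTheory ProbabilityTheory
open scoped Classical

noncomputable section

def stdGaussian (ι : Type*) [Fintype ι] : Measure (ι → ℝ) :=
  Measure.pi fun _ => gaussianReal 0 1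

abbrev GIdx (d n : ℕ) := Σ J : Finset (Fin d), ({l // l ∈ J} → Fin n)

def IsPartition {d : ℕ} (J : Finset (Fin d)) (P : Finset (Finset (Fin d))) : Prop :=
  (∀ I ∈ P, I.Nonempty) ∧ (∀ I ∈ P, ∀ I' ∈ P, I ≠ I' → Disjoint I I') ∧ P.sup id = J

def IsPartitionPair {d : ℕ} (S : Finset (Fin d)) (P P' : Finset (Finset (Fin d))) : Prop :=
  Disjoint P P' ∧ IsPartition S (P ∪ P')

def partitionsOf {d : ℕ} (J : Finset (Fin d)) : Finset (Finset (Finset (Fin d))) :=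
  Finset.univ.filter fun P => IsPartition J P

def partitionPairs (d : ℕ) :
    Finset (Finset (Finset (Fin d)) × Finset (Finset (Fin d))) :=
  Finset.univ.filter fun PP => IsPartitionPair Finset.univ PP.1 PP.2

def chaosNorm {F : Type*} [NormedAddCommGroup F] [NormedSpace ℝ F] {d n : ℕ}
    (A : (Fin d → Fin n) → F) (P' P : Finset (Finset (Fin d))) : ℝ :=
  sSup { r : ℝ | ∃ x : (I : Finset (Fin d)) → ({l // l ∈ I} → Fin n) → ℝ,
    (∀ I ∈ P, ∑ v : {l // l ∈ I} → Fin n, x I v ^ 2 ≤ 1) ∧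
    r = ∫ ω : GIdx d n → ℝ,
        ‖∑ i : Fin d → Fin n,
          ((∏ I ∈ P, x I fun l => i l.1) * ∏ J ∈ P', ω ⟨J, fun l => i l.1⟩) • A i‖
          ∂ stdGaussian (GIdx d n) }

def tNorm {F : Type*} [NormedAddCommGroup F] [NormedSpace ℝ F] {d n : ℕ}
    (A : (Fin d → Fin n) → F) (J : Finset (Fin d)) (P : Finset (Finset (Fin d))) : ℝ :=
  chaosNorm A ((Finset.univ \ J).image fun l => ({l} : Finset (Fin d))) P

def decChaos {F : Type*} [NormedAddCommGroup F] [NormedSpace ℝ F] {d n : ℕ}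
    (A : (Fin d → Fin n) → F) (ω : Fin d × Fin n → ℝ) : F :=
  ∑ i : Fin d → Fin n, (∏ k, ω (k, i k)) • A i

def momP {F : Type*} [NormedAddCommGroup F] [NormedSpace ℝ F] {d n : ℕ}
    (A : (Fin d → Fin n) → F) (p : ℝ) : ℝ :=
  (∫ ω : Fin d × Fin n → ℝ, ‖decChaos A ω‖ ^ p ∂ stdGaussian (Fin d × Fin n)) ^ (1 / p)

end

open scoped ENNReal

def glue {d n : ℕ} (J : Finset (Fin d)) (v : {l // l ∈ J} → Fin n)
    (u : {l // l ∈ Finset.univ \ J} → Fin n) : Fin d → Fin n :=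
  fun j => if h : j ∈ J then v ⟨j, h⟩
    else u ⟨j, Finset.mem_sdiff.mpr ⟨Finset.mem_univ j, h⟩⟩

noncomputable def tNormLq {X : Type*} [MeasurableSpace X] (μ : Measure X) (q : ℝ)
    {d n : ℕ} (A : (Fin d → Fin n) → Lp ℝ (ENNReal.ofReal q) μ)
    (J : Finset (Fin d)) (P : Finset (Finset (Fin d))) : ℝ :=
  sSup { r : ℝ | ∃ x : (I : Finset (Fin d)) → ({l // l ∈ I} → Fin n) → ℝ,
    (∀ I ∈ P, ∑ v : {l // l ∈ I} → Fin n, x I v ^ 2 ≤ 1) ∧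
    r = (∫ t, (∑ u : {l // l ∈ Finset.univ \ J} → Fin n,
          (∑ v : {l // l ∈ J} → Fin n,
            (∏ I ∈ P, x I fun l => glue J v u l.1) * A (glue J v u) t) ^ 2)
        ^ (q / 2) ∂ μ) ^ (1 / q) }

/-! ### Invariances of Gaussian measures -/

namespace LqChaos
noncomputable section

/-- The standard Gaussian measure on `ι → ℝ`. -/
abbrev gam (ι : Type*) [Fintype ι] : Measure (ι → ℝ) := _root_.stdGaussian ι

instance gam_prob (ι : Type*) [Fintype ι] : IsProbabilityMeasure (gam ι) := by
  unfold gam _root_.stdGaussian; infer_instance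

lemma gam_char {ι : Type*} [Fintype ι] (v : ι → ℝ) :
    ∫ w, Complex.exp (((∑ k, v k * w k : ℝ) : ℂ) * Complex.I) ∂gam ι
      = Complex.exp (-((∑ k, v k ^ 2 : ℝ) : ℂ) / 2) := by
  have h := (charFun_pi (μ := fun _ : ι => gaussianReal 0 1) (WithLp.toLp 2 v))
  rw [charFun_apply, ← MeasurableEquiv.coe_toLp, integral_map_equiv] at h
  simp only [charFun_gaussianReal, PiLp.inner_apply, MeasurableEquiv.coe_toLp] at h
  rw [← Complex.exp_sum] at h
  have e : -((∑ k, v k ^ 2 : ℝ) : ℂ) / 2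
      = ∑ x, ((v x : ℂ) * ((0 : ℝ) : ℂ) * Complex.I - (((1 : NNReal) : ℝ) : ℂ) * (v x : ℂ) ^ 2 / 2) := by
    simp [Finset.sum_neg_distrib, neg_div, Finset.sum_div]
  rw [e]; exact h

/-- A random vector with characteristic function `exp (-|v|²/2)` is standard Gaussian. -/
lemma map_eq_gam {ι W : Type*} [Fintype ι] [MeasurableSpace W] (P : Measure W)
    [IsProbabilityMeasure P] (X : W → ι → ℝ) (hX : Measurable X)
    (h : ∀ v : ι → ℝ, ∫ w, Complex.exp (((∑ k, v k * X w k : ℝ) : ℂ) * Complex.I) ∂P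
      = Complex.exp (-((∑ k, v k ^ 2 : ℝ) : ℂ) / 2)) : P.map X = gam ι := by
  have : IsProbabilityMeasure (P.map X) := Measure.isProbabilityMeasure_map hX.aemeasurable
  unfold gam _root_.stdGaussian
  rw [← charFun_eq_pi_iff]
  intro t
  rw [charFun_apply, ← MeasurableEquiv.coe_toLp, integral_map_equiv,
    integral_map hX.aemeasurable (by fun_prop)]
  simp only [charFun_gaussianReal, PiLp.inner_apply, MeasurableEquiv.coe_toLp]
  rw [← Complex.exp_sum]
  convert h (fun k => t k) using 3
  · simp [mul_comm]
  · simp [Finset.sum_neg_distrib, neg_div, Finset.sum_div]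

/-- Two-vector version: linear images of two independent standard Gaussian vectors. -/
lemma map_prod_eq_gam {ι κ κ' : Type*} [Fintype ι] [Fintype κ] [Fintype κ']
    (M : ι → κ → ℝ) (N : ι → κ' → ℝ)
    (h : ∀ v : ι → ℝ, ∑ j, (∑ i, v i * M i j) ^ 2 + ∑ j, (∑ i, v i * N i j) ^ 2 = ∑ i, v i ^ 2) :
    ((gam κ).prod (gam κ')).map
      (fun w i => ∑ j, M i j * w.1 j + ∑ j, N i j * w.2 j) = gam ι := by
  apply map_eq_gam
  · fun_prop
  intro v
  have e : ∀ w : (κ → ℝ) × (κ' → ℝ),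
      Complex.exp (((∑ i, v i * (∑ j, M i j * w.1 j + ∑ j, N i j * w.2 j) : ℝ) : ℂ) * Complex.I)
      = Complex.exp (((∑ j, (∑ i, v i * M i j) * w.1 j : ℝ) : ℂ) * Complex.I)
        * Complex.exp (((∑ j, (∑ i, v i * N i j) * w.2 j : ℝ) : ℂ) * Complex.I) := by
    intro w
    rw [← Complex.exp_add, ← add_mul, ← Complex.ofReal_add]
    congr 3
    simp only [mul_add, Finset.sum_add_distrib, Finset.mul_sum, Finset.sum_mul]
    rw [Finset.sum_comm]; congr 1
    · simp [mul_assoc]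
    · rw [Finset.sum_comm]; simp [mul_assoc]
  simp_rw [e]
  rw [integral_prod_mul (μ := gam κ) (ν := gam κ')
    (fun w => Complex.exp (((∑ j, (∑ i, v i * M i j) * w j : ℝ) : ℂ) * Complex.I))
    (fun w => Complex.exp (((∑ j, (∑ i, v i * N i j) * w j : ℝ) : ℂ) * Complex.I)),
    gam_char, gam_char, ← Complex.exp_add, ← h v]
  congr 1
  push_cast; ring

lemma map_eq_gam_of_lin {ι κ : Type*} [Fintype ι] [Fintype κ]
    (M : ι → κ → ℝ)
    (h : ∀ v : ι → ℝ, ∑ j, (∑ i, v i * M i j) ^ 2 = ∑ i, v i ^ 2) :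
    (gam κ).map (fun w i => ∑ j, M i j * w j) = gam ι := by
  apply map_eq_gam
  · fun_prop
  intro v
  rw [← h v, ← gam_char]
  congr 1; ext w; congr 3
  simp only [Finset.mul_sum, Finset.sum_mul]
  rw [Finset.sum_comm]; simp [mul_assoc]

/-- Merging two independent copies along a splitting of the coordinates. -/
lemma map_merge {ι : Type*} [Fintype ι] (A : ι → Prop) [DecidablePred A] :
    ((gam ι).prod (gam ι)).map (fun w i => if A i then w.1 i else w.2 i) = gam ι := by
  classical
  have := map_prod_eq_gam (ι := ι) (κ := ι) (κ' := ι)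
    (fun i j => if i = j ∧ A i then 1 else 0) (fun i j => if i = j ∧ ¬ A i then 1 else 0) ?_
  · convert this using 3 with w
    ext i
    by_cases hi : A i <;> simp [hi]
  · intro v
    rw [← Finset.sum_add_distrib]
    refine Finset.sum_congr rfl fun j _ => ?_
    by_cases hj : A j
    · rw [Finset.sum_eq_single j, Finset.sum_eq_zero] <;> simp +contextual [hj]
    · rw [Finset.sum_eq_zero, Finset.sum_eq_single j] <;> simp +contextual [hj]

lemma lintegral_merge {ι : Type*} [Fintype ι] (A : ι → Prop) [DecidablePred A]
    (f : (ι → ℝ) → ℝ≥0∞) (hf : Measurable f) :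
    ∫⁻ w, ∫⁻ w', f (fun i => if A i then w i else w' i) ∂gam ι ∂gam ι = ∫⁻ w, f w ∂gam ι := by
  conv_rhs => rw [← map_merge A]
  have hm : Measurable (fun (w : (ι → ℝ) × (ι → ℝ)) i => if A i then w.1 i else w.2 i) := by
    refine measurable_pi_lambda _ fun i => ?_
    by_cases hi : A i <;> simp only [hi, if_true, if_false] <;> fun_prop
  rw [lintegral_map hf hm, lintegral_prod _ (by exact (hf.comp hm).aemeasurable)]

lemma map_sign {ι : Type*} [Fintype ι] (s : ι → ℝ) (hs : ∀ i, s i ^ 2 = 1) :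
    (gam ι).map (fun w i => s i * w i) = gam ι := by
  classical
  have := map_eq_gam_of_lin (ι := ι) (κ := ι) (fun i j => if i = j then s i else 0) ?_
  · convert this using 3 with w; ext i; simp
  · intro v; simp [mul_pow, hs]

lemma lintegral_sign {ι : Type*} [Fintype ι] (s : ι → ℝ) (hs : ∀ i, s i ^ 2 = 1)
    (f : (ι → ℝ) → ℝ≥0∞) (hf : Measurable f) :
    ∫⁻ w, f (fun i => s i * w i) ∂gam ι = ∫⁻ w, f w ∂gam ι := by
  conv_rhs => rw [← map_sign s hs]
  rw [lintegral_map hf (by fun_prop)]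

lemma map_reindex {ι κ : Type*} [Fintype ι] [Fintype κ] (e : ι → κ) (he : e.Injective) :
    (gam κ).map (fun w i => w (e i)) = gam ι := by
  classical
  have := map_eq_gam_of_lin (ι := ι) (κ := κ) (fun i j => if e i = j then 1 else 0) ?_
  · convert this using 3 with w; ext i; simp
  · intro v
    rw [← Finset.sum_subset (Finset.subset_univ (Finset.univ.image e)), Finset.sum_image he.injOn]
    · refine Finset.sum_congr rfl fun i _ => ?_
      rw [Finset.sum_eq_single i] <;> simp +contextual [he.eq_iff]
    · intro j _ hj
      rw [Finset.sum_eq_zero]; · simp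
      intro i _
      rw [if_neg]; · simp
      rintro rfl; simp at hj

lemma lintegral_reindex {ι κ : Type*} [Fintype ι] [Fintype κ] (e : ι → κ) (he : e.Injective)
    (f : (ι → ℝ) → ℝ≥0∞) (hf : Measurable f) :
    ∫⁻ w, f (fun i => w (e i)) ∂gam κ = ∫⁻ w, f w ∂gam ι := by
  conv_rhs => rw [← map_reindex e he]
  rw [lintegral_map hf (by fun_prop)]

lemma gam_unit {f : (Unit → ℝ) → ℝ≥0∞} :
    ∫⁻ w, f w ∂gam Unit = ∫⁻ s, f (fun _ => s) ∂gaussianReal 0 1 := by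
  have h := (measurePreserving_funUnique (gaussianReal 0 1) Unit).symm
  have := h.lintegral_comp_emb (MeasurableEquiv.measurableEmbedding _) f
  unfold gam _root_.stdGaussian
  rw [← this]; rfl

/-- The law of a linear form in a standard Gaussian vector. -/
lemma lintegral_linear {ι : Type*} [Fintype ι] (v : ι → ℝ) (f : ℝ → ℝ≥0∞) (hf : Measurable f) :
    ∫⁻ w, f (∑ i, v i * w i) ∂gam ι
      = ∫⁻ s, f (Real.sqrt (∑ i, v i ^ 2) * s) ∂gaussianReal 0 1 := by
  rcases (Finset.sum_nonneg fun i (_ : i ∈ Finset.univ) => sq_nonneg (v i)).eq_or_lt' with h0 | hpos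
  · have hv : ∀ i, v i = 0 := by
      intro i
      have := (Finset.sum_eq_zero_iff_of_nonneg (fun i _ => sq_nonneg (v i))).1 h0 i (Finset.mem_univ _)
      simpa using this
    simp [hv]
  · set S := ∑ i, v i ^ 2 with hS
    have hs : Real.sqrt S ≠ 0 := (Real.sqrt_pos.2 hpos).ne'
    have := map_eq_gam_of_lin (ι := Unit) (κ := ι) (fun _ j => v j / Real.sqrt S) ?_
    · have h2 := gam_unit (f := fun w => f (Real.sqrt S * w ()))
      rw [← h2, ← this, lintegral_map (by fun_prop) (by fun_prop)]
      congr 1; ext w; congr 1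
      rw [Finset.mul_sum]
      refine Finset.sum_congr rfl fun i _ => ?_
      field_simp
    · intro a
      simp only [Finset.univ_unique, Finset.sum_singleton, mul_pow, div_pow, Real.sq_sqrt hpos.le]
      rw [← Finset.mul_sum, ← Finset.sum_div, ← hS, div_self hpos.ne', mul_one]

/-- Rotation invariance of a pair of independent standard Gaussian vectors. -/
lemma lintegral_rot {ι : Type*} [Fintype ι] (c s : ℝ) (h : c ^ 2 + s ^ 2 = 1)
    (f : (ι → ℝ) → (ι → ℝ) → ℝ≥0∞) (hf : Measurable (fun w : (ι → ℝ) × (ι → ℝ) => f w.1 w.2)) :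
    ∫⁻ u, ∫⁻ u', f (fun i => c * u i + s * u' i) (fun i => c * u' i - s * u i) ∂gam ι ∂gam ι
      = ∫⁻ u, ∫⁻ u', f u u' ∂gam ι ∂gam ι := by
  classical
  have key := map_prod_eq_gam (ι := ι ⊕ ι) (κ := ι) (κ' := ι)
    (fun i j => Sum.elim (fun i => if i = j then c else 0) (fun i => if i = j then -s else 0) i)
    (fun i j => Sum.elim (fun i => if i = j then s else 0) (fun i => if i = j then c else 0) i) ?_
  · have hp := (measurePreserving_sumPiEquivProdPi (fun _ : ι ⊕ ι => gaussianReal 0 1))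
    have hr : ∫⁻ u, ∫⁻ u', f u u' ∂gam ι ∂gam ι
        = ∫⁻ w, f (fun i => w (Sum.inl i)) (fun i => w (Sum.inr i)) ∂gam (ι ⊕ ι) := by
      rw [← lintegral_prod (fun w : (ι → ℝ) × (ι → ℝ) => f w.1 w.2) hf.aemeasurable]
      have := hp.lintegral_comp hf
      exact this.symm
    have hm : Measurable fun w : (ι ⊕ ι → ℝ) => f (fun i => w (Sum.inl i)) (fun i => w (Sum.inr i)) :=
      hf.comp (f := fun w : (ι ⊕ ι → ℝ) => ((fun i => w (Sum.inl i)), (fun i => w (Sum.inr i))))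
        (by fun_prop)
    have hm2 : Measurable fun w : (ι → ℝ) × (ι → ℝ) =>
        f (fun i => c * w.1 i + s * w.2 i) (fun i => c * w.2 i - s * w.1 i) :=
      hf.comp (f := fun w : (ι → ℝ) × (ι → ℝ) =>
        ((fun i => c * w.1 i + s * w.2 i), (fun i => c * w.2 i - s * w.1 i))) (by fun_prop)
    rw [hr, ← key, lintegral_map hm (by fun_prop), ← lintegral_prod _ hm2.aemeasurable]
    congr 1; ext w
    congr 1
    · ext i; simp
    · ext i; simp; ring
  · intro v
    simp only [Fintype.sum_sum_type, Sum.elim_inl, Sum.elim_inr, mul_ite, mul_zero,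
      Finset.sum_ite_eq', Finset.mem_univ, if_true]
    rw [← Finset.sum_add_distrib, ← Finset.sum_add_distrib]
    refine Finset.sum_congr rfl fun j _ => ?_
    linear_combination (v (Sum.inl j) ^ 2 + v (Sum.inr j) ^ 2) * h

end
end LqChaos

/-! ### Gaussian moments and the Cameron–Martin formula -/

namespace LqChaos
noncomputable section

lemma lintegral_exp_gauss (a b : ℝ) :
    ∫⁻ s, ENNReal.ofReal (Real.exp (a * s + b)) ∂gaussianReal 0 1
      = ENNReal.ofReal (Real.exp (a ^ 2 / 2 + b)) := by
  have hi : Integrable (fun s => Real.exp (a * s + b)) (gaussianReal 0 1) := by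
    simp_rw [Real.exp_add]
    exact (integrable_exp_mul_gaussianReal a).mul_const _
  rw [← ofReal_integral_eq_lintegral_ofReal hi (ae_of_all _ fun s => (Real.exp_pos _).le)]
  congr 1
  simp_rw [Real.exp_add]
  rw [integral_mul_const]
  have := congrFun (mgf_id_gaussianReal (μ := 0) (v := 1)) a
  simp only [mgf, id] at this
  rw [this]; simp

/-- Upper Gaussian moments: `𝔼|s|^r ≤ (4√r)^r`. -/
lemma gauss_mom_upper {r : ℝ} (hr : 1 ≤ r) :
    ∫⁻ s, ENNReal.ofReal (|s| ^ r) ∂gaussianReal 0 1 ≤ ENNReal.ofReal ((4 * √r) ^ r) := by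
  have hr0 : 0 < r := by linarith
  have hs : 0 < √r := Real.sqrt_pos.2 hr0
  have key : ∀ s : ℝ, |s| ^ r ≤ √r ^ r * (Real.exp (√r * s + 0) + Real.exp (-√r * s + 0)) := by
    intro s
    have h1 : |s| ≤ √r * Real.exp (|s| / √r) := by
      have := Real.add_one_le_exp (|s| / √r)
      have h2 : |s| / √r ≤ Real.exp (|s| / √r) := by linarith
      rw [div_le_iff₀ hs] at h2; linarith
    calc |s| ^ r ≤ (√r * Real.exp (|s| / √r)) ^ r := Real.rpow_le_rpow (abs_nonneg _) h1 hr0.le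
      _ = √r ^ r * Real.exp (√r * |s|) := by
        rw [Real.mul_rpow hs.le (Real.exp_pos _).le, ← Real.exp_mul]
        congr 2
        field_simp
        rw [Real.sq_sqrt hr0.le]
      _ ≤ _ := by
        gcongr
        rcases abs_cases s with ⟨h, _⟩ | ⟨h, _⟩
        · rw [h]; simp; positivity
        · rw [h]; simp; positivity
  calc ∫⁻ s, ENNReal.ofReal (|s| ^ r) ∂gaussianReal 0 1
      ≤ ∫⁻ s, ENNReal.ofReal (√r ^ r) * (ENNReal.ofReal (Real.exp (√r * s + 0))
          + ENNReal.ofReal (Real.exp (-√r * s + 0))) ∂gaussianReal 0 1 := by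
        refine lintegral_mono fun s => ?_
        rw [← ENNReal.ofReal_add (Real.exp_pos _).le (Real.exp_pos _).le,
          ← ENNReal.ofReal_mul (by positivity)]
        exact ENNReal.ofReal_le_ofReal (key s)
    _ = ENNReal.ofReal (√r ^ r * (Real.exp (r / 2) + Real.exp (r / 2))) := by
        rw [lintegral_const_mul _ (by fun_prop), lintegral_add_left (by fun_prop),
          lintegral_exp_gauss, lintegral_exp_gauss,
          ← ENNReal.ofReal_add (Real.exp_pos _).le (Real.exp_pos _).le,
          ← ENNReal.ofReal_mul (by positivity)]
        simp [Real.sq_sqrt hr0.le]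
    _ ≤ _ := by
        apply ENNReal.ofReal_le_ofReal
        rw [mul_comm 4, Real.mul_rpow hs.le (by norm_num)]
        gcongr
        have h2 : (2 : ℝ) ≤ 2 ^ r := by
          simpa using Real.rpow_le_rpow_of_exponent_le (by norm_num : (1 : ℝ) ≤ 2) hr
        have h3 : Real.exp (r / 2) ≤ 2 ^ r := by
          have : Real.exp (1 / 2) ≤ 2 := by
            have h := Real.exp_one_lt_d9
            have e : Real.exp (1 / 2) ^ 2 = Real.exp 1 := by
              rw [← Real.exp_nat_mul]; norm_num
            nlinarith [Real.exp_pos (1 / 2)]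
          calc Real.exp (r / 2) = Real.exp (1 / 2) ^ r := by rw [← Real.exp_mul]; congr 1; ring
            _ ≤ 2 ^ r := Real.rpow_le_rpow (Real.exp_pos _).le this hr0.le
        have h4 : (4 : ℝ) ^ r = 2 ^ r * 2 ^ r := by
          rw [← Real.mul_rpow (by norm_num) (by norm_num)]; norm_num
        rw [h4]; nlinarith [Real.exp_pos (r / 2)]

/-- Lower Gaussian moments: `𝔼|s|^r ≥ (√r/27)^r`. -/
lemma gauss_mom_lower {r : ℝ} (hr : 1 ≤ r) :
    ENNReal.ofReal ((√r / 27) ^ r) ≤ ∫⁻ s, ENNReal.ofReal (|s| ^ r) ∂gaussianReal 0 1 := by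
  have hr0 : 0 < r := by linarith
  have hs : 1 ≤ √r := Real.one_le_sqrt.2 hr
  rw [gaussianReal_of_var_ne_zero _ one_ne_zero,
    lintegral_withDensity_eq_lintegral_mul _ (measurable_gaussianPDF _ _) (by fun_prop)]
  calc ENNReal.ofReal ((√r / 27) ^ r)
      = ∫⁻ s in Set.Icc (√r) (√r + 1), ENNReal.ofReal ((√r / 27) ^ r) := by simp
    _ ≤ ∫⁻ s in Set.Icc (√r) (√r + 1), (gaussianPDF 0 1 * fun s => ENNReal.ofReal (|s| ^ r)) s := by
        refine setLIntegral_mono' measurableSet_Icc fun s hs' => ?_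
        simp only [Pi.mul_apply, gaussianPDF, gaussianPDFReal]
        rw [← ENNReal.ofReal_mul (by positivity)]
        apply ENNReal.ofReal_le_ofReal
        have h1 : √r ^ r ≤ |s| ^ r :=
          Real.rpow_le_rpow (by positivity) (hs'.1.trans (le_abs_self s)) hr0.le
        have h2 : (1 / 3 : ℝ) ≤ (√(2 * Real.pi * ((1 : NNReal) : ℝ)))⁻¹ := by
          rw [one_div]
          apply inv_anti₀ (by positivity)
          rw [Real.sqrt_le_left (by norm_num)]
          have := Real.pi_lt_d2; norm_num; linarith
        have h3 : (1 / 9 : ℝ) ^ r ≤ Real.exp (-(s - 0) ^ 2 / (2 * ((1 : NNReal) : ℝ))) := by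
          have e9 : (1 / 9 : ℝ) ≤ Real.exp (-2) := by
            rw [Real.exp_neg, one_div]
            apply inv_anti₀ (Real.exp_pos _)
            have h := Real.exp_one_lt_d9
            have e : Real.exp 1 ^ 2 = Real.exp 2 := by rw [← Real.exp_nat_mul]; norm_num
            nlinarith [Real.exp_pos 1]
          calc (1 / 9 : ℝ) ^ r ≤ Real.exp (-2) ^ r := Real.rpow_le_rpow (by norm_num) e9 hr0.le
            _ = Real.exp (-2 * r) := by rw [← Real.exp_mul]
            _ ≤ _ := by
              apply Real.exp_le_exp.2
              have : s ^ 2 ≤ 4 * r := by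
                have := hs'.2
                have h0 := hs'.1
                have h4 : s ≤ 2 * √r := by linarith
                have := Real.sq_sqrt hr0.le
                nlinarith
              simp; linarith
        have h5 : (1 / 3 : ℝ) ^ r ≤ 1 / 3 := by
          simpa using Real.rpow_le_rpow_of_exponent_ge (by norm_num : (0 : ℝ) < 1 / 3) (by norm_num) hr
        calc (√r / 27) ^ r = (1 / 3) ^ r * (1 / 9) ^ r * √r ^ r := by
              rw [← Real.mul_rpow (by norm_num) (by norm_num), ← Real.mul_rpow (by norm_num) (by positivity)]
              congr 1; ring
          _ ≤ _ := by
              gcongr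
              exact h5.trans h2
    _ ≤ _ := setLIntegral_le_lintegral _ _

lemma lintegral_prod_gam {ι : Type*} [Fintype ι] (f : ι → ℝ → ℝ≥0∞) (hf : ∀ i, Measurable (f i)) :
    ∫⁻ w, ∏ i, f i (w i) ∂gam ι = ∏ i, ∫⁻ s, f i s ∂gaussianReal 0 1 := by
  have hI := iIndepFun_pi (μ := fun _ : ι => gaussianReal 0 1) (X := f) fun i => (hf i).aemeasurable
  have := lintegral_prod_eq_prod_lintegral_of_indepFun Finset.univ
    (fun i (w : ι → ℝ) => f i (w i)) hI (fun i => (hf i).comp (measurable_pi_apply i))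
  unfold gam _root_.stdGaussian
  rw [this]
  refine Finset.prod_congr rfl fun i _ => ?_
  exact (measurePreserving_eval (fun _ : ι => gaussianReal 0 1) i).lintegral_comp (hf i)

lemma gaussianReal_shift (x : ℝ) : gaussianReal x 1
    = (gaussianReal 0 1).withDensity (fun s => ENNReal.ofReal (Real.exp (x * s + -(x ^ 2 / 2)))) := by
  rw [gaussianReal_of_var_ne_zero _ one_ne_zero, gaussianReal_of_var_ne_zero _ one_ne_zero,
    ← withDensity_mul _ (measurable_gaussianPDF _ _) (by fun_prop)]
  congr 1; ext s
  simp only [Pi.mul_apply, gaussianPDF, gaussianPDFReal]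
  rw [← ENNReal.ofReal_mul (by positivity), mul_assoc (√ _)⁻¹, ← Real.exp_add]
  congr 3
  simp; ring

/-- Cameron–Martin. -/
lemma gam_shift {ι : Type*} [Fintype ι] (x : ι → ℝ) :
    (gam ι).map (fun w i => x i + w i)
      = (gam ι).withDensity (fun w => ∏ i, ENNReal.ofReal (Real.exp (x i * w i + -(x i ^ 2 / 2)))) := by
  have h1 : (gam ι).map (fun w i => x i + w i) = Measure.pi (fun i => gaussianReal (x i) 1) := by
    unfold gam _root_.stdGaussian
    rw [Measure.pi_map_pi (f := fun i s => x i + s) (fun i => by fun_prop)]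
    congr 1; ext i : 1
    rw [gaussianReal_map_const_add]; simp
  rw [h1]
  symm
  refine (Measure.pi_eq fun s hs => ?_).symm
  rw [withDensity_apply _ (MeasurableSet.univ_pi hs), ← lintegral_indicator (MeasurableSet.univ_pi hs)]
  have : ∀ w : ι → ℝ, (Set.univ.pi s).indicator
      (fun w => ∏ i, ENNReal.ofReal (Real.exp (x i * w i + -(x i ^ 2 / 2)))) w
      = ∏ i, (s i).indicator (fun t => ENNReal.ofReal (Real.exp (x i * t + -(x i ^ 2 / 2)))) (w i) := by
    intro w
    by_cases hw : w ∈ Set.univ.pi s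
    · rw [Set.indicator_of_mem hw]
      refine Finset.prod_congr rfl fun i _ => ?_
      rw [Set.indicator_of_mem (hw i (Set.mem_univ i))]
    · rw [Set.indicator_of_notMem hw]
      simp only [Set.mem_pi, Set.mem_univ, true_imp_iff, not_forall] at hw
      obtain ⟨i, hi⟩ := hw
      rw [Finset.prod_eq_zero (Finset.mem_univ i)]
      rw [Set.indicator_of_notMem hi]
  simp_rw [this]
  rw [lintegral_prod_gam _ (fun i => Measurable.indicator (by fun_prop) (hs i))]
  refine Finset.prod_congr rfl fun i _ => ?_
  rw [gaussianReal_shift (x i), withDensity_apply _ (hs i), lintegral_indicator (hs i)]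

/-- Shifting a standard Gaussian vector costs at most `exp (|x|²/2)` after doubling the moment. -/
lemma lintegral_shift_le {ι : Type*} [Fintype ι] (x : ι → ℝ) (f : (ι → ℝ) → ℝ≥0∞)
    (hf : Measurable f) :
    ∫⁻ w, f (fun i => x i + w i) ∂gam ι
      ≤ ENNReal.ofReal (Real.exp ((∑ i, x i ^ 2) / 2)) * (∫⁻ w, f w ^ (2 : ℝ) ∂gam ι) ^ (1 / 2 : ℝ) := by
  set D : (ι → ℝ) → ℝ≥0∞ :=
    fun w => ∏ i, ENNReal.ofReal (Real.exp (x i * w i + -(x i ^ 2 / 2))) with hD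
  have hDm : Measurable D := by
    refine Finset.measurable_prod _ fun i _ => ?_
    fun_prop
  have h1 : ∫⁻ w, f (fun i => x i + w i) ∂gam ι = ∫⁻ w, (D * f) w ∂gam ι := by
    rw [← lintegral_withDensity_eq_lintegral_mul _ hDm hf, hD, ← gam_shift, lintegral_map hf (by fun_prop)]
  have h2 : ∫⁻ w, D w ^ (2 : ℝ) ∂gam ι = ENNReal.ofReal (Real.exp (∑ i, x i ^ 2)) := by
    have : ∀ w, D w ^ (2 : ℝ)
        = ∏ i, ENNReal.ofReal (Real.exp (2 * x i * w i + -(x i ^ 2))) := by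
      intro w
      simp only [hD]
      rw [← ENNReal.prod_rpow_of_nonneg (by norm_num)]
      refine Finset.prod_congr rfl fun i _ => ?_
      rw [ENNReal.ofReal_rpow_of_pos (Real.exp_pos _), ← Real.exp_mul]
      congr 2; ring
    simp_rw [this]
    rw [lintegral_prod_gam (fun i s => ENNReal.ofReal (Real.exp (2 * x i * s + -(x i ^ 2))))
      (fun i => by fun_prop)]
    simp_rw [lintegral_exp_gauss]
    rw [← ENNReal.ofReal_prod_of_nonneg (fun i _ => (Real.exp_pos _).le), ← Real.exp_sum]
    congr 2
    refine Finset.sum_congr rfl fun i _ => by ring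
  rw [h1]
  refine (ENNReal.lintegral_mul_le_Lp_mul_Lq (gam ι) Real.HolderConjugate.two_two
    hDm.aemeasurable hf.aemeasurable).trans_eq ?_
  rw [h2, ENNReal.ofReal_rpow_of_pos (Real.exp_pos _), ← Real.exp_mul]
  congr 3; ring

end
end LqChaos

/-! ### `L_r` norms and moments of Gaussian suprema -/

namespace LqChaos
noncomputable section

/-- The `L_r` norm of a function with values in `[0,∞]`. -/
def lp {W : Type*} [MeasurableSpace W] (r : ℝ) (μ : Measure W) (f : W → ℝ≥0∞) : ℝ≥0∞ :=
  (∫⁻ w, f w ^ r ∂μ) ^ (1 / r)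

section lp
variable {W W' : Type*} [MeasurableSpace W] [MeasurableSpace W'] {r : ℝ} {μ : Measure W}
  {μ' : Measure W'}

lemma lp_mono (hr : 0 < r) {f g : W → ℝ≥0∞} (h : ∀ w, f w ≤ g w) : lp r μ f ≤ lp r μ g := by
  unfold lp
  gcongr with w
  exact h w

lemma lp_rpow (hr : 0 < r) (f : W → ℝ≥0∞) : lp r μ f ^ r = ∫⁻ w, f w ^ r ∂μ := by
  unfold lp
  rw [← ENNReal.rpow_mul, one_div_mul_cancel hr.ne', ENNReal.rpow_one]

lemma lp_le_iff (hr : 0 < r) {f : W → ℝ≥0∞} {c : ℝ≥0∞} : lp r μ f ≤ c ↔ ∫⁻ w, f w ^ r ∂μ ≤ c ^ r := by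
  rw [← lp_rpow hr, ENNReal.rpow_le_rpow_iff hr]

lemma lp_add_le (hr : 1 ≤ r) {f g : W → ℝ≥0∞} (hf : Measurable f) (hg : Measurable g) :
    lp r μ (fun w => f w + g w) ≤ lp r μ f + lp r μ g :=
  ENNReal.lintegral_Lp_add_le hf.aemeasurable hg.aemeasurable hr

lemma lp_sum_le (hr : 1 ≤ r) {α : Type*} (s : Finset α) (f : α → W → ℝ≥0∞)
    (hf : ∀ a, Measurable (f a)) :
    lp r μ (fun w => ∑ a ∈ s, f a w) ≤ ∑ a ∈ s, lp r μ (f a) := by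
  induction s using Finset.induction_on with
  | empty =>
    have : 0 < r := by linarith
    simp [lp, this]
  | insert a s ha ih =>
    simp only [Finset.sum_insert ha]
    refine (lp_add_le hr (hf a) (Finset.measurable_sum _ fun a _ => hf a)).trans ?_
    gcongr

lemma lp_const_mul (hr : 0 < r) (c : ℝ≥0∞) {f : W → ℝ≥0∞} (hf : Measurable f) :
    lp r μ (fun w => c * f w) = c * lp r μ f := by
  unfold lp
  simp_rw [ENNReal.mul_rpow_of_nonneg _ _ hr.le]
  rw [lintegral_const_mul _ (by fun_prop), ENNReal.mul_rpow_of_nonneg _ _ (by positivity),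
    ← ENNReal.rpow_mul, mul_one_div_cancel hr.ne', ENNReal.rpow_one]

lemma lp_const [IsProbabilityMeasure μ] (hr : 0 < r) (c : ℝ≥0∞) : lp r μ (fun _ => c) = c := by
  unfold lp
  rw [lintegral_const, measure_univ, mul_one, ← ENNReal.rpow_mul, mul_one_div_cancel hr.ne',
    ENNReal.rpow_one]

lemma lp_one (f : W → ℝ≥0∞) : lp 1 μ f = ∫⁻ w, f w ∂μ := by simp [lp]

lemma lintegral_le_lp [IsProbabilityMeasure μ] (hr : 1 ≤ r) {f : W → ℝ≥0∞} (hf : Measurable f) :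
    ∫⁻ w, f w ∂μ ≤ lp r μ f := by
  have hr0 : 0 < r := by linarith
  rcases hr.eq_or_lt with rfl | h1
  · rw [lp_one]
  · have hc : r.HolderConjugate (r / (r - 1)) := by
      rw [← Real.conjExponent]; exact Real.HolderConjugate.conjExponent h1
    have := ENNReal.lintegral_mul_le_Lp_mul_Lq μ hc hf.aemeasurable
      (g := fun _ => 1) aemeasurable_const
    simpa [lp] using this

lemma lp_mono_exp [IsProbabilityMeasure μ] {r' : ℝ} (hr : 0 < r) (h : r ≤ r') {f : W → ℝ≥0∞}
    (hf : Measurable f) : lp r μ f ≤ lp r' μ f := by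
  have hr' : 0 < r' := by linarith
  rw [lp_le_iff hr]
  refine (lintegral_le_lp (r := r' / r) (by rwa [le_div_iff₀ hr, one_mul]) (by fun_prop)).trans_eq ?_
  unfold lp
  simp_rw [← ENNReal.rpow_mul]
  congr 2
  · ext; congr 2; field_simp
  · field_simp

lemma lintegral_rpow_le [IsProbabilityMeasure μ] (hr : 1 ≤ r) {f : W → ℝ≥0∞} (hf : Measurable f) :
    (∫⁻ w, f w ∂μ) ^ r ≤ ∫⁻ w, f w ^ r ∂μ := by
  rw [← lp_rpow (by linarith)]
  exact ENNReal.rpow_le_rpow (lintegral_le_lp hr hf) (by linarith)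

/-- Jensen for a partial integral. -/
lemma lp_lintegral_le [IsProbabilityMeasure μ'] (hr : 1 ≤ r) {f : W → W' → ℝ≥0∞}
    (hf : ∀ w, Measurable (f w)) :
    lp r μ (fun w => ∫⁻ w', f w w' ∂μ') ≤ (∫⁻ w, ∫⁻ w', f w w' ^ r ∂μ' ∂μ) ^ (1 / r) := by
  have hr0 : 0 < r := by linarith
  unfold lp
  gcongr with w
  exact lintegral_rpow_le hr (hf w)

end lp

/-- The `L_r` norm of a linear form in Gaussian variables. -/
lemma lp_linear_le {κ : Type*} [Fintype κ] {r : ℝ} (hr : 1 ≤ r) (v : κ → ℝ) {τ : ℝ} (hτ : 0 ≤ τ)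
    (hv : ∑ j, v j ^ 2 ≤ τ ^ 2) :
    lp r (gam κ) (fun g => ENNReal.ofReal |∑ j, v j * g j|) ≤ ENNReal.ofReal (4 * √r * τ) := by
  have hr0 : 0 < r := by linarith
  rw [lp_le_iff hr0]
  have h1 := lintegral_linear v (fun s => ENNReal.ofReal |s| ^ r) (by fun_prop)
  rw [h1]
  have h2 : √(∑ j, v j ^ 2) ≤ τ := Real.sqrt_le_iff.2 ⟨hτ, hv⟩
  calc ∫⁻ s, ENNReal.ofReal |√(∑ j, v j ^ 2) * s| ^ r ∂gaussianReal 0 1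
      ≤ ∫⁻ s, ENNReal.ofReal (τ ^ r) * ENNReal.ofReal (|s| ^ r) ∂gaussianReal 0 1 := by
        refine lintegral_mono fun s => ?_
        rw [ENNReal.ofReal_rpow_of_nonneg (abs_nonneg _) hr0.le, ← ENNReal.ofReal_mul (by positivity)]
        apply ENNReal.ofReal_le_ofReal
        rw [← Real.mul_rpow hτ (abs_nonneg _), abs_mul, abs_of_nonneg (Real.sqrt_nonneg _)]
        gcongr
    _ ≤ ENNReal.ofReal (τ ^ r) * ENNReal.ofReal ((4 * √r) ^ r) := by
        rw [lintegral_const_mul _ (by fun_prop)]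
        gcongr
        exact gauss_mom_upper hr
    _ = _ := by
        rw [← ENNReal.ofReal_mul (by positivity), ← Real.mul_rpow hτ (by positivity),
          ENNReal.ofReal_rpow_of_nonneg (by positivity) hr0.le, mul_comm τ]

/-- Gaussian supremum of a family of linear forms. -/
def gsup {κ Λ : Type*} [Fintype κ] (v : Λ → κ → ℝ) (g : κ → ℝ) : ℝ≥0∞ :=
  ⨆ l, ENNReal.ofReal (∑ j, v l j * g j)

lemma measurable_gsup {κ Λ : Type*} [Fintype κ] (v : Λ → κ → ℝ) : Measurable (gsup v) := by
  refine LowerSemicontinuous.measurable (lowerSemicontinuous_iSup fun l => ?_)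
  exact Continuous.lowerSemicontinuous (ENNReal.continuous_ofReal.comp (by fun_prop))

/-- Adding an independent Gaussian vector to `u` and scaling by `c` lowers the supremum below `c` times
its value at `u` by no more than `τ` plus one Gaussian variable of standard deviation at most `τ`: a
form that nearly attains the supremum at `u` is still a competitor at the new point. -/
lemma gsup_defect {κ Λ : Type*} [Fintype κ] (v : Λ → κ → ℝ) {τ : ℝ} (hτ : 0 < τ)
    (hv : ∀ l, ∑ j, v l j ^ 2 ≤ τ ^ 2) {c : ℝ} (hc : 0 < c) (hc1 : c ≤ 1) {r : ℝ} (hr : 1 ≤ r)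
    (u : κ → ℝ) :
    lp r (gam κ) (fun u' => ENNReal.ofReal c * gsup v u - gsup v (fun j => c * u j + c * u' j))
      ≤ ENNReal.ofReal (5 * √r * τ) := by
  have hr0 : 0 < r := by linarith
  have hs : 1 ≤ √r := Real.one_le_sqrt.2 hr
  have hc' : ENNReal.ofReal c ≤ 1 := by simpa using hc1
  by_cases hu : gsup v u ≤ ENNReal.ofReal τ
  · calc _ ≤ lp r (gam κ) (fun _ => ENNReal.ofReal τ) := by
          refine lp_mono hr0 fun w => tsub_le_self.trans ?_
          calc _ ≤ 1 * gsup v u := by gcongr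
            _ ≤ _ := by rwa [one_mul]
      _ = ENNReal.ofReal τ := lp_const hr0 _
      _ ≤ _ := ENNReal.ofReal_le_ofReal (by nlinarith)
  · push Not at hu
    have hfin : gsup v u ≠ ⊤ := by
      refine ne_top_of_le_ne_top (b := ENNReal.ofReal (τ * √(∑ j, u j ^ 2))) (by simp) ?_
      refine iSup_le fun l => ENNReal.ofReal_le_ofReal ?_
      refine (Real.sum_mul_le_sqrt_mul_sqrt _ _ _).trans ?_
      gcongr
      exact Real.sqrt_le_iff.2 ⟨hτ.le, hv l⟩
    have hlt : gsup v u - ENNReal.ofReal τ < gsup v u :=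
      ENNReal.sub_lt_self hfin (by intro h; rw [h] at hu; simp at hu) (by simpa using hτ)
    obtain ⟨l, hl⟩ := lt_iSup_iff.1 hlt
    have h1 : gsup v u ≤ ENNReal.ofReal (∑ j, v l j * u j) + ENNReal.ofReal τ :=
      tsub_le_iff_right.1 hl.le
    have hpt : ∀ u' : κ → ℝ, ENNReal.ofReal c * gsup v u - gsup v (fun j => c * u j + c * u' j)
        ≤ ENNReal.ofReal τ + ENNReal.ofReal |∑ j, v l j * u' j| := by
      intro u'
      rw [tsub_le_iff_right]
      have h2 : ENNReal.ofReal (c * (∑ j, v l j * u j) + c * (∑ j, v l j * u' j))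
          ≤ gsup v (fun j => c * u j + c * u' j) := by
        refine le_trans (le_of_eq ?_) (le_iSup _ l)
        congr 1
        simp only [Finset.mul_sum, mul_add, Finset.sum_add_distrib]
        congr 1 <;> exact Finset.sum_congr rfl fun _ _ => by ring
      calc ENNReal.ofReal c * gsup v u
          ≤ ENNReal.ofReal c * (ENNReal.ofReal (∑ j, v l j * u j) + ENNReal.ofReal τ) := by gcongr
        _ = ENNReal.ofReal (c * ∑ j, v l j * u j) + ENNReal.ofReal c * ENNReal.ofReal τ := by
            rw [mul_add, ENNReal.ofReal_mul hc.le]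
        _ ≤ (ENNReal.ofReal (c * (∑ j, v l j * u j) + c * (∑ j, v l j * u' j))
              + ENNReal.ofReal |∑ j, v l j * u' j|) + 1 * ENNReal.ofReal τ := by
            gcongr
            refine le_trans (ENNReal.ofReal_le_ofReal ?_) ENNReal.ofReal_add_le
            have := neg_abs_le (∑ j, v l j * u' j)
            have := abs_nonneg (∑ j, v l j * u' j)
            nlinarith
        _ ≤ _ := by
            rw [one_mul, add_assoc, add_comm, add_comm (ENNReal.ofReal |_|)]
            gcongr
    calc _ ≤ lp r (gam κ) (fun u' => ENNReal.ofReal τ + ENNReal.ofReal |∑ j, v l j * u' j|) :=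
          lp_mono hr0 hpt
      _ ≤ ENNReal.ofReal τ + ENNReal.ofReal (4 * √r * τ) := by
          refine (lp_add_le hr (by fun_prop) (by fun_prop)).trans ?_
          rw [lp_const hr0]
          gcongr
          exact lp_linear_le hr _ hτ.le (hv l)
      _ ≤ _ := by
          rw [← ENNReal.ofReal_add hτ.le (by positivity)]
          exact ENNReal.ofReal_le_ofReal (by nlinarith)

/-- Moments of a Gaussian supremum exceed twice its mean by at most a multiple of `√r` times the
largest standard deviation. -/
lemma gsup_moment {κ Λ : Type*} [Fintype κ] (v : Λ → κ → ℝ) {τ : ℝ} (hτ : 0 < τ)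
    (hv : ∀ l, ∑ j, v l j ^ 2 ≤ τ ^ 2) {r : ℝ} (hr : 1 ≤ r) :
    lp r (gam κ) (gsup v) ≤ 2 * ∫⁻ g, gsup v g ∂gam κ + ENNReal.ofReal (20 * √r * τ) := by
  have hr0 : 0 < r := by linarith
  set c : ℝ := √2⁻¹ with hc
  have hcc : c ^ 2 = 1 / 2 := by rw [hc, Real.sq_sqrt (by norm_num)]; norm_num
  have hcp : 0 < c := Real.sqrt_pos.2 (by norm_num)
  have hc1 : c ≤ 1 := by nlinarith
  have hgm := measurable_gsup v
  set D : (κ → ℝ) → (κ → ℝ) → ℝ≥0∞ := fun u u' =>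
    ENNReal.ofReal c * gsup v u - gsup v (fun j => c * u j + c * u' j) with hD
  have hDm : Measurable (fun w : (κ → ℝ) × (κ → ℝ) => D w.1 w.2) := by
    simp only [hD]
    refine Measurable.sub (by fun_prop) ?_
    exact hgm.comp (by fun_prop)
  have hDi : ∫⁻ u, ∫⁻ u', D u u' ^ r ∂gam κ ∂gam κ ≤ ENNReal.ofReal (5 * √r * τ) ^ r := by
    calc _ ≤ ∫⁻ u, ENNReal.ofReal (5 * √r * τ) ^ r ∂gam κ := by
          refine lintegral_mono fun u => ?_
          exact (lp_le_iff hr0).1 (gsup_defect v hτ hv hcp hc1 hr u)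
      _ = _ := by simp
  set E : (κ → ℝ) → (κ → ℝ) → ℝ≥0∞ := fun u u' =>
    D (fun i => c * u i + c * u' i) (fun i => c * u' i - c * u i) with hE
  have hEm : Measurable (fun w : (κ → ℝ) × (κ → ℝ) => E w.1 w.2) :=
    hDm.comp (f := fun w : (κ → ℝ) × (κ → ℝ) =>
        ((fun i => c * w.1 i + c * w.2 i), (fun i => c * w.2 i - c * w.1 i))) (by fun_prop)
  have hEi : ∫⁻ u, ∫⁻ u', E u u' ^ r ∂gam κ ∂gam κ ≤ ENNReal.ofReal (5 * √r * τ) ^ r := by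
    rw [lintegral_rot c c (by rw [hcc]; norm_num) (fun u u' => D u u' ^ r) (hDm.pow_const r)]
    exact hDi
  have hpt : ∀ u u' : κ → ℝ, gsup v u ≤ 2 * gsup v u' + (2 * E u u' + 2 * D u u') := by
    intro u u'
    have h1 : ENNReal.ofReal c * gsup v u ≤ D u u' + gsup v (fun j => c * u j + c * u' j) :=
      le_tsub_add
    have h2 : ENNReal.ofReal c * gsup v (fun j => c * u j + c * u' j) ≤ E u u' + gsup v u' := by
      have : (fun j => c * (c * u j + c * u' j) + c * (c * u' j - c * u j)) = u' := by
        ext j; linear_combination (2 * u' j) * hcc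
      have h3 : ENNReal.ofReal c * gsup v (fun j => c * u j + c * u' j) ≤ E u u'
        + gsup v (fun j => c * (c * u j + c * u' j) + c * (c * u' j - c * u j)) := le_tsub_add
      rwa [this] at h3
    have h4 : 2 * (ENNReal.ofReal c * ENNReal.ofReal c) = 1 := by
      rw [← ENNReal.ofReal_mul hcp.le, ← pow_two, hcc]
      rw [show (2 : ℝ≥0∞) = ENNReal.ofReal 2 by simp, ← ENNReal.ofReal_mul (by norm_num)]
      norm_num
    calc gsup v u = 2 * (ENNReal.ofReal c * (ENNReal.ofReal c * gsup v u)) := by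
          rw [← mul_assoc (ENNReal.ofReal c), ← mul_assoc, h4, one_mul]
      _ ≤ 2 * (ENNReal.ofReal c * (D u u' + gsup v (fun j => c * u j + c * u' j))) := by gcongr
      _ ≤ 2 * (1 * D u u' + (E u u' + gsup v u')) := by
          rw [mul_add (ENNReal.ofReal c)]
          gcongr
          simpa using hc1
      _ = _ := by ring
  clear_value E D
  calc lp r (gam κ) (gsup v)
      ≤ lp r (gam κ) (fun u => 2 * (∫⁻ g, gsup v g ∂gam κ)
          + (2 * (∫⁻ u', E u u' ∂gam κ) + 2 * ∫⁻ u', D u u' ∂gam κ)) := by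
        refine lp_mono hr0 fun u => ?_
        have hE1 : Measurable (E u) := hEm.comp measurable_prodMk_left
        have hD1 : Measurable (D u) := hDm.comp measurable_prodMk_left
        calc gsup v u = ∫⁻ u', gsup v u ∂gam κ := by simp
          _ ≤ ∫⁻ u', 2 * gsup v u' + (2 * E u u' + 2 * D u u') ∂gam κ :=
            lintegral_mono fun u' => hpt u u'
          _ = _ := by
            rw [lintegral_add_left (by fun_prop), lintegral_add_left (by fun_prop),
              lintegral_const_mul _ hgm, lintegral_const_mul _ hE1, lintegral_const_mul _ hD1]
    _ ≤ 2 * (∫⁻ g, gsup v g ∂gam κ) + (2 * ENNReal.ofReal (5 * √r * τ) + 2 * ENNReal.ofReal (5 * √r * τ)) := by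
        have hE2 : Measurable (fun u => ∫⁻ u', E u u' ∂gam κ) := hEm.lintegral_prod_right'
        have hD2 : Measurable (fun u => ∫⁻ u', D u u' ∂gam κ) := hDm.lintegral_prod_right'
        refine (lp_add_le hr (by fun_prop) (by fun_prop)).trans ?_
        rw [lp_const hr0]
        gcongr
        refine (lp_add_le hr (by fun_prop) (by fun_prop)).trans ?_
        rw [lp_const_mul hr0 _ hE2, lp_const_mul hr0 _ hD2]
        gcongr
        · refine (lp_lintegral_le hr fun u => hEm.comp measurable_prodMk_left).trans ?_
          rw [one_div, ENNReal.rpow_inv_le_iff hr0]; exact hEi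
        · refine (lp_lintegral_le hr fun u => hDm.comp measurable_prodMk_left).trans ?_
          rw [one_div, ENNReal.rpow_inv_le_iff hr0]; exact hDi
    _ = _ := by
        congr 1
        rw [← add_mul, show (2 + 2 : ℝ≥0∞) = ENNReal.ofReal 4 by norm_num,
          ← ENNReal.ofReal_mul (by norm_num)]
        congr 1; ring

end
end LqChaos

/-! ### Suprema of Gaussian processes with a multi-affine parameter -/

namespace LqChaos
noncomputable section

/-- The sign attached to a Boolean. -/
def sgn (b : Bool) : ℝ := if b then 1 else -1

lemma sgn_sq (b : Bool) : sgn b ^ 2 = 1 := by cases b <;> simp [sgn]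

/-- A function that is affine in each block of coordinates does not decrease under a suitable
choice of the signs of the increments of the blocks. -/
lemma exists_signs {B J : Type*} [Fintype B] (lab : J → B) (f : (J → ℝ) → ℝ)
    (hf : ∀ (β : B) (y z : J → ℝ), (∀ a, lab a ≠ β → z a = 0) →
      f (fun a => y a + z a) + f (fun a => y a - z a) = 2 * f y) (x G : J → ℝ) :
    ∃ ε : B → Bool, f x ≤ f (fun a => x a + sgn (ε (lab a)) * G a) := by
  suffices h : ∀ s : Finset B, ∃ ε : B → Bool,
      f x ≤ f (fun a => x a + if lab a ∈ s then sgn (ε (lab a)) * G a else 0) by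
    simpa using h Finset.univ
  intro s
  induction s using Finset.induction_on with
  | empty => exact ⟨fun _ => true, by simp⟩
  | insert β s hβ ih =>
    obtain ⟨ε, hε⟩ := ih
    set y : J → ℝ := fun a => x a + if lab a ∈ s then sgn (ε (lab a)) * G a else 0 with hy
    have h2 := hf β y (fun a => if lab a = β then G a else 0) (fun a ha => by simp [ha])
    have e1 : (fun a => y a + if lab a = β then G a else 0) = fun a => x a +
        if lab a ∈ insert β s then sgn (Function.update ε β true (lab a)) * G a else 0 := by
      ext a
      by_cases ha : lab a = β
      · simp [hy, ha, hβ, sgn]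
      · simp [hy, ha, Function.update_of_ne ha]
    have e2 : (fun a => y a - if lab a = β then G a else 0) = fun a => x a +
        if lab a ∈ insert β s then sgn (Function.update ε β false (lab a)) * G a else 0 := by
      ext a
      by_cases ha : lab a = β
      · simp [hy, ha, hβ, sgn]; ring
      · simp [hy, ha, Function.update_of_ne ha]
    rw [e1, e2] at h2
    by_contra! hcon
    have := hcon (Function.update ε β true)
    have := hcon (Function.update ε β false)
    linarith

/-- Hahn–Banach: every vector has a norming functional. -/
lemma exists_norming {V : Type*} [AddCommGroup V] [Module ℝ V] (ρ : Seminorm ℝ V) (c : V) :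
    ∃ l : V →ₗ[ℝ] ℝ, (∀ b, l b ≤ ρ b) ∧ l c = ρ c := by
  by_cases hc : c = 0
  · subst hc
    exact ⟨0, fun b => by simp, by simp⟩
  · let f : V →ₗ.[ℝ] ℝ := LinearPMap.mkSpanSingleton c (ρ c) hc
    obtain ⟨g, hg, hg2⟩ := exists_extension_of_le_sublinear f ρ
      (fun a ha x => by rw [map_smul_eq_mul, Real.norm_of_nonneg ha.le])
      (fun x y => map_add_le_add ρ x y) (by
        rintro ⟨x, hx⟩
        obtain ⟨a, rfl⟩ := Submodule.mem_span_singleton.1 hx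
        have : f ⟨a • c, hx⟩ = a • ρ c := LinearPMap.mkSpanSingleton'_apply _ _ _ _ _
        rw [this, map_smul_eq_mul, smul_eq_mul]
        exact mul_le_mul_of_nonneg_right (le_abs_self a) (apply_nonneg ρ c))
    refine ⟨g, hg2, ?_⟩
    have := hg ⟨c, Submodule.mem_span_singleton_self c⟩
    rw [this]
    exact LinearPMap.mkSpanSingleton_apply ℝ ℝ hc (ρ c)

lemma seminorm_continuous {ι : Type*} [Fintype ι] (ρ : Seminorm ℝ (ι → ℝ)) : Continuous ρ :=
  continuousOn_univ.1 (ConvexOn.continuousOn isOpen_univ ρ.convexOn)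

section key
variable {B J κ ι : Type*} [Fintype B] [Fintype J] [Fintype κ] [Fintype ι]

/-- Linear functionals dominated by `ρ`. -/
abbrev Dom (ρ : Seminorm ℝ (ι → ℝ)) := {l : (ι → ℝ) →ₗ[ℝ] ℝ // ∀ c, l c ≤ ρ c}

/-- The coefficients of the form `g ↦ l (∑ g_j m_j(y))`, rescaled to have length at most `τ`. -/
def trunc (ρ : Seminorm ℝ (ι → ℝ)) (m : κ → (J → ℝ) → (ι → ℝ)) (τ : ℝ) (y : J → ℝ)
    (l : Dom ρ) (j : κ) : ℝ :=
  τ / max τ (√(∑ j, l.1 (m j y) ^ 2)) * l.1 (m j y)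

variable (ρ : Seminorm ℝ (ι → ℝ)) (m : κ → (J → ℝ) → (ι → ℝ)) {τ : ℝ}

lemma trunc_sq (hτ : 0 < τ) (y : J → ℝ) (l : Dom ρ) : ∑ j, trunc ρ m τ y l j ^ 2 ≤ τ ^ 2 := by
  simp only [trunc, mul_pow, ← Finset.mul_sum, div_pow]
  have h0 : 0 < max τ (√(∑ j, l.1 (m j y) ^ 2)) := lt_max_of_lt_left hτ
  rw [div_mul_eq_mul_div, div_le_iff₀ (by positivity)]
  gcongr
  have hS : 0 ≤ ∑ j, l.1 (m j y) ^ 2 := Finset.sum_nonneg fun _ _ => sq_nonneg _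
  calc _ = √(∑ j, l.1 (m j y) ^ 2) ^ 2 := (Real.sq_sqrt hS).symm
    _ ≤ _ := by gcongr; exact le_max_right _ _

lemma trunc_le (hτ : 0 < τ) (y : J → ℝ) (l : Dom ρ) (g : κ → ℝ) :
    ∑ j, trunc ρ m τ y l j * g j ≤ ρ (∑ j, g j • m j y) := by
  have h0 : 0 < max τ (√(∑ j, l.1 (m j y) ^ 2)) := lt_max_of_lt_left hτ
  have e : ∑ j, trunc ρ m τ y l j * g j
      = τ / max τ (√(∑ j, l.1 (m j y) ^ 2)) * l.1 (∑ j, g j • m j y) := by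
    simp only [trunc, map_sum, map_smul, smul_eq_mul, Finset.mul_sum]
    exact Finset.sum_congr rfl fun _ _ => by ring
  rw [e]
  calc _ ≤ τ / max τ (√(∑ j, l.1 (m j y) ^ 2)) * ρ (∑ j, g j • m j y) := by
        gcongr; exact l.2 _
    _ ≤ 1 * ρ (∑ j, g j • m j y) := by
        gcongr
        exact div_le_one_of_le₀ (le_max_left _ _) h0.le
    _ = _ := one_mul _

lemma trunc_eq (hτ : 0 < τ) (y : J → ℝ) (l : Dom ρ) (h : ∑ j, l.1 (m j y) ^ 2 ≤ τ ^ 2)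
    (g : κ → ℝ) : ∑ j, trunc ρ m τ y l j * g j = l.1 (∑ j, g j • m j y) := by
  have : √(∑ j, l.1 (m j y) ^ 2) ≤ τ := Real.sqrt_le_iff.2 ⟨hτ.le, h⟩
  simp only [trunc, max_eq_left this, div_self hτ.ne', one_mul, map_sum, map_smul, smul_eq_mul]
  exact Finset.sum_congr rfl fun _ _ => by ring

lemma measurable_trunc (hm : ∀ j, Continuous (m j)) (hτ : 0 < τ) :
    Measurable (fun w : (κ → ℝ) × (J → ℝ) => gsup (trunc ρ m τ w.2) w.1) := by
  refine LowerSemicontinuous.measurable (lowerSemicontinuous_iSup fun l => ?_)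
  refine Continuous.lowerSemicontinuous (ENNReal.continuous_ofReal.comp ?_)
  have hl : Continuous l.1 := l.1.continuous_of_finiteDimensional
  have h1 : ∀ j, Continuous (fun w : (κ → ℝ) × (J → ℝ) => l.1 (m j w.2)) := fun j =>
    hl.comp ((hm j).comp continuous_snd)
  simp only [trunc]
  refine continuous_finset_sum _ fun j _ => ?_
  refine Continuous.mul (Continuous.mul (Continuous.div continuous_const ?_ ?_) (h1 j)) (by fun_prop)
  · exact continuous_const.max (continuous_finset_sum _ fun j _ => (h1 j).pow 2).sqrt
  · intro w; exact (lt_max_of_lt_left hτ).ne'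

/-- The mean of the Gaussian process at the parameter `y`. -/
def meanN (y : J → ℝ) : ℝ≥0∞ := ∫⁻ g, ENNReal.ofReal (ρ (∑ j, g j • m j y)) ∂gam κ

lemma measurable_rho (hm : ∀ j, Continuous (m j)) :
    Measurable (fun w : (κ → ℝ) × (J → ℝ) => ENNReal.ofReal (ρ (∑ j, w.1 j • m j w.2))) := by
  refine (ENNReal.continuous_ofReal.comp ((seminorm_continuous ρ).comp ?_)).measurable
  refine continuous_finset_sum _ fun j _ => Continuous.smul
    ((continuous_apply j).comp continuous_fst) ((hm j).comp continuous_snd)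

lemma measurable_meanN (hm : ∀ j, Continuous (m j)) : Measurable (meanN ρ m) :=
  (measurable_rho ρ m hm).lintegral_prod_left'

/-- The truncated process. -/
def Phi (τ : ℝ) (M : ℝ≥0∞) (g : κ → ℝ) (y : J → ℝ) : ℝ≥0∞ :=
  if meanN ρ m y ≤ M then gsup (trunc ρ m τ y) g else 0

lemma measurable_Phi (hm : ∀ j, Continuous (m j)) (hτ : 0 < τ) (M : ℝ≥0∞) :
    Measurable (fun w : (κ → ℝ) × (J → ℝ) => Phi ρ m τ M w.1 w.2) := by
  refine Measurable.ite ?_ (measurable_trunc ρ m hm hτ) measurable_const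
  exact measurableSet_le ((measurable_meanN ρ m hm).comp measurable_snd) measurable_const

lemma Phi_moment (hτ : 0 < τ) (M : ℝ≥0∞) {r : ℝ} (hr : 1 ≤ r) (y : J → ℝ) :
    lp r (gam κ) (fun g => Phi ρ m τ M g y) ≤ 2 * M + ENNReal.ofReal (20 * √r * τ) := by
  have hr0 : 0 < r := by linarith
  by_cases h : meanN ρ m y ≤ M
  · simp only [Phi, h, if_true]
    refine (gsup_moment _ hτ (trunc_sq ρ m hτ y) hr).trans ?_
    gcongr
    refine le_trans (lintegral_mono fun g => ?_) h
    exact iSup_le fun l => ENNReal.ofReal_le_ofReal (trunc_le ρ m hτ y l g)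
  · simp only [Phi, h, if_false]
    rw [lp_const hr0]; exact zero_le

/-- For each point of the index set, the process is controlled on average by the truncated process
at a randomly perturbed point: with probability at least `1/2` the truncation is inactive for all
choices of signs of the perturbation, and by `exists_signs` some choice does not decrease the value of
the norming functional. -/
lemma rho_le_avg (lab : J → B) (hm : ∀ j, Continuous (m j))
    (haff : ∀ (j : κ) (β : B) (y z : J → ℝ), (∀ a, lab a ≠ β → z a = 0) →
      m j (fun a => y a + z a) + m j (fun a => y a - z a) = (2 : ℝ) • m j y)
    {p t mm σ K : ℝ} (hp : 1 ≤ p) (hmm : 0 < mm) (hσ : 0 < σ)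
    (hK : K = 2 ^ (Fintype.card B + 2)) (x : J → ℝ)
    (h1 : ∫⁻ G, meanN ρ m (fun a => x a + t * G a) ∂gam J ≤ ENNReal.ofReal mm)
    (h2 : ∀ l : Dom ρ, ∫⁻ G, ENNReal.ofReal (∑ j, l.1 (m j (fun a => x a + t * G a)) ^ 2) ∂gam J
      ≤ ENNReal.ofReal (σ ^ 2)) (g : κ → ℝ) :
    ENNReal.ofReal (ρ (∑ j, g j • m j x)) ^ p ≤ 2 * (2 ^ Fintype.card B *
      ∫⁻ G, Phi ρ m (K * σ) (ENNReal.ofReal (K * mm)) g (fun a => x a + t * G a) ^ p ∂gam J) := by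
  have hp0 : 0 < p := by linarith
  have hK1 : 1 ≤ K := by rw [hK]; exact one_le_pow₀ (by norm_num)
  have hK0 : 0 < K := by linarith
  have hτ : 0 < K * σ := by positivity
  obtain ⟨l0, hl0, hl1⟩ := exists_norming ρ (∑ j, g j • m j x)
  set l : Dom ρ := ⟨l0, hl0⟩ with hl
  set M := ENNReal.ofReal (K * mm)
  let S : (J → ℝ) → ℝ≥0∞ := fun y => ENNReal.ofReal (∑ j, l.1 (m j y) ^ 2)
  have hlc : Continuous l.1 := l.1.continuous_of_finiteDimensional
  have hSm : Measurable S := by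
    refine ENNReal.measurable_ofReal.comp (Continuous.measurable ?_)
    exact continuous_finset_sum _ fun j _ => (hlc.comp (hm j)).pow 2
  have hNm := measurable_meanN ρ m hm
  have hPm := measurable_Phi ρ m hm hτ M
  let pt : (B → Bool) → (J → ℝ) → (J → ℝ) := fun ε G a => x a + t * (sgn (ε (lab a)) * G a)
  have hpt : ∀ ε, Measurable (pt ε) := fun ε => by
    refine measurable_pi_lambda _ fun a => ?_
    exact measurable_const.add (measurable_const.mul (measurable_const.mul (measurable_pi_apply a)))
  have hsign : ∀ (ε : B → Bool) (f : (J → ℝ) → ℝ≥0∞), Measurable f →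
      ∫⁻ G, f (pt ε G) ∂gam J = ∫⁻ G, f (fun a => x a + t * G a) ∂gam J := by
    intro ε f hf
    exact lintegral_sign (fun a => sgn (ε (lab a))) (fun a => sgn_sq _)
      (fun G => f (fun a => x a + t * G a)) (hf.comp (by fun_prop))
  let bad1 : (B → Bool) → Set (J → ℝ) := fun ε => {G | M ≤ meanN ρ m (pt ε G)}
  let bad2 : (B → Bool) → Set (J → ℝ) := fun ε => {G | ENNReal.ofReal ((K * σ) ^ 2) ≤ S (pt ε G)}
  have hb1 : ∀ ε, gam J (bad1 ε) ≤ ENNReal.ofReal (1 / K) := by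
    intro ε
    refine (meas_ge_le_lintegral_div (hNm.comp (hpt ε)).aemeasurable
      (by simp only [M, ne_eq, ENNReal.ofReal_eq_zero, not_le]; positivity) (by simp [M])).trans ?_
    have := hsign ε _ hNm
    simp only [Function.comp_def]
    rw [this]
    refine (ENNReal.div_le_div_right h1 _).trans_eq ?_
    rw [← ENNReal.ofReal_div_of_pos (by positivity)]
    congr 1; field_simp
  have hb2 : ∀ ε, gam J (bad2 ε) ≤ ENNReal.ofReal (1 / K) := by
    intro ε
    refine (meas_ge_le_lintegral_div (hSm.comp (hpt ε)).aemeasurable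
      (by simp only [ne_eq, ENNReal.ofReal_eq_zero, not_le]; positivity) (by simp)).trans ?_
    have := hsign ε _ hSm
    simp only [Function.comp_def]
    rw [this]
    refine (ENNReal.div_le_div_right (h2 l) _).trans ?_
    rw [← ENNReal.ofReal_div_of_pos (by positivity)]
    apply ENNReal.ofReal_le_ofReal
    rw [div_le_div_iff₀ (by positivity) hK0]
    nlinarith [sq_nonneg σ, mul_nonneg (sq_nonneg σ) hK0.le, mul_nonneg (mul_nonneg (sq_nonneg σ) hK0.le) (sub_nonneg.2 hK1)]
  set W : Set (J → ℝ) := (⋃ ε, (bad1 ε ∪ bad2 ε))ᶜ with hW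
  have hWm : MeasurableSet W := by
    refine (MeasurableSet.iUnion fun ε => MeasurableSet.union ?_ ?_).compl
    · exact measurableSet_le measurable_const (hNm.comp (hpt ε))
    · exact measurableSet_le measurable_const (hSm.comp (hpt ε))
  have hWc : gam J Wᶜ ≤ 2⁻¹ := by
    rw [hW, compl_compl]
    calc _ ≤ ∑ ε, gam J (bad1 ε ∪ bad2 ε) := measure_iUnion_fintype_le _ _
      _ ≤ ∑ ε : B → Bool, (ENNReal.ofReal (1 / K) + ENNReal.ofReal (1 / K)) := by
          gcongr with ε
          exact (measure_union_le _ _).trans (add_le_add (hb1 ε) (hb2 ε))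
      _ = ENNReal.ofReal (2 ^ Fintype.card B * (2 / K)) := by
          rw [Finset.sum_const, Finset.card_univ, Fintype.card_fun, Fintype.card_bool, nsmul_eq_mul,
            ← ENNReal.ofReal_add (by positivity) (by positivity), ENNReal.ofReal_mul (by positivity)]
          congr 1
          · rw [ENNReal.ofReal_pow (by norm_num)]; simp
          · congr 1; ring
      _ ≤ 2⁻¹ := by
          rw [show (2⁻¹ : ℝ≥0∞) = ENNReal.ofReal (2⁻¹) by
            rw [ENNReal.ofReal_inv_of_pos (by norm_num)]; simp]
          apply ENNReal.ofReal_le_ofReal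
          rw [hK, pow_add]
          apply le_of_eq
          field_simp
  have hWp : 2⁻¹ ≤ gam J W := by
    have h := prob_compl_eq_one_sub (μ := gam J) hWm.compl
    rw [compl_compl] at h
    rw [h]
    calc (2⁻¹ : ℝ≥0∞) = 1 - 2⁻¹ := by simp [ENNReal.one_sub_inv_two]
      _ ≤ _ := by gcongr
  have hpoint : ∀ G ∈ W, ENNReal.ofReal (ρ (∑ j, g j • m j x)) ^ p
      ≤ ∑ ε : B → Bool, Phi ρ m (K * σ) M g (pt ε G) ^ p := by
    intro G hG
    obtain ⟨ε, hε⟩ := exists_signs lab (fun y => l.1 (∑ j, g j • m j y)) (by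
      intro β y z hz
      simp only [← map_add, ← Finset.sum_add_distrib, ← smul_add, haff _ β y z hz]
      rw [← smul_eq_mul, ← map_smul, Finset.smul_sum]
      congr 1
      exact Finset.sum_congr rfl fun j _ => smul_comm _ _ _) x (fun a => t * G a)
    have hpe : (fun a => x a + sgn (ε (lab a)) * (t * G a)) = pt ε G := by
      ext a; simp only [pt]; ring
    simp only [hpe] at hε
    have hg : G ∉ bad1 ε ∪ bad2 ε := fun h => hG (Set.mem_iUnion.2 ⟨ε, h⟩)
    simp only [bad1, bad2, Set.mem_union, Set.mem_setOf_eq, not_or, not_le] at hg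
    have hS : ∑ j, l.1 (m j (pt ε G)) ^ 2 ≤ (K * σ) ^ 2 :=
      (ENNReal.ofReal_le_ofReal_iff (by positivity)).1 hg.2.le
    refine le_trans ?_ (Finset.single_le_sum (f := fun ε => Phi ρ m (K * σ) M g (pt ε G) ^ p)
      (fun _ _ => zero_le) (Finset.mem_univ ε))
    refine ENNReal.rpow_le_rpow ?_ hp0.le
    simp only [Phi, hg.1.le, if_true]
    refine le_trans (ENNReal.ofReal_le_ofReal ?_) (le_iSup (fun l : Dom ρ =>
      ENNReal.ofReal (∑ j, trunc ρ m (K * σ) (pt ε G) l j * g j)) l)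
    rw [trunc_eq ρ m hτ _ l hS, ← hl1]
    exact hε
  calc ENNReal.ofReal (ρ (∑ j, g j • m j x)) ^ p
      = 2 * (ENNReal.ofReal (ρ (∑ j, g j • m j x)) ^ p * 2⁻¹) := by
        rw [mul_comm _ (2⁻¹ : ℝ≥0∞), ← mul_assoc, ENNReal.mul_inv_cancel (by norm_num) (by norm_num), one_mul]
    _ ≤ 2 * ∫⁻ G in W, ENNReal.ofReal (ρ (∑ j, g j • m j x)) ^ p ∂gam J := by
        rw [setLIntegral_const]
        gcongr
    _ ≤ 2 * ∫⁻ G in W, ∑ ε : B → Bool, Phi ρ m (K * σ) M g (pt ε G) ^ p ∂gam J := by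
        gcongr 2 * ?_
        exact setLIntegral_mono' hWm hpoint
    _ ≤ 2 * ∫⁻ G, ∑ ε : B → Bool, Phi ρ m (K * σ) M g (pt ε G) ^ p ∂gam J := by
        gcongr 2 * ?_
        exact setLIntegral_le_lintegral _ _
    _ = _ := by
        have hPg : Measurable (fun y => Phi ρ m (K * σ) M g y ^ p) :=
          (hPm.comp (measurable_prodMk_left (x := g))).pow_const p
        have hPe : ∀ ε, Measurable (fun G => Phi ρ m (K * σ) M g (pt ε G) ^ p) :=
          fun ε => hPg.comp (hpt ε)
        have hse : ∀ ε, ∫⁻ G, Phi ρ m (K * σ) M g (pt ε G) ^ p ∂gam J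
            = ∫⁻ G, Phi ρ m (K * σ) M g (fun a => x a + t * G a) ^ p ∂gam J :=
          fun ε => hsign ε _ hPg
        clear_value pt
        rw [lintegral_finsetSum _ (fun ε _ => hPe ε)]
        simp_rw [hse]
        simp

/-- The constant of the key lemma. -/
def keyC (b : ℕ) (R : ℝ) : ℝ := 40 * 2 ^ (b + 2) * (2 * 2 ^ b * Real.exp (R / 2))

/-- The supremum over the index set, pointwise in `g`: translating the Gaussian perturbation
to the origin (Cameron–Martin) makes the bound uniform in the index. -/
lemma key_point (lab : J → B) (hm : ∀ j, Continuous (m j))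
    (haff : ∀ (j : κ) (β : B) (y z : J → ℝ), (∀ a, lab a ≠ β → z a = 0) →
      m j (fun a => y a + z a) + m j (fun a => y a - z a) = (2 : ℝ) • m j y)
    {p mm σ R : ℝ} (hp : 1 ≤ p) (hmm : 0 < mm) (hσ : 0 < σ) (Xs : Set (J → ℝ))
    (hX : ∀ x ∈ Xs, ∑ a, x a ^ 2 ≤ R)
    (h1 : ∀ x ∈ Xs, ∫⁻ G, meanN ρ m (fun a => x a + (√p)⁻¹ * G a) ∂gam J ≤ ENNReal.ofReal mm)
    (h2 : ∀ x ∈ Xs, ∀ l : Dom ρ,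
      ∫⁻ G, ENNReal.ofReal (∑ j, l.1 (m j (fun a => x a + (√p)⁻¹ * G a)) ^ 2) ∂gam J
      ≤ ENNReal.ofReal (σ ^ 2))
    {K C1 : ℝ} {M : ℝ≥0∞} (hK : K = 2 ^ (Fintype.card B + 2)) (hM : M = ENNReal.ofReal (K * mm))
    (hC1 : C1 = 2 * 2 ^ Fintype.card B * Real.exp (R / 2)) (Ψ : (κ → ℝ) → (J → ℝ) → ℝ≥0∞)
    (hΨ : ∀ g G, Ψ g G = Phi ρ m (K * σ) M g (fun a => (√p)⁻¹ * G a))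
    (hΨg : ∀ g, Measurable (Ψ g)) (g : κ → ℝ) :
    (⨆ x ∈ Xs, ENNReal.ofReal (ρ (∑ j, g j • m j x)))
      ≤ ENNReal.ofReal C1 * (∫⁻ G, Ψ g G ^ (2 * p) ∂gam J) ^ (1 / (2 * p)) := by
  have hp0 : 0 < p := by linarith
  have hs : 0 < √p := Real.sqrt_pos.2 hp0
  subst hM
  have hC0 : 0 ≤ C1 := by rw [hC1]; positivity
  refine iSup₂_le fun x hx => ?_
  have ha := rho_le_avg ρ m lab hm haff hp hmm hσ hK x (h1 x hx) (h2 x hx) g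
  have hb := lintegral_shift_le (fun a => √p * x a) (fun G => Ψ g G ^ p) ((hΨg g).pow_const p)
  have e1 : ∀ G : J → ℝ, Ψ g (fun a => √p * x a + G a)
      = Phi ρ m (K * σ) (ENNReal.ofReal (K * mm)) g (fun a => x a + (√p)⁻¹ * G a) := by
    intro G
    simp only [hΨ]
    congr 1; funext a; field_simp
  simp only [e1] at hb
  have e2 : ∑ a, (√p * x a) ^ 2 ≤ p * R := by
    simp only [mul_pow, Real.sq_sqrt hp0.le, ← Finset.mul_sum]
    exact mul_le_mul_of_nonneg_left (hX x hx) hp0.le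
  have e3 : ∀ G, (Ψ g G ^ p) ^ (2 : ℝ) = Ψ g G ^ (2 * p) := by
    intro G; rw [← ENNReal.rpow_mul, mul_comm]
  simp only [e3] at hb
  rw [← ENNReal.rpow_le_rpow_iff hp0]
  refine ha.trans ?_
  calc _ ≤ 2 * (2 ^ Fintype.card B * (ENNReal.ofReal (Real.exp (p * R / 2))
          * (∫⁻ G, Ψ g G ^ (2 * p) ∂gam J) ^ (1 / 2 : ℝ))) := by
        gcongr
        refine hb.trans ?_
        gcongr
    _ = ENNReal.ofReal (2 * 2 ^ Fintype.card B * Real.exp (R / 2) ^ p)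
          * ((∫⁻ G, Ψ g G ^ (2 * p) ∂gam J) ^ (1 / (2 * p))) ^ p := by
        rw [← ENNReal.rpow_mul, ← mul_assoc, ← mul_assoc]
        congr 1
        · rw [ENNReal.ofReal_mul (by positivity), ENNReal.ofReal_mul (by positivity),
            ENNReal.ofReal_pow (by norm_num), ← Real.exp_mul]
          simp only [ENNReal.ofReal_ofNat]
          congr 3; ring
        · congr 1; field_simp
    _ ≤ _ := by
        rw [ENNReal.mul_rpow_of_nonneg _ _ hp0.le, ENNReal.ofReal_rpow_of_nonneg (by positivity) hp0.le]
        gcongr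
        rw [hC1, Real.mul_rpow (by positivity) (by positivity)]
        gcongr
        have : (1 : ℝ) ≤ 2 * 2 ^ Fintype.card B := by
          have : (1 : ℝ) ≤ 2 ^ Fintype.card B := one_le_pow₀ (by norm_num)
          linarith
        simpa using Real.rpow_le_rpow_of_exponent_le this hp

/-- The numerical comparison that fixes `keyC`. -/
lemma key_num (b : ℕ) {p mm σ R K C1 : ℝ} {M : ℝ≥0∞} (hp : 1 ≤ p) (hmm : 0 < mm) (hσ : 0 < σ)
    (hK : K = 2 ^ (b + 2)) (hM : M = ENNReal.ofReal (K * mm))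
    (hC1 : C1 = 2 * 2 ^ b * Real.exp (R / 2)) :
    ENNReal.ofReal C1 * (2 * M + ENNReal.ofReal (20 * √(2 * p) * (K * σ)))
      ≤ ENNReal.ofReal (keyC b R) * (ENNReal.ofReal mm + ENNReal.ofReal (√p * σ)) := by
  have hp0 : 0 < p := by linarith
  have hK0 : 0 < K := by rw [hK]; positivity
  have hC0 : 0 ≤ C1 := by rw [hC1]; positivity
  have e : keyC b R = C1 * (40 * K) := by rw [keyC, hC1, hK]; ring
  rw [hM, e, ← ENNReal.ofReal_add (by positivity) (by positivity),
    ← ENNReal.ofReal_mul (by positivity), ← ENNReal.ofReal_ofNat 2,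
    ← ENNReal.ofReal_mul (by norm_num), ← ENNReal.ofReal_add (by positivity) (by positivity),
    ← ENNReal.ofReal_mul hC0]
  apply ENNReal.ofReal_le_ofReal
  rw [mul_assoc C1]
  refine mul_le_mul_of_nonneg_left ?_ hC0
  have h2p : √(2 * p) ≤ 2 * √p := by
    rw [Real.sqrt_le_left (by positivity), mul_pow, Real.sq_sqrt hp0.le]; linarith
  calc 2 * (K * mm) + 20 * √(2 * p) * (K * σ)
      ≤ 2 * (K * mm) + 20 * (2 * √p) * (K * σ) := by gcongr
    _ ≤ _ := by nlinarith [mul_pos hK0 hmm]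

/-- The key lemma for positive finite bounds on the mean and the weak variance. -/
lemma key_aux (lab : J → B) (hm : ∀ j, Continuous (m j))
    (haff : ∀ (j : κ) (β : B) (y z : J → ℝ), (∀ a, lab a ≠ β → z a = 0) →
      m j (fun a => y a + z a) + m j (fun a => y a - z a) = (2 : ℝ) • m j y)
    {p mm σ R : ℝ} (hp : 1 ≤ p) (hmm : 0 < mm) (hσ : 0 < σ) (Xs : Set (J → ℝ))
    (hX : ∀ x ∈ Xs, ∑ a, x a ^ 2 ≤ R)
    (h1 : ∀ x ∈ Xs, ∫⁻ G, meanN ρ m (fun a => x a + (√p)⁻¹ * G a) ∂gam J ≤ ENNReal.ofReal mm)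
    (h2 : ∀ x ∈ Xs, ∀ l : Dom ρ,
      ∫⁻ G, ENNReal.ofReal (∑ j, l.1 (m j (fun a => x a + (√p)⁻¹ * G a)) ^ 2) ∂gam J
      ≤ ENNReal.ofReal (σ ^ 2)) :
    lp p (gam κ) (fun g => ⨆ x ∈ Xs, ENNReal.ofReal (ρ (∑ j, g j • m j x)))
      ≤ ENNReal.ofReal (keyC (Fintype.card B) R) * (ENNReal.ofReal mm + ENNReal.ofReal (√p * σ)) := by
  have hp0 : 0 < p := by linarith
  have hs : 0 < √p := Real.sqrt_pos.2 hp0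
  obtain ⟨K, hK⟩ : ∃ K : ℝ, K = 2 ^ (Fintype.card B + 2) := ⟨_, rfl⟩
  have hK0 : 0 < K := by rw [hK]; positivity
  have hτ : 0 < K * σ := by positivity
  obtain ⟨M, hM⟩ : ∃ M, M = ENNReal.ofReal (K * mm) := ⟨_, rfl⟩
  obtain ⟨Ψ, hΨ⟩ : ∃ Ψ : (κ → ℝ) → (J → ℝ) → ℝ≥0∞,
      ∀ g G, Ψ g G = Phi ρ m (K * σ) M g (fun a => (√p)⁻¹ * G a) := ⟨_, fun _ _ => rfl⟩
  have hΨm : Measurable (fun w : (κ → ℝ) × (J → ℝ) => Ψ w.1 w.2) := by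
    have h0 := measurable_Phi ρ m hm hτ M
    have h1 : Measurable (fun w : (κ → ℝ) × (J → ℝ) => (w.1, fun a => (√p)⁻¹ * w.2 a)) := by
      fun_prop
    have h2 := h0.comp h1
    simp only [hΨ]
    exact h2
  have hΨg : ∀ g, Measurable (Ψ g) := fun g => hΨm.comp measurable_prodMk_left
  obtain ⟨C1, hC1⟩ : ∃ C1 : ℝ, C1 = 2 * 2 ^ Fintype.card B * Real.exp (R / 2) := ⟨_, rfl⟩
  have hpt := key_point ρ m lab hm haff hp hmm hσ Xs hX h1 h2 hK hM hC1 Ψ hΨ hΨg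
  have hPhi : ∀ G, lp (2 * p) (gam κ) (fun g => Ψ g G)
      ≤ 2 * M + ENNReal.ofReal (20 * √(2 * p) * (K * σ)) := fun G => by
    simp only [hΨ]
    exact Phi_moment ρ m hτ M (by linarith) _
  have hI : (∫⁻ g, ∫⁻ G, Ψ g G ^ (2 * p) ∂gam J ∂gam κ) ^ (1 / (2 * p))
      ≤ 2 * M + ENNReal.ofReal (20 * √(2 * p) * (K * σ)) := by
    rw [lintegral_lintegral_swap (hΨm.pow_const _).aemeasurable, one_div,
      ENNReal.rpow_inv_le_iff (by positivity)]
    calc _ ≤ ∫⁻ G, (2 * M + ENNReal.ofReal (20 * √(2 * p) * (K * σ))) ^ (2 * p) ∂gam J := by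
          refine lintegral_mono fun G => ?_
          exact (lp_le_iff (by positivity)).1 (hPhi G)
      _ = _ := by simp
  have hIm : Measurable (fun g => (∫⁻ G, Ψ g G ^ (2 * p) ∂gam J) ^ (1 / (2 * p))) :=
    (Measurable.lintegral_prod_right' (f := fun w : (κ → ℝ) × (J → ℝ) => Ψ w.1 w.2 ^ (2 * p))
      (hΨm.pow_const _)).pow_const _
  calc _ ≤ lp p (gam κ) (fun g => ENNReal.ofReal C1 * (∫⁻ G, Ψ g G ^ (2 * p) ∂gam J) ^ (1 / (2 * p))) :=
        lp_mono hp0 hpt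
    _ ≤ ENNReal.ofReal C1 * lp (2 * p) (gam κ) (fun g => (∫⁻ G, Ψ g G ^ (2 * p) ∂gam J) ^ (1 / (2 * p))) := by
        rw [lp_const_mul hp0 _ hIm]
        gcongr
        exact lp_mono_exp hp0 (by linarith) hIm
    _ = ENNReal.ofReal C1 * (∫⁻ g, ∫⁻ G, Ψ g G ^ (2 * p) ∂gam J ∂gam κ) ^ (1 / (2 * p)) := by
        unfold lp; congr 2
        refine lintegral_congr fun g => ?_
        rw [← ENNReal.rpow_mul, one_div_mul_cancel (by positivity), ENNReal.rpow_one]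
    _ ≤ ENNReal.ofReal C1 * (2 * M + ENNReal.ofReal (20 * √(2 * p) * (K * σ))) := by gcongr
    _ ≤ _ := by
        exact key_num _ hp hmm hσ hK hM hC1

/-- **Key lemma.** Moments of the supremum over `x ∈ Xs` of a Gaussian process with values in a
seminormed space are controlled by the mean and the weak variance of the process at a *randomly
perturbed* point `x + p^{-1/2} G`, uniformly in `x`. -/
lemma key (lab : J → B) (hm : ∀ j, Continuous (m j))
    (haff : ∀ (j : κ) (β : B) (y z : J → ℝ), (∀ a, lab a ≠ β → z a = 0) →
      m j (fun a => y a + z a) + m j (fun a => y a - z a) = (2 : ℝ) • m j y)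
    {p R : ℝ} {mm σ : ℝ≥0∞} (hp : 1 ≤ p) (Xs : Set (J → ℝ))
    (hX : ∀ x ∈ Xs, ∑ a, x a ^ 2 ≤ R)
    (h1 : ∀ x ∈ Xs, ∫⁻ G, meanN ρ m (fun a => x a + (√p)⁻¹ * G a) ∂gam J ≤ mm)
    (h2 : ∀ x ∈ Xs, ∀ l : Dom ρ,
      lp 2 (gam J) (fun G => ENNReal.ofReal (√(∑ j, l.1 (m j (fun a => x a + (√p)⁻¹ * G a)) ^ 2))) ≤ σ) :
    lp p (gam κ) (fun g => ⨆ x ∈ Xs, ENNReal.ofReal (ρ (∑ j, g j • m j x)))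
      ≤ ENNReal.ofReal (keyC (Fintype.card B) R) * (mm + ENNReal.ofReal (√p) * σ) := by
  have hp0 : 0 < p := by linarith
  have hs : 0 < √p := Real.sqrt_pos.2 hp0
  have hC : 0 < keyC (Fintype.card B) R := by unfold keyC; positivity
  by_cases htop : mm = ⊤ ∨ σ = ⊤
  · have : ENNReal.ofReal (keyC (Fintype.card B) R) * (mm + ENNReal.ofReal (√p) * σ) = ⊤ := by
      rw [ENNReal.mul_eq_top]
      left
      refine ⟨by simpa using hC, ?_⟩
      rcases htop with h | h
      · simp [h]
      · rw [h, ENNReal.mul_top (by simpa using hs)]; simp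
    rw [this]; exact le_top
  push Not at htop
  obtain ⟨hmt, hst⟩ := htop
  set D := ENNReal.ofReal (keyC (Fintype.card B) R)
  have hlim : Filter.Tendsto (fun e : ℝ => D * ((mm + ENNReal.ofReal e) + ENNReal.ofReal √p * (σ + ENNReal.ofReal e)))
      (nhdsWithin 0 (Set.Ioi 0)) (nhds (D * ((mm + ENNReal.ofReal 0) + ENNReal.ofReal √p * (σ + ENNReal.ofReal 0)))) := by
    have h0 : Filter.Tendsto (fun e : ℝ => ENNReal.ofReal e) (nhdsWithin 0 (Set.Ioi 0)) (nhds (ENNReal.ofReal 0)) :=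
      (ENNReal.continuous_ofReal.tendsto 0).mono_left nhdsWithin_le_nhds
    refine ENNReal.Tendsto.const_mul ?_ (Or.inr (by simp [D]))
    refine (tendsto_const_nhds.add h0).add ?_
    exact ENNReal.Tendsto.const_mul (tendsto_const_nhds.add h0) (Or.inr (by simp))
  simp only [ENNReal.ofReal_zero, add_zero] at hlim
  refine ge_of_tendsto hlim ?_
  filter_upwards [self_mem_nhdsWithin] with e he
  have he : 0 < e := he
  have := key_aux ρ m lab hm haff (mm := mm.toReal + e) (σ := σ.toReal + e) hp (by positivity)
    (by positivity) Xs hX ?_ ?_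
  · rw [ENNReal.ofReal_mul hs.le, ENNReal.ofReal_add (by positivity) he.le, ENNReal.ofReal_toReal hmt,
      ENNReal.ofReal_add (by positivity) he.le, ENNReal.ofReal_toReal hst] at this
    exact this
  · intro x hx
    rw [ENNReal.ofReal_add (by positivity) he.le, ENNReal.ofReal_toReal hmt]
    exact (h1 x hx).trans le_self_add
  · intro x hx l
    have h := (lp_le_iff (by norm_num)).1 (h2 x hx l)
    have h' : ∀ a : ℝ, 0 ≤ a → ENNReal.ofReal (√a) ^ (2 : ℝ) = ENNReal.ofReal a := by
      intro a ha
      rw [ENNReal.ofReal_rpow_of_nonneg (Real.sqrt_nonneg _) (by norm_num)]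
      congr 1
      rw [Real.rpow_two, Real.sq_sqrt ha]
    simp_rw [h' _ (Finset.sum_nonneg fun _ _ => sq_nonneg _)] at h
    refine h.trans ?_
    rw [← Real.rpow_two, ← ENNReal.ofReal_rpow_of_nonneg (by positivity) (by norm_num),
      ENNReal.ofReal_add (by positivity) he.le, ENNReal.ofReal_toReal hst]
    gcongr
    exact le_self_add

end key
end
end LqChaos

/-! ### Blocks, monomials and scalar chaoses -/

namespace LqChaos
noncomputable section

variable {d n : ℕ}

/-- The restriction `i_I` of a multi-index `i` to the coordinates in `I`. -/
def res (I : Finset (Fin d)) (i : Fin d → Fin n) : {l // l ∈ I} → Fin n := fun l => i l.1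

/-- The position `(I, i_I)` of the entry of a block family that multiplies the index `i`. -/
def pos (I : Finset (Fin d)) (i : Fin d → Fin n) : GIdx d n := ⟨I, res I i⟩

/-- The product `∏_{I ∈ R} y^I_{i_I}` over the blocks of `R`. -/
def mono (R : Finset (Finset (Fin d))) (y : GIdx d n → ℝ) (i : Fin d → Fin n) : ℝ :=
  ∏ I ∈ R, y (pos I i)

lemma pos_eq_iff {I : Finset (Fin d)} {i i' : Fin d → Fin n} :
    pos I i = pos I i' ↔ ∀ l ∈ I, i l = i' l := by
  unfold pos res
  constructor
  · intro h l hl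
    have := eq_of_heq (Sigma.mk.inj h).2
    exact congrFun this ⟨l, hl⟩
  · intro h
    congr 1
    funext l
    exact h l.1 l.2

lemma mono_empty (y : GIdx d n → ℝ) (i) : mono ∅ y i = 1 := by simp [mono]

lemma mono_insert {I : Finset (Fin d)} {R : Finset (Finset (Fin d))} (h : I ∉ R)
    (y : GIdx d n → ℝ) (i) : mono (insert I R) y i = y (pos I i) * mono R y i := by
  simp [mono, Finset.prod_insert h]

lemma mono_singleton (I : Finset (Fin d)) (y : GIdx d n → ℝ) (i) :
    mono {I} y i = y (pos I i) := by simp [mono]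

lemma mono_union {R R' : Finset (Finset (Fin d))} (h : Disjoint R R')
    (y : GIdx d n → ℝ) (i) : mono (R ∪ R') y i = mono R y i * mono R' y i := by
  simp [mono, Finset.prod_union h]

lemma mono_congr {R : Finset (Finset (Fin d))} {y z : GIdx d n → ℝ}
    (h : ∀ I ∈ R, ∀ v, y ⟨I, v⟩ = z ⟨I, v⟩) (i) : mono R y i = mono R z i :=
  Finset.prod_congr rfl fun I hI => h I hI _

@[fun_prop]
lemma continuous_mono (R : Finset (Finset (Fin d))) (i : Fin d → Fin n) :
    Continuous (fun y : GIdx d n → ℝ => mono R y i) :=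
  continuous_finset_prod _ fun I _ => continuous_apply _

@[fun_prop]
lemma measurable_mono (R : Finset (Finset (Fin d))) (i : Fin d → Fin n) :
    Measurable (fun y : GIdx d n → ℝ => mono R y i) := (continuous_mono R i).measurable

lemma measurable_mono_pi (R : Finset (Finset (Fin d))) :
    Measurable (fun y : GIdx d n → ℝ => mono R y) :=
  measurable_pi_lambda _ fun i => measurable_mono R i

/-- Independent families of Gaussian blocks can be merged into one. -/
lemma lintegral_mono_merge {R R' : Finset (Finset (Fin d))} (h : Disjoint R R')
    (f : ((Fin d → Fin n) → ℝ) → ℝ≥0∞) (hf : Measurable f) :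
    ∫⁻ w, ∫⁻ w', f (fun i => mono R w i * mono R' w' i) ∂gam (GIdx d n) ∂gam (GIdx d n)
      = ∫⁻ w, f (fun i => mono (R ∪ R') w i) ∂gam (GIdx d n) := by
  rw [← lintegral_merge (fun j : GIdx d n => j.1 ∈ R) (fun w => f (fun i => mono (R ∪ R') w i))
    (hf.comp (measurable_mono_pi _))]
  refine lintegral_congr fun w => lintegral_congr fun w' => ?_
  congr 1
  funext i
  rw [mono_union h]
  congr 1
  · exact mono_congr (fun I hI v => by simp [hI]) i
  · exact mono_congr (fun I hI v => by simp [Finset.disjoint_right.1 h hI]) i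

/-- `∑_w (∑_{i : i_L = w} c_i)²`, written as a double sum over pairs agreeing on `L`. -/
def HS (L : Finset (Fin d)) (c : (Fin d → Fin n) → ℝ) : ℝ :=
  ∑ i, ∑ i', if (∀ l ∈ L, i l = i' l) then c i * c i' else 0

lemma HS_eq (L : Finset (Fin d)) (c : (Fin d → Fin n) → ℝ) :
    HS L c = ∑ j : GIdx d n, (∑ i, if pos L i = j then c i else 0) ^ 2 := by
  simp only [HS, sq, Finset.sum_mul_sum]
  rw [Finset.sum_comm, Finset.sum_comm' (t' := Finset.univ) (s' := fun _ => Finset.univ) (by simp)]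
  conv_rhs => rw [Finset.sum_comm]
  refine Finset.sum_congr rfl fun i _ => ?_
  conv_rhs => rw [Finset.sum_comm]
  refine Finset.sum_congr rfl fun i' _ => ?_
  rw [Finset.sum_eq_single (pos L i)]
  · by_cases h : ∀ l ∈ L, i l = i' l
    · rw [if_pos h, if_pos rfl, if_pos (pos_eq_iff.2 h).symm]
    · have : ¬ pos L i' = pos L i := fun h' => h (pos_eq_iff.1 h'.symm)
      simp [h, this]
  · intro j _ hj
    simp [hj.symm]
  · simp

lemma HS_nonneg (L : Finset (Fin d)) (c : (Fin d → Fin n) → ℝ) : 0 ≤ HS L c := by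
  rw [HS_eq]; positivity

lemma HS_empty (c : (Fin d → Fin n) → ℝ) : HS ∅ c = (∑ i, c i) ^ 2 := by
  simp [HS, sq, Finset.sum_mul_sum]

lemma HS_union (L I : Finset (Fin d)) (c : (Fin d → Fin n) → ℝ) :
    HS (I ∪ L) c = ∑ j : GIdx d n, HS L (fun i => if pos I i = j then c i else 0) := by
  simp only [HS]
  rw [Finset.sum_comm]
  conv_rhs => rw [Finset.sum_comm]
  rw [Finset.sum_comm]
  refine Finset.sum_congr rfl fun i _ => ?_
  conv_rhs => rw [Finset.sum_comm]
  refine Finset.sum_congr rfl fun i' _ => ?_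
  rw [Finset.sum_eq_single (pos I i)]
  · by_cases h : ∀ l ∈ I, i l = i' l
    · have : (∀ l ∈ I ∪ L, i l = i' l) ↔ ∀ l ∈ L, i l = i' l := by
        simp only [Finset.mem_union, or_imp, forall_and]; tauto
      simp only [this, (pos_eq_iff.2 h).symm, if_true]
    · have h1 : ¬ pos I i' = pos I i := fun h' => h (pos_eq_iff.1 h'.symm)
      have : ¬ (∀ l ∈ I ∪ L, i l = i' l) := fun h' => h fun l hl => h' l (by simp [hl])
      simp only [this, h1, if_false]; simp
  · intro j _ hj
    simp [hj.symm]
  · simp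

/-- The coefficients of the Gaussian variables of the block `I` in a chaos. -/
def coef (I : Finset (Fin d)) (R : Finset (Finset (Fin d))) (c : (Fin d → Fin n) → ℝ)
    (w : GIdx d n → ℝ) (j : GIdx d n) : ℝ :=
  ∑ i, (if pos I i = j then c i else 0) * mono R w i

lemma measurable_coef (I R) (c : (Fin d → Fin n) → ℝ) (j : GIdx d n) :
    Measurable (fun w => coef I R c w j) := by
  unfold coef
  exact Finset.measurable_sum _ fun i _ => (measurable_mono R i).const_mul _

/-- Conditionally on the other blocks, a chaos is a Gaussian variable whose standard deviation is the
Euclidean norm of the coefficients of the block `I`. -/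
lemma lintegral_chaos_insert {I : Finset (Fin d)} {R : Finset (Finset (Fin d))} (h : I ∉ R)
    (c : (Fin d → Fin n) → ℝ) {r : ℝ} (hr : 0 ≤ r) :
    ∫⁻ w, ENNReal.ofReal |∑ i, c i * mono (insert I R) w i| ^ r ∂gam (GIdx d n)
      = (∫⁻ w, ENNReal.ofReal (√(∑ j, coef I R c w j ^ 2)) ^ r ∂gam (GIdx d n))
        * ∫⁻ s, ENNReal.ofReal (|s| ^ r) ∂gaussianReal 0 1 := by
  have hm : ∀ c' : (Fin d → Fin n) → ℝ, Measurable (fun f : (Fin d → Fin n) → ℝ =>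
      ENNReal.ofReal |∑ i, c i * f i| ^ r) := fun _ => by fun_prop
  have h1 := lintegral_mono_merge (n := n) (R := R) (R' := {I}) (by simpa using h)
    (fun f => ENNReal.ofReal |∑ i, c i * f i| ^ r) (hm c)
  rw [Finset.insert_eq, Finset.union_comm, ← h1, ← lintegral_mul_const]
  · refine lintegral_congr fun w => ?_
    have e : ∀ w' : GIdx d n → ℝ, ∑ i, c i * (mono R w i * mono {I} w' i)
        = ∑ j, coef I R c w j * w' j := by
      intro w'
      simp only [coef, Finset.sum_mul]
      rw [Finset.sum_comm]
      refine Finset.sum_congr rfl fun i _ => ?_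
      rw [Finset.sum_eq_single (pos I i)]
      · simp [mono_singleton]; ring
      · intro j _ hj; simp [hj.symm]
      · simp
    simp only [e]
    rw [lintegral_linear (fun j => coef I R c w j) (fun s => ENNReal.ofReal |s| ^ r) (by fun_prop),
      ← lintegral_const_mul _ (by fun_prop)]
    refine lintegral_congr fun s => ?_
    rw [abs_mul, abs_of_nonneg (Real.sqrt_nonneg _), ENNReal.ofReal_mul (Real.sqrt_nonneg _),
      ENNReal.mul_rpow_of_nonneg _ _ hr, ENNReal.ofReal_rpow_of_nonneg (abs_nonneg s) hr]
  · have := fun j => measurable_coef I R c j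
    fun_prop

lemma coef_upper_step {r : ℝ} (hr : 2 ≤ r) (I : Finset (Fin d)) {R : Finset (Finset (Fin d))}
    (ih : ∀ c : (Fin d → Fin n) → ℝ, lp r (gam (GIdx d n)) (fun w =>
      ENNReal.ofReal |∑ i, c i * mono R w i|) ≤ ENNReal.ofReal ((4 * √r) ^ R.card * √(HS (R.sup id) c)))
    (c : (Fin d → Fin n) → ℝ) :
    lp r (gam (GIdx d n)) (fun w => ENNReal.ofReal (√(∑ j, coef I R c w j ^ 2)))
      ≤ ENNReal.ofReal ((4 * √r) ^ R.card * √(HS (I ∪ R.sup id) c)) := by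
  have hr0 : 0 < r := by linarith
  have hcm := fun j => measurable_coef I R c j
  have h2 : lp (r / 2) (gam (GIdx d n)) (fun w => ∑ j, ENNReal.ofReal (coef I R c w j ^ 2))
      ≤ ENNReal.ofReal (((4 * √r) ^ R.card) ^ 2 * HS (I ∪ R.sup id) c) := by
    refine (lp_sum_le (by linarith) _ _ fun j => by fun_prop).trans ?_
    rw [HS_union, Finset.mul_sum, ENNReal.ofReal_sum_of_nonneg
      (fun j _ => mul_nonneg (by positivity) (HS_nonneg _ _))]
    refine Finset.sum_le_sum fun j _ => ?_
    rw [lp_le_iff (by positivity)]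
    have h3 := (lp_le_iff hr0).1 (ih (fun i => if pos I i = j then c i else 0))
    refine le_trans (le_of_eq (lintegral_congr fun w => ?_)) (h3.trans (le_of_eq ?_))
    · rw [← sq_abs, ENNReal.ofReal_pow (abs_nonneg _), ← ENNReal.rpow_natCast, ← ENNReal.rpow_mul]
      unfold coef
      congr 1
      push_cast; ring
    · rw [← Real.sq_sqrt (HS_nonneg (R.sup id) (fun i => if pos I i = j then c i else 0)),
        ← mul_pow, ENNReal.ofReal_pow (by positivity), Real.sqrt_sq (Real.sqrt_nonneg _),
        ← ENNReal.rpow_natCast, ← ENNReal.rpow_mul]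
      congr 1
      push_cast; ring
  rw [lp_le_iff hr0]
  refine le_trans (le_of_eq (lintegral_congr fun w => ?_))
    (((lp_le_iff (by positivity)).1 h2).trans (le_of_eq ?_))
  · rw [← ENNReal.ofReal_sum_of_nonneg (fun _ _ => sq_nonneg _),
      ← Real.sq_sqrt (x := ∑ j, coef I R c w j ^ 2) (by positivity),
      ENNReal.ofReal_pow (by positivity), Real.sqrt_sq (Real.sqrt_nonneg _),
      ← ENNReal.rpow_natCast, ← ENNReal.rpow_mul]
    congr 1
    push_cast; ring
  · rw [← Real.sq_sqrt (HS_nonneg (I ∪ R.sup id) c),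
        ← mul_pow, ENNReal.ofReal_pow (by positivity), Real.sqrt_sq (Real.sqrt_nonneg _),
        ← ENNReal.rpow_natCast, ← ENNReal.rpow_mul]
    congr 1
    push_cast; ring

/-- Moments of scalar decoupled chaoses, upper bound. -/
lemma chaos_upper {r : ℝ} (hr : 2 ≤ r) (R : Finset (Finset (Fin d))) (c : (Fin d → Fin n) → ℝ) :
    lp r (gam (GIdx d n)) (fun w => ENNReal.ofReal |∑ i, c i * mono R w i|)
      ≤ ENNReal.ofReal ((4 * √r) ^ R.card * √(HS (R.sup id) c)) := by
  have hr0 : 0 < r := by linarith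
  induction R using Finset.induction_on generalizing c with
  | empty =>
    simp only [mono_empty, mul_one, lp_const hr0]
    simp [HS_empty, Real.sqrt_sq_eq_abs]
  | insert I R hI ih =>
    have h1 := coef_upper_step hr I ih c
    rw [lp_le_iff hr0] at h1 ⊢
    rw [lintegral_chaos_insert hI c hr0.le, Finset.card_insert_of_notMem hI, Finset.sup_insert]
    refine (mul_le_mul' h1 (gauss_mom_upper (by linarith))).trans (le_of_eq ?_)
    rw [← ENNReal.ofReal_rpow_of_nonneg (by positivity) hr0.le,
      ← ENNReal.mul_rpow_of_nonneg _ _ hr0.le, ← ENNReal.ofReal_mul (by positivity)]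
    congr 2
    simp only [id_eq, Finset.sup_eq_union]
    ring

/-- The weak variance of a chaos in one further block. -/
lemma coef_upper (I : Finset (Fin d)) (R : Finset (Finset (Fin d))) (c : (Fin d → Fin n) → ℝ) :
    lp 2 (gam (GIdx d n)) (fun w => ENNReal.ofReal (√(∑ j, coef I R c w j ^ 2)))
      ≤ ENNReal.ofReal ((4 * √2) ^ R.card * √(HS (I ∪ R.sup id) c)) :=
  coef_upper_step le_rfl I (fun c => chaos_upper le_rfl R c) c

/-- The Euclidean norm of a vector of means is at most the mean Euclidean norm. -/
lemma sqrt_sum_le_lintegral {W : Type*} [MeasurableSpace W] {μ : Measure W} {κ : Type*} [Fintype κ]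
    (a : κ → ℝ) (ha : ∀ j, 0 ≤ a j) (b : W → κ → ℝ) (hb : ∀ j, Measurable fun w => b w j)
    (h : ∀ j, ENNReal.ofReal (a j) ≤ ∫⁻ w, ENNReal.ofReal |b w j| ∂μ) :
    ENNReal.ofReal (√(∑ j, a j ^ 2)) ≤ ∫⁻ w, ENNReal.ofReal (√(∑ j, b w j ^ 2)) ∂μ := by
  by_cases h0 : √(∑ j, a j ^ 2) = 0
  · simp [h0]
  have hS : 0 < √(∑ j, a j ^ 2) := lt_of_le_of_ne (Real.sqrt_nonneg _) (Ne.symm h0)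
  rw [← ENNReal.mul_le_mul_iff_right (a := ENNReal.ofReal (√(∑ j, a j ^ 2))) (by simpa using hS)
    (by simp)]
  rw [← ENNReal.ofReal_mul hS.le, Real.mul_self_sqrt (by positivity),
    ← lintegral_const_mul _ (by fun_prop), ENNReal.ofReal_sum_of_nonneg (fun _ _ => sq_nonneg _)]
  calc ∑ j, ENNReal.ofReal (a j ^ 2) ≤ ∑ j, ∫⁻ w, ENNReal.ofReal (a j * |b w j|) ∂μ := by
        refine Finset.sum_le_sum fun j _ => ?_
        simp_rw [ENNReal.ofReal_mul (ha j)]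
        rw [lintegral_const_mul _ (by fun_prop), sq, ENNReal.ofReal_mul (ha j)]
        gcongr
        exact h j
    _ = ∫⁻ w, ENNReal.ofReal (∑ j, a j * |b w j|) ∂μ := by
        rw [← lintegral_finsetSum _ (fun j _ => by fun_prop)]
        refine lintegral_congr fun w => ?_
        rw [ENNReal.ofReal_sum_of_nonneg (fun j _ => mul_nonneg (ha j) (abs_nonneg _))]
    _ ≤ _ := by
        refine lintegral_mono fun w => ?_
        simp only
        rw [← ENNReal.ofReal_mul hS.le]
        refine ENNReal.ofReal_le_ofReal ?_
        have := Real.sum_mul_le_sqrt_mul_sqrt Finset.univ a (fun j => |b w j|)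
        simpa only [sq_abs] using this

lemma chaos_lower_step {p : ℝ} (hp : 1 ≤ p) {I : Finset (Fin d)} {R : Finset (Finset (Fin d))}
    (hI : I ∉ R) (c : (Fin d → Fin n) → ℝ)
    (ih : ∀ c : (Fin d → Fin n) → ℝ, ENNReal.ofReal ((1 / 27) ^ R.card * √(HS (R.sup id) c))
      ≤ ∫⁻ w, ENNReal.ofReal |∑ i, c i * mono R w i| ∂gam (GIdx d n)) :
    ENNReal.ofReal ((1 / 27) ^ (insert I R).card * √p * √(HS ((insert I R).sup id) c))
      ≤ lp p (gam (GIdx d n)) (fun w => ENNReal.ofReal |∑ i, c i * mono (insert I R) w i|) := by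
  have hp0 : 0 < p := by linarith
  have hcm := fun j => measurable_coef I R c j
  have h1 : ENNReal.ofReal ((1 / 27) ^ R.card * √(HS (I ∪ R.sup id) c))
      ≤ lp p (gam (GIdx d n)) (fun w => ENNReal.ofReal (√(∑ j, coef I R c w j ^ 2))) := by
    refine le_trans ?_ (lintegral_le_lp hp (by fun_prop))
    refine le_trans (le_of_eq ?_) (sqrt_sum_le_lintegral
      (fun j => (1 / 27) ^ R.card * √(HS (R.sup id) (fun i => if pos I i = j then c i else 0)))
      (fun j => by positivity) _ hcm (fun j => ih _))
    congr 1
    simp only [mul_pow, Real.sq_sqrt (HS_nonneg _ _), ← Finset.mul_sum, ← HS_union]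
    rw [Real.sqrt_mul (by positivity), Real.sqrt_sq (by positivity)]
  have h2 : lp p (gam (GIdx d n)) (fun w => ENNReal.ofReal |∑ i, c i * mono (insert I R) w i|)
      = lp p (gam (GIdx d n)) (fun w => ENNReal.ofReal (√(∑ j, coef I R c w j ^ 2)))
        * (∫⁻ s, ENNReal.ofReal (|s| ^ p) ∂gaussianReal 0 1) ^ (1 / p) := by
    unfold lp
    rw [lintegral_chaos_insert hI c hp0.le, ENNReal.mul_rpow_of_nonneg _ _ (by positivity)]
  have h3 : ENNReal.ofReal (√p / 27) ≤ (∫⁻ s, ENNReal.ofReal (|s| ^ p) ∂gaussianReal 0 1) ^ (1 / p) := by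
    rw [one_div, ENNReal.le_rpow_inv_iff hp0, ENNReal.ofReal_rpow_of_nonneg (by positivity) hp0.le]
    exact gauss_mom_lower hp
  rw [h2]
  refine le_trans (le_of_eq ?_) (mul_le_mul' h1 h3)
  rw [← ENNReal.ofReal_mul (by positivity), Finset.card_insert_of_notMem hI, Finset.sup_insert]
  congr 1
  simp only [id_eq, Finset.sup_eq_union]
  ring

/-- First moments of scalar decoupled chaoses, lower bound. -/
lemma chaos_lower_one (R : Finset (Finset (Fin d))) (c : (Fin d → Fin n) → ℝ) :
    ENNReal.ofReal ((1 / 27) ^ R.card * √(HS (R.sup id) c))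
      ≤ ∫⁻ w, ENNReal.ofReal |∑ i, c i * mono R w i| ∂gam (GIdx d n) := by
  induction R using Finset.induction_on generalizing c with
  | empty => simp [mono_empty, HS_empty, Real.sqrt_sq_eq_abs]
  | insert I R hI ih =>
    have := chaos_lower_step le_rfl hI c ih
    rwa [lp_one, Real.sqrt_one, mul_one] at this

/-- Moments of scalar decoupled chaoses, lower bound. -/
lemma chaos_lower {p : ℝ} (hp : 1 ≤ p) {R : Finset (Finset (Fin d))} (hR : R.Nonempty)
    (c : (Fin d → Fin n) → ℝ) :
    ENNReal.ofReal ((1 / 27) ^ R.card * √p * √(HS (R.sup id) c))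
      ≤ lp p (gam (GIdx d n)) (fun w => ENNReal.ofReal |∑ i, c i * mono R w i|) := by
  obtain ⟨I, hI⟩ := hR
  rw [← Finset.insert_erase hI]
  exact chaos_lower_step hp (Finset.notMem_erase I R) c (fun c => chaos_lower_one _ c)

end
end LqChaos

/-! ### Mean norms and suprema over unit arrays -/

namespace LqChaos
noncomputable section

variable {d n : ℕ} {F : Type*} [NormedAddCommGroup F] [NormedSpace ℝ F]
  (a : (Fin d → Fin n) → F)

/-- The mean norm of a chaos in the blocks of `P'` with coefficients `c_i a_i`. -/
def nrm (P' : Finset (Finset (Fin d))) (c : (Fin d → Fin n) → ℝ) : ℝ≥0∞ :=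
  ∫⁻ w, ‖∑ i, (c i * mono P' w i) • a i‖ₑ ∂gam (GIdx d n)

variable (P' : Finset (Finset (Fin d)))

lemma measurable_enorm_chaos (c : (Fin d → Fin n) → ℝ) :
    Measurable (fun w : GIdx d n → ℝ => ‖∑ i, (c i * mono P' w i) • a i‖ₑ) := by
  refine (Continuous.enorm ?_).measurable
  fun_prop

lemma lintegral_mono_lt_top (i : Fin d → Fin n) :
    ∫⁻ w, ‖mono P' w i‖ₑ ∂gam (GIdx d n) < ⊤ := by
  have h := chaos_upper (n := n) (le_refl 2) P' (Pi.single i 1)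
  have e : ∀ w, ENNReal.ofReal |∑ i', (Pi.single i 1 : (Fin d → Fin n) → ℝ) i' * mono P' w i'|
      = ‖mono P' w i‖ₑ := by
    intro w
    rw [Finset.sum_eq_single i]
    · simp [Real.enorm_eq_ofReal_abs]
    · intro j _ hj; simp [hj]
    · simp
  simp only [e] at h
  exact ((lintegral_le_lp (by norm_num) (measurable_mono P' i).enorm).trans h).trans_lt
    ENNReal.ofReal_lt_top

lemma nrm_lt_top (c : (Fin d → Fin n) → ℝ) : nrm a P' c < ⊤ := by
  calc nrm a P' c ≤ ∫⁻ w, ∑ i, ‖c i‖ₑ * ‖a i‖ₑ * ‖mono P' w i‖ₑ ∂gam (GIdx d n) := by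
        refine lintegral_mono fun w => (enorm_sum_le _ _).trans ?_
        refine Finset.sum_le_sum fun i _ => ?_
        rw [enorm_smul, enorm_mul]
        exact le_of_eq (by ring)
    _ = ∑ i, ‖c i‖ₑ * ‖a i‖ₑ * ∫⁻ w, ‖mono P' w i‖ₑ ∂gam (GIdx d n) := by
        rw [lintegral_finsetSum _ (fun i _ => ((measurable_mono P' i).enorm).const_mul _)]
        refine Finset.sum_congr rfl fun i _ => ?_
        rw [lintegral_const_mul _ (measurable_mono P' i).enorm]
    _ < ⊤ := by
        refine ENNReal.sum_lt_top.2 fun i _ => ?_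
        exact ENNReal.mul_lt_top (ENNReal.mul_lt_top enorm_lt_top enorm_lt_top)
          (lintegral_mono_lt_top P' i)

lemma nrm_add_le (c c' : (Fin d → Fin n) → ℝ) :
    nrm a P' (c + c') ≤ nrm a P' c + nrm a P' c' := by
  unfold nrm
  rw [← lintegral_add_left (measurable_enorm_chaos a P' c)]
  refine lintegral_mono fun w => ?_
  simp only [Pi.add_apply, add_mul, add_smul, Finset.sum_add_distrib]
  exact enorm_add_le _ _

lemma nrm_smul (t : ℝ) (c : (Fin d → Fin n) → ℝ) : nrm a P' (t • c) = ‖t‖ₑ * nrm a P' c := by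
  unfold nrm
  rw [← lintegral_const_mul _ (measurable_enorm_chaos a P' c)]
  refine lintegral_congr fun w => ?_
  rw [← enorm_smul, Finset.smul_sum]
  simp only [Pi.smul_apply, smul_eq_mul, mul_assoc, mul_smul]

/-- `nrm` as a real-valued seminorm on coefficient arrays. -/
def rho : Seminorm ℝ ((Fin d → Fin n) → ℝ) :=
  Seminorm.of (fun c => (nrm a P' c).toReal)
    (fun c c' => by
      rw [← ENNReal.toReal_add (nrm_lt_top a P' c).ne (nrm_lt_top a P' c').ne]
      exact ENNReal.toReal_mono (ENNReal.add_lt_top.2 ⟨nrm_lt_top a P' c, nrm_lt_top a P' c'⟩).ne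
        (nrm_add_le a P' c c'))
    (fun t c => by rw [nrm_smul, ENNReal.toReal_mul]; simp)

lemma ofReal_rho (c : (Fin d → Fin n) → ℝ) : ENNReal.ofReal (rho a P' c) = nrm a P' c :=
  ENNReal.ofReal_toReal (nrm_lt_top a P' c).ne

lemma continuous_nrm : Continuous (nrm a P') := by
  have : nrm a P' = fun c => ENNReal.ofReal (rho a P' c) := funext fun c => (ofReal_rho a P' c).symm
  rw [this]
  exact ENNReal.continuous_ofReal.comp (seminorm_continuous _)

lemma nrm_sum_le {α : Type*} (s : Finset α) (t : α → ℝ) (c : α → (Fin d → Fin n) → ℝ) :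
    nrm a P' (∑ Q ∈ s, t Q • c Q) ≤ ∑ Q ∈ s, ‖t Q‖ₑ * nrm a P' (c Q) := by
  induction s using Finset.induction_on with
  | empty => simp [nrm]
  | insert Q s hQ ih =>
    rw [Finset.sum_insert hQ, Finset.sum_insert hQ, ← nrm_smul]
    exact (nrm_add_le _ _ _ _).trans (add_le_add le_rfl ih)

lemma nrm_merge {R : Finset (Finset (Fin d))} (h : Disjoint R P') (c : (Fin d → Fin n) → ℝ) :
    ∫⁻ w, nrm a P' (fun i => c i * mono R w i) ∂gam (GIdx d n) = nrm a (R ∪ P') c := by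
  unfold nrm
  rw [← lintegral_mono_merge h (fun f => ‖∑ i, (c i * f i) • a i‖ₑ)
    (Continuous.enorm (by fun_prop)).measurable]
  simp only [mul_assoc]

/-- Arrays on the blocks of `P`, each in the unit ball, extended by zero. -/
def Ball (P : Finset (Finset (Fin d))) : Set (GIdx d n → ℝ) :=
  {x | (∀ I ∈ P, ∑ v, x ⟨I, v⟩ ^ 2 ≤ 1) ∧ ∀ j, j.1 ∉ P → x j = 0}

lemma Ball_sq {P : Finset (Finset (Fin d))} {x : GIdx d n → ℝ} (hx : x ∈ Ball P) :
    ∑ j, x j ^ 2 ≤ (2 : ℝ) ^ d := by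
  rw [Fintype.sum_sigma]
  calc ∑ I : Finset (Fin d), ∑ v, x ⟨I, v⟩ ^ 2 ≤ ∑ I : Finset (Fin d), (1 : ℝ) := by
        refine Finset.sum_le_sum fun I _ => ?_
        by_cases hI : I ∈ P
        · exact hx.1 I hI
        · have : ∀ v, x ⟨I, v⟩ = 0 := fun v => hx.2 ⟨I, v⟩ hI
          simp [this]
    _ = _ := by simp

/-- The supremum over unit arrays on the blocks of `P` of the mean norm in the blocks of `P'`,
with the Gaussian blocks of `K` frozen. -/
def Zs (K P P' : Finset (Finset (Fin d))) (w : GIdx d n → ℝ) : ℝ≥0∞ :=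
  ⨆ x ∈ (Ball P : Set (GIdx d n → ℝ)), nrm a P' (fun i => mono K w i * mono P x i)

lemma measurable_sup_nrm (P P' : Finset (Finset (Fin d))) :
    Measurable (fun f : (Fin d → Fin n) → ℝ =>
      ⨆ x ∈ (Ball P : Set (GIdx d n → ℝ)), nrm a P' (fun i => f i * mono P x i)) := by
  refine LowerSemicontinuous.measurable (lowerSemicontinuous_biSup fun x _ => ?_)
  exact ((continuous_nrm a P').comp (by fun_prop)).lowerSemicontinuous

lemma measurable_Zs (K P P' : Finset (Finset (Fin d))) : Measurable (Zs (n := n) a K P P') :=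
  (measurable_sup_nrm a P P').comp (measurable_mono_pi K)

lemma le_Zs (K P P' : Finset (Finset (Fin d))) (w x : GIdx d n → ℝ)
    (hx : ∀ I ∈ P, ∑ v, x ⟨I, v⟩ ^ 2 ≤ 1) :
    nrm a P' (fun i => mono K w i * mono P x i) ≤ Zs a K P P' w := by
  have e : ∀ i, mono P x i = mono P (fun j => if j.1 ∈ P then x j else 0) i := fun i =>
    mono_congr (fun I hI v => by simp [hI]) i
  simp only [e]
  refine le_iSup₂ (f := fun (x : GIdx d n → ℝ) (_ : x ∈ Ball P) =>
    nrm a P' (fun i => mono K w i * mono P x i)) _ ?_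
  refine ⟨fun I hI => ?_, fun j hj => by simp [hj]⟩
  simpa [hI] using hx I hI

lemma mono_add (P : Finset (Finset (Fin d))) (x G : GIdx d n → ℝ) (t : ℝ) (i : Fin d → Fin n) :
    mono P (fun j => x j + t * G j) i
      = ∑ Q ∈ P.powerset, t ^ (P \ Q).card * (mono Q x i * mono (P \ Q) G i) := by
  unfold mono
  rw [Finset.prod_add]
  refine Finset.sum_congr rfl fun Q _ => ?_
  rw [Finset.prod_mul_distrib, Finset.prod_const]
  ring

/-- Duality for `HS`: its square root is attained by a unit array on the block `L`. -/
lemma exists_unit (L : Finset (Fin d)) (c : (Fin d → Fin n) → ℝ) :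
    ∃ z : GIdx d n → ℝ, ∑ j, z j ^ 2 ≤ 1 ∧ √(HS L c) = ∑ i, c i * z (pos L i) := by
  by_cases h0 : HS L c = 0
  · exact ⟨0, by simp, by simp [h0]⟩
  have hpos : 0 < HS L c := lt_of_le_of_ne (HS_nonneg L c) (Ne.symm h0)
  refine ⟨fun j => (∑ i, if pos L i = j then c i else 0) / √(HS L c), ?_, ?_⟩
  · simp only [div_pow, ← Finset.sum_div, ← HS_eq, Real.sq_sqrt hpos.le]
    exact (div_self h0).le
  · have e : ∑ i, c i * ((∑ i', if pos L i' = pos L i then c i' else 0) / √(HS L c))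
        = HS L c / √(HS L c) := by
      simp only [← mul_div_assoc, ← Finset.sum_div]
      congr 1
      unfold HS
      refine Finset.sum_congr rfl fun i _ => ?_
      rw [Finset.mul_sum]
      refine Finset.sum_congr rfl fun i' _ => ?_
      by_cases h : ∀ l ∈ L, i l = i' l
      · rw [if_pos h, if_pos (pos_eq_iff.2 h).symm]
      · rw [if_neg h, if_neg (fun h' => h (pos_eq_iff.1 h'.symm)), mul_zero]
    rw [e, Real.div_sqrt]

end
end LqChaos

/-! ### Removing one Gaussian block -/

namespace LqChaos
noncomputable section

variable {d n : ℕ} {F : Type*} [NormedAddCommGroup F] [NormedSpace ℝ F]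
  (a : (Fin d → Fin n) → F)

lemma sqrt_sum_sum_le {α κ : Type*} [Fintype κ] (s : Finset α) (t : α → ℝ) (b : α → κ → ℝ) :
    √(∑ j, (∑ Q ∈ s, t Q * b Q j) ^ 2) ≤ ∑ Q ∈ s, |t Q| * √(∑ j, b Q j ^ 2) := by
  have h := norm_sum_le s (fun Q => t Q • (WithLp.toLp 2 (b Q) : EuclideanSpace ℝ κ))
  simp only [norm_smul, EuclideanSpace.norm_eq, Real.norm_eq_abs, sq_abs] at h
  refine le_trans (le_of_eq ?_) h
  congr 1
  refine Finset.sum_congr rfl fun j _ => ?_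
  simp

/-- The value of the block process: the coefficient array of the Gaussian variable `g_j` of the
block `L`, with the blocks of `K` frozen at `w` and the blocks of `P` evaluated at `y`. -/
def proc (K P : Finset (Finset (Fin d))) (L : Finset (Fin d)) (w : GIdx d n → ℝ)
    (j : GIdx d n) (y : GIdx d n → ℝ) : (Fin d → Fin n) → ℝ :=
  fun i => if pos L i = j then mono K w i * mono P y i else 0

lemma continuous_proc (K P : Finset (Finset (Fin d))) (L : Finset (Fin d)) (w : GIdx d n → ℝ)
    (j : GIdx d n) : Continuous (proc K P L w j) := by
  refine continuous_pi fun i => ?_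
  unfold proc
  by_cases h : pos L i = j
  · simp only [h, if_true]; fun_prop
  · simp only [h, if_false]; fun_prop

lemma proc_affine (K P : Finset (Finset (Fin d))) (L : Finset (Fin d)) (w : GIdx d n → ℝ)
    (j : GIdx d n) (β : Finset (Fin d)) (y z : GIdx d n → ℝ) (hz : ∀ a, a.1 ≠ β → z a = 0) :
    proc K P L w j (fun a => y a + z a) + proc K P L w j (fun a => y a - z a)
      = (2 : ℝ) • proc K P L w j y := by
  funext i
  have h : mono P (fun a => y a + z a) i + mono P (fun a => y a - z a) i = 2 * mono P y i := by
    by_cases hβ : β ∈ P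
    · rw [← Finset.insert_erase hβ]
      simp only [mono_insert (Finset.notMem_erase β P)]
      have h1 : ∀ u : GIdx d n → ℝ, (∀ a, a.1 ≠ β → u a = y a) →
          mono (P.erase β) u i = mono (P.erase β) y i := fun u hu =>
        mono_congr (fun I hI v => hu ⟨I, v⟩ (Finset.ne_of_mem_erase hI)) i
      rw [h1 (fun a => y a + z a) (fun a ha => by simp [hz a ha]),
        h1 (fun a => y a - z a) (fun a ha => by simp [hz a ha])]
      ring
    · have h1 : ∀ I ∈ P, ∀ v, z ⟨I, v⟩ = 0 := fun I hI v =>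
        hz ⟨I, v⟩ (fun h => hβ (by rw [← h]; exact hI))
      rw [mono_congr (z := y) (fun I hI v => by simp [h1 I hI v]),
        mono_congr (y := fun a => y a - z a) (z := y) (fun I hI v => by simp [h1 I hI v])]
      ring
  simp only [Pi.add_apply, Pi.smul_apply, smul_eq_mul, proc]
  by_cases hj : pos L i = j
  · simp only [hj, if_true]; rw [← mul_add, h]; ring
  · simp [hj]

lemma sum_proc (K P : Finset (Finset (Fin d))) (L : Finset (Fin d)) (w g y : GIdx d n → ℝ) :
    ∑ j, g j • proc K P L w j y = fun i => (mono K w i * mono {L} g i) * mono P y i := by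
  funext i
  rw [Finset.sum_apply, Finset.sum_eq_single (pos L i)]
  · simp [proc, mono_singleton]; ring
  · intro j _ hj; simp [proc, hj.symm]
  · simp

lemma lin_eq (l : ((Fin d → Fin n) → ℝ) →ₗ[ℝ] ℝ) (c : (Fin d → Fin n) → ℝ) :
    l c = ∑ i, l (Pi.single i 1) * c i := by
  conv_lhs => rw [← Finset.univ_sum_single c]
  rw [map_sum]
  refine Finset.sum_congr rfl fun i _ => ?_
  have : (Pi.single i (c i) : (Fin d → Fin n) → ℝ) = c i • Pi.single i 1 := by
    rw [← Pi.single_smul]; simp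
  rw [this, map_smul, smul_eq_mul, mul_comm]

variable (K P P' : Finset (Finset (Fin d))) (L : Finset (Fin d)) (w : GIdx d n → ℝ)

/-- The mean of the process at a perturbed point. -/
lemma proc_mean (hL : L ∉ P') (hLP : L ∉ P) (hPP : Disjoint P P') {t : ℝ} (ht : 0 ≤ t)
    {x : GIdx d n → ℝ} (hx : x ∈ Ball P) :
    ∫⁻ G, meanN (rho a P') (proc K P L w) (fun j => x j + t * G j) ∂gam (GIdx d n)
      ≤ ∑ Q ∈ P.powerset, ENNReal.ofReal (t ^ (P \ Q).card)
          * Zs a K Q ((P \ Q) ∪ ({L} ∪ P')) w := by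
  simp only [meanN, ofReal_rho, sum_proc]
  have hexp : ∀ G g : GIdx d n → ℝ, (fun i => (mono K w i * mono {L} g i)
      * mono P (fun j => x j + t * G j) i) = ∑ Q ∈ P.powerset, t ^ (P \ Q).card •
        (fun i => ((mono K w i * mono Q x i) * mono (P \ Q) G i) * mono {L} g i) := by
    intro G g
    funext i
    rw [mono_add, Finset.mul_sum, Finset.sum_apply]
    refine Finset.sum_congr rfl fun Q _ => ?_
    simp only [Pi.smul_apply, smul_eq_mul]
    ring
  have hmeas : ∀ Q : Finset (Finset (Fin d)), ∀ G : GIdx d n → ℝ, Measurable (fun g : GIdx d n → ℝ =>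
      nrm a P' (fun i => ((mono K w i * mono Q x i) * mono (P \ Q) G i) * mono {L} g i)) := by
    intro Q G
    exact ((continuous_nrm a P').comp (by fun_prop)).measurable
  have hmeas2 : ∀ Q : Finset (Finset (Fin d)), Measurable (fun G : GIdx d n → ℝ =>
      nrm a ({L} ∪ P') (fun i => (mono K w i * mono Q x i) * mono (P \ Q) G i)) := by
    intro Q
    exact ((continuous_nrm a _).comp (by fun_prop)).measurable
  have hte : ∀ Q : Finset (Finset (Fin d)), ‖t ^ (P \ Q).card‖ₑ = ENNReal.ofReal (t ^ (P \ Q).card) :=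
    fun Q => Real.enorm_of_nonneg (by positivity)
  calc _ ≤ ∫⁻ G, ∫⁻ g, ∑ Q ∈ P.powerset, ENNReal.ofReal (t ^ (P \ Q).card) *
        nrm a P' (fun i => ((mono K w i * mono Q x i) * mono (P \ Q) G i) * mono {L} g i)
        ∂gam (GIdx d n) ∂gam (GIdx d n) := by
        refine lintegral_mono fun G => lintegral_mono fun g => ?_
        simp only
        rw [hexp]
        refine (nrm_sum_le _ _ _ _ _).trans (le_of_eq ?_)
        exact Finset.sum_congr rfl fun Q _ => by rw [hte]
    _ = ∑ Q ∈ P.powerset, ENNReal.ofReal (t ^ (P \ Q).card) *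
        nrm a ((P \ Q) ∪ ({L} ∪ P')) (fun i => mono K w i * mono Q x i) := by
        have h1 : ∀ G, ∫⁻ g, ∑ Q ∈ P.powerset, ENNReal.ofReal (t ^ (P \ Q).card) *
            nrm a P' (fun i => ((mono K w i * mono Q x i) * mono (P \ Q) G i) * mono {L} g i)
            ∂gam (GIdx d n) = ∑ Q ∈ P.powerset, ENNReal.ofReal (t ^ (P \ Q).card) *
            nrm a ({L} ∪ P') (fun i => (mono K w i * mono Q x i) * mono (P \ Q) G i) := by
          intro G
          rw [lintegral_finsetSum _ (fun Q _ => (hmeas Q G).const_mul _)]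
          refine Finset.sum_congr rfl fun Q _ => ?_
          rw [lintegral_const_mul _ (hmeas Q G), nrm_merge a P' (by simpa using hL)]
        simp only [h1]
        rw [lintegral_finsetSum _ (fun Q _ => (hmeas2 Q).const_mul _)]
        refine Finset.sum_congr rfl fun Q _ => ?_
        rw [lintegral_const_mul _ (hmeas2 Q), nrm_merge a _ ?_]
        rw [Finset.disjoint_union_right]
        refine ⟨?_, hPP.mono_left Finset.sdiff_subset⟩
        rw [Finset.disjoint_singleton_right]
        exact fun h => hLP (Finset.mem_sdiff.1 h).1
    _ ≤ _ := by
        refine Finset.sum_le_sum fun Q hQ => ?_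
        gcongr
        exact le_Zs a K Q _ w x fun I hI => hx.1 I (Finset.mem_powerset.1 hQ hI)

/-- The weak variance of the process at a perturbed point. -/
lemma proc_var (hLQ : ∀ Q ⊆ P, L ∪ (P \ Q).sup id ∉ Q) {t : ℝ} (ht : 0 ≤ t)
    {x : GIdx d n → ℝ} (hx : x ∈ Ball P) (l : Dom (rho a P')) :
    lp 2 (gam (GIdx d n)) (fun G => ENNReal.ofReal
        (√(∑ j, l.1 (proc K P L w j (fun j => x j + t * G j)) ^ 2)))
      ≤ ∑ Q ∈ P.powerset, ENNReal.ofReal (t ^ (P \ Q).card * (4 * √2) ^ (P \ Q).card)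
          * Zs a K (insert (L ∪ (P \ Q).sup id) Q) P' w := by
  set cQ : Finset (Finset (Fin d)) → (Fin d → Fin n) → ℝ := fun Q i =>
    l.1 (Pi.single i 1) * (mono K w i * mono Q x i) with hcQ
  have hexp : ∀ (G : GIdx d n → ℝ) (j : GIdx d n), l.1 (proc K P L w j (fun j => x j + t * G j))
      = ∑ Q ∈ P.powerset, t ^ (P \ Q).card * coef L (P \ Q) (cQ Q) G j := by
    intro G j
    rw [lin_eq]
    simp only [coef, Finset.mul_sum]
    rw [Finset.sum_comm]
    refine Finset.sum_congr rfl fun i _ => ?_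
    simp only [proc, hcQ]
    by_cases hj : pos L i = j
    · simp only [hj, if_true, mono_add, Finset.mul_sum]
      exact Finset.sum_congr rfl fun Q _ => by ring
    · simp [hj]
  have hcm : ∀ Q j, Measurable (fun G => coef L (P \ Q) (cQ Q) G j) := fun Q j =>
    measurable_coef L (P \ Q) (cQ Q) j
  have hm1 : ∀ Q, Measurable (fun G => ENNReal.ofReal (√(∑ j, coef L (P \ Q) (cQ Q) G j ^ 2))) := by
    intro Q
    have := hcm Q
    fun_prop
  calc _ ≤ lp 2 (gam (GIdx d n)) (fun G => ∑ Q ∈ P.powerset, ENNReal.ofReal (t ^ (P \ Q).card) *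
          ENNReal.ofReal (√(∑ j, coef L (P \ Q) (cQ Q) G j ^ 2))) := by
        refine lp_mono (by norm_num) fun G => ?_
        simp only [hexp]
        refine (ENNReal.ofReal_le_ofReal (sqrt_sum_sum_le _ _ _)).trans (le_of_eq ?_)
        rw [ENNReal.ofReal_sum_of_nonneg (fun _ _ => by positivity)]
        refine Finset.sum_congr rfl fun Q _ => ?_
        rw [abs_of_nonneg (by positivity), ENNReal.ofReal_mul (by positivity)]
    _ ≤ ∑ Q ∈ P.powerset, ENNReal.ofReal (t ^ (P \ Q).card) *
          lp 2 (gam (GIdx d n)) (fun G => ENNReal.ofReal (√(∑ j, coef L (P \ Q) (cQ Q) G j ^ 2))) := by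
        refine (lp_sum_le (by norm_num) _ _ fun Q => (hm1 Q).const_mul _).trans (le_of_eq ?_)
        exact Finset.sum_congr rfl fun Q _ => lp_const_mul (by norm_num) _ (hm1 Q)
    _ ≤ _ := by
        refine Finset.sum_le_sum fun Q hQ => ?_
        have hQP := Finset.mem_powerset.1 hQ
        rw [ENNReal.ofReal_mul (by positivity), mul_assoc]
        gcongr
        refine (coef_upper L (P \ Q) (cQ Q)).trans ?_
        rw [ENNReal.ofReal_mul (by positivity)]
        gcongr
        set L' := L ∪ (P \ Q).sup id with hL'
        obtain ⟨z, hz1, hz2⟩ := exists_unit L' (cQ Q)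
        set x' : GIdx d n → ℝ := fun j => if j.1 = L' then z j else x j with hx'
        have e1 : ∑ i, cQ Q i * z (pos L' i)
            = l.1 (fun i => mono K w i * mono (insert L' Q) x' i) := by
          rw [lin_eq]
          refine Finset.sum_congr rfl fun i _ => ?_
          rw [mono_insert (hLQ Q hQP)]
          have e2 : mono Q x' i = mono Q x i := mono_congr (fun I hI v => by
            have : I ≠ L' := fun h => hLQ Q hQP (by rw [← hL', ← h]; exact hI)
            simp [hx', this]) i
          have e3 : x' (pos L' i) = z (pos L' i) := by simp [hx', pos]
          rw [e2, e3, hcQ]; ring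
        rw [hz2, e1]
        refine (ENNReal.ofReal_le_ofReal (l.2 _)).trans ?_
        rw [ofReal_rho]
        refine le_Zs a K _ P' w x' fun I hI => ?_
        by_cases h : I = L'
        · subst h
          simp only [hx', if_true]
          refine le_trans ?_ hz1
          rw [Fintype.sum_sigma]
          exact Finset.single_le_sum (f := fun I => ∑ v, z ⟨I, v⟩ ^ 2)
            (fun _ _ => Finset.sum_nonneg fun _ _ => sq_nonneg _) (Finset.mem_univ _)
        · simp only [hx', h, if_false]
          exact hx.1 I (hQP ((Finset.mem_insert.1 hI).resolve_left h))

/-- The constant of `key` for the block process: at most `2 ^ d` blocks, and unit arrays on them. -/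
def stepC (d : ℕ) : ℝ := keyC (2 ^ d) (2 ^ d)

/-- One Gaussian block `L` is removed with the blocks of `K` frozen. The subset `Q` of `P` collects the
blocks that keep their unit arrays at the perturbed point. -/
lemma step_inner (hL : L ∉ P') (hLP : L ∉ P) (hPP : Disjoint P P')
    (hLQ : ∀ Q ⊆ P, L ∪ (P \ Q).sup id ∉ Q) {p : ℝ} (hp : 1 ≤ p) :
    lp p (gam (GIdx d n)) (fun g => ⨆ x ∈ (Ball P : Set (GIdx d n → ℝ)),
        nrm a P' (fun i => (mono K w i * mono {L} g i) * mono P x i))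
      ≤ ENNReal.ofReal (stepC d) *
        ((∑ Q ∈ P.powerset, ENNReal.ofReal ((√p)⁻¹ ^ (P \ Q).card)
          * Zs a K Q ((P \ Q) ∪ ({L} ∪ P')) w)
        + ENNReal.ofReal (√p) *
          ∑ Q ∈ P.powerset, ENNReal.ofReal ((√p)⁻¹ ^ (P \ Q).card * (4 * √2) ^ (P \ Q).card)
          * Zs a K (insert (L ∪ (P \ Q).sup id) Q) P' w) := by
  have h := key (rho a P') (proc K P L w) (Sigma.fst : GIdx d n → Finset (Fin d))
    (continuous_proc K P L w) (proc_affine K P L w) (R := 2 ^ d) hp (Ball P)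
    (fun x hx => Ball_sq hx)
    (fun x hx => proc_mean a K P P' L w hL hLP hPP (t := (√p)⁻¹) (by positivity) hx)
    (fun x hx l => proc_var a K P P' L w hLQ (t := (√p)⁻¹) (by positivity) hx l)
  simp only [ofReal_rho, sum_proc] at h
  have hc : Fintype.card (Finset (Fin d)) = 2 ^ d := by simp
  rw [hc] at h
  exact h

end
end LqChaos

/-! ### Upper bound in a normed space -/

namespace LqChaos
noncomputable section

variable {d n : ℕ} {F : Type*} [NormedAddCommGroup F] [NormedSpace ℝ F]
  (a : (Fin d → Fin n) → F)

/-- The families `K`, `P`, `P'` are disjoint and together form a partition of all coordinates. -/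
structure Tri (K P P' : Finset (Finset (Fin d))) : Prop where
  disj1 : Disjoint K P
  disj2 : Disjoint K P'
  disj3 : Disjoint P P'
  part : IsPartition Finset.univ (K ∪ P ∪ P')

namespace Tri
variable {K P P' : Finset (Finset (Fin d))} {L : Finset (Fin d)}

lemma eq_of_subset (h : Tri (insert L K) P P') {M : Finset (Fin d)}
    (hM : M ∈ insert L K ∪ P ∪ P') (hLM : L ⊆ M) : M = L := by
  by_contra hne
  have hL : L ∈ insert L K ∪ P ∪ P' := by simp
  have hd := h.part.2.1 L hL M hM (Ne.symm hne)
  obtain ⟨l, hl⟩ := h.part.1 L hL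
  exact Finset.disjoint_left.1 hd hl (hLM hl)

lemma notMem_P (h : Tri (insert L K) P P') : L ∉ P := fun h' =>
  Finset.disjoint_left.1 h.disj1 (Finset.mem_insert_self L K) h'

lemma notMem_P' (h : Tri (insert L K) P P') : L ∉ P' := fun h' =>
  Finset.disjoint_left.1 h.disj2 (Finset.mem_insert_self L K) h'

lemma notMem_Q (h : Tri (insert L K) P P') {Q : Finset (Finset (Fin d))} (hQ : Q ⊆ P) :
    L ∪ (P \ Q).sup id ∉ Q := by
  intro h'
  have := h.eq_of_subset (M := L ∪ (P \ Q).sup id)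
    (by simp only [Finset.mem_union]; exact Or.inl (Or.inr (hQ h'))) Finset.subset_union_left
  rw [this] at h'
  exact h.notMem_P (hQ h')

lemma mean (h : Tri (insert L K) P P') (hLK : L ∉ K) {Q : Finset (Finset (Fin d))} (hQ : Q ⊆ P) :
    Tri K Q ((P \ Q) ∪ ({L} ∪ P')) := by
  have h1 := h.disj1
  have h2 := h.disj2
  have hP := h.notMem_P
  have hP' := h.notMem_P'
  rw [Finset.disjoint_insert_left] at h1 h2
  refine ⟨h1.2.mono_right hQ, ?_, ?_, ?_⟩
  · simp only [Finset.disjoint_union_right, Finset.disjoint_singleton_right]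
    exact ⟨h1.2.mono_right Finset.sdiff_subset, hLK, h2.2⟩
  · simp only [Finset.disjoint_union_right, Finset.disjoint_singleton_right]
    exact ⟨Finset.disjoint_sdiff, fun h' => hP (hQ h'), h.disj3.mono_left hQ⟩
  · have : K ∪ Q ∪ ((P \ Q) ∪ ({L} ∪ P')) = insert L K ∪ P ∪ P' := by
      ext M
      simp only [Finset.mem_union, Finset.mem_sdiff, Finset.mem_singleton, Finset.mem_insert]
      have := @hQ M
      tauto
    rw [this]
    exact h.part

lemma var (h : Tri (insert L K) P P') (hLK : L ∉ K) {Q : Finset (Finset (Fin d))} (hQ : Q ⊆ P) :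
    Tri K (insert (L ∪ (P \ Q).sup id) Q) P' := by
  have h1 := h.disj1
  have h2 := h.disj2
  rw [Finset.disjoint_insert_left] at h1 h2
  set L' := L ∪ (P \ Q).sup id with hL'
  have hsub : L ⊆ L' := Finset.subset_union_left
  have nK : L' ∉ K := by
    intro h'
    rw [h.eq_of_subset (M := L') (by simp [h']) hsub] at h'
    exact hLK h'
  have nP' : L' ∉ P' := by
    intro h'
    rw [h.eq_of_subset (M := L') (by simp [h']) hsub] at h'
    exact h.notMem_P' h'
  have hother : ∀ I, (I ∈ K ∨ I ∈ Q ∨ I ∈ P') → Disjoint L' I := by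
    intro I hI
    have hIm : I ∈ insert L K ∪ P ∪ P' := by
      simp only [Finset.mem_union, Finset.mem_insert]
      have := @hQ I
      tauto
    rw [hL', Finset.disjoint_union_left]
    constructor
    · refine h.part.2.1 L (by simp) I hIm ?_
      rintro rfl
      rcases hI with hI | hI | hI
      · exact hLK hI
      · exact h.notMem_P (hQ hI)
      · exact h.notMem_P' hI
    · rw [Finset.disjoint_sup_left]
      intro M hM
      rw [Finset.mem_sdiff] at hM
      refine h.part.2.1 M (by simp [hM.1]) I hIm ?_
      rintro rfl
      rcases hI with hI | hI | hI
      · exact Finset.disjoint_left.1 h1.2 hI hM.1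
      · exact hM.2 hI
      · exact Finset.disjoint_left.1 h.disj3 hM.1 hI
  refine ⟨?_, h2.2, ?_, ?_, ?_, ?_⟩
  · rw [Finset.disjoint_insert_right]; exact ⟨nK, h1.2.mono_right hQ⟩
  · rw [Finset.disjoint_insert_left]; exact ⟨nP', h.disj3.mono_left hQ⟩
  · intro I hI
    simp only [Finset.mem_union, Finset.mem_insert] at hI
    by_cases hIL : I = L'
    · subst hIL
      exact (h.part.1 L (by simp)).mono hsub
    · refine h.part.1 I ?_
      simp only [Finset.mem_union, Finset.mem_insert]
      have := @hQ I
      tauto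
  · intro I hI I' hI' hne
    simp only [Finset.mem_union, Finset.mem_insert] at hI hI'
    by_cases hIL : I = L'
    · rw [hIL] at hne ⊢
      exact hother I' (by have := Ne.symm hne; tauto)
    · by_cases hIL' : I' = L'
      · rw [hIL']
        exact (hother I (by tauto)).symm
      · refine h.part.2.1 I ?_ I' ?_ hne <;>
        · simp only [Finset.mem_union, Finset.mem_insert]
          have := @hQ I
          have := @hQ I'
          tauto
  · rw [Finset.eq_univ_iff_forall]
    intro l
    have hl : l ∈ (insert L K ∪ P ∪ P').sup id := by rw [h.part.2.2]; simp
    obtain ⟨I, hI, hlI⟩ := Finset.mem_sup.1 hl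
    simp only [Finset.mem_union, Finset.mem_insert, id_eq] at hI hlI
    by_cases hIL : I = L ∨ I ∈ P \ Q
    · refine Finset.mem_sup.2 ⟨L', by simp, ?_⟩
      rcases hIL with rfl | hIL
      · exact hsub hlI
      · exact Finset.mem_union_right _ (Finset.mem_sup.2 ⟨I, hIL, hlI⟩)
    · refine Finset.mem_sup.2 ⟨I, ?_, hlI⟩
      simp only [Finset.mem_union, Finset.mem_insert]
      rw [Finset.mem_sdiff] at hIL
      tauto

end Tri

variable (K P P' : Finset (Finset (Fin d))) (L : Finset (Fin d))

/-- `step_inner` averaged over the frozen blocks. -/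
lemma T_step (hLK : L ∉ K) (hT : Tri (insert L K) P P') {p : ℝ} (hp : 1 ≤ p) :
    lp p (gam (GIdx d n)) (Zs a (insert L K) P P')
      ≤ ENNReal.ofReal (stepC d) *
        ((∑ Q ∈ P.powerset, ENNReal.ofReal ((√p)⁻¹ ^ (P \ Q).card)
          * lp p (gam (GIdx d n)) (Zs a K Q ((P \ Q) ∪ ({L} ∪ P'))))
        + ENNReal.ofReal (√p) *
          ∑ Q ∈ P.powerset, ENNReal.ofReal ((√p)⁻¹ ^ (P \ Q).card * (4 * √2) ^ (P \ Q).card)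
          * lp p (gam (GIdx d n)) (Zs a K (insert (L ∪ (P \ Q).sup id) Q) P')) := by
  have hp0 : 0 < p := by linarith
  have hmz := fun K P P' => measurable_Zs (n := n) a K P P'
  have hs1 : Measurable (fun w : GIdx d n → ℝ => ∑ Q ∈ P.powerset,
      ENNReal.ofReal ((√p)⁻¹ ^ (P \ Q).card) * Zs a K Q ((P \ Q) ∪ ({L} ∪ P')) w) :=
    Finset.measurable_sum _ fun Q _ => (hmz _ _ _).const_mul _
  have hs2 : Measurable (fun w : GIdx d n → ℝ => ∑ Q ∈ P.powerset,
      ENNReal.ofReal ((√p)⁻¹ ^ (P \ Q).card * (4 * √2) ^ (P \ Q).card) *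
        Zs a K (insert (L ∪ (P \ Q).sup id) Q) P' w) :=
    Finset.measurable_sum _ fun Q _ => (hmz _ _ _).const_mul _
  have h1 : lp p (gam (GIdx d n)) (Zs a (insert L K) P P') ≤
      lp p (gam (GIdx d n)) (fun w => ENNReal.ofReal (stepC d) *
        ((∑ Q ∈ P.powerset, ENNReal.ofReal ((√p)⁻¹ ^ (P \ Q).card)
          * Zs a K Q ((P \ Q) ∪ ({L} ∪ P')) w)
        + ENNReal.ofReal (√p) *
          ∑ Q ∈ P.powerset, ENNReal.ofReal ((√p)⁻¹ ^ (P \ Q).card * (4 * √2) ^ (P \ Q).card)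
          * Zs a K (insert (L ∪ (P \ Q).sup id) Q) P' w)) := by
    unfold lp
    gcongr ?_ ^ _
    have e := lintegral_mono_merge (n := n) (R := K) (R' := {L}) (by simpa using hLK)
      (fun f => (⨆ x ∈ (Ball P : Set (GIdx d n → ℝ)), nrm a P' (fun i => f i * mono P x i)) ^ p)
      ((measurable_sup_nrm a P P').pow_const p)
    have e' : insert L K = K ∪ {L} := by rw [Finset.union_comm]; rfl
    rw [e']
    unfold Zs at e ⊢
    rw [← e]
    refine lintegral_mono fun w => ?_
    exact (lp_le_iff hp0).1 (step_inner a K P P' L w hT.notMem_P' hT.notMem_P hT.disj3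
      (fun Q hQ => hT.notMem_Q hQ) hp)
  refine h1.trans ?_
  have hs3 : Measurable (fun w : GIdx d n → ℝ =>
      (∑ Q ∈ P.powerset, ENNReal.ofReal ((√p)⁻¹ ^ (P \ Q).card)
          * Zs a K Q ((P \ Q) ∪ ({L} ∪ P')) w)
        + ENNReal.ofReal (√p) *
          ∑ Q ∈ P.powerset, ENNReal.ofReal ((√p)⁻¹ ^ (P \ Q).card * (4 * √2) ^ (P \ Q).card)
          * Zs a K (insert (L ∪ (P \ Q).sup id) Q) P' w) := hs1.add (hs2.const_mul _)
  rw [lp_const_mul hp0 _ hs3]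
  gcongr
  refine (lp_add_le hp hs1 (hs2.const_mul _)).trans ?_
  rw [lp_const_mul hp0 _ hs2]
  gcongr
  · refine (lp_sum_le hp _ _ fun Q => (hmz _ _ _).const_mul _).trans (le_of_eq ?_)
    exact Finset.sum_congr rfl fun Q _ => lp_const_mul hp0 _ (hmz _ _ _)
  · refine (lp_sum_le hp _ _ fun Q => (hmz _ _ _).const_mul _).trans (le_of_eq ?_)
    exact Finset.sum_congr rfl fun Q _ => lp_const_mul hp0 _ (hmz _ _ _)

/-- The factor lost when one Gaussian block is removed. -/
def boundC (d : ℕ) : ℝ := stepC d * (2 ^ (2 ^ d) * (1 + (4 * √2) ^ (2 ^ d)))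

lemma stepC_nonneg (d : ℕ) : 0 ≤ stepC d := by unfold stepC keyC; positivity

/-- After weighting by `√p ^ |P|`, removing one Gaussian block costs only a constant. -/
lemma bound_step (hLK : L ∉ K) {p : ℝ} (hp : 1 ≤ p) {D : ℝ≥0∞}
    (hD : ∀ P P', Tri K P P' →
      ENNReal.ofReal (√p) ^ P.card * lp p (gam (GIdx d n)) (Zs a K P P') ≤ D)
    (hT : Tri (insert L K) P P') :
    ENNReal.ofReal (√p) ^ P.card * lp p (gam (GIdx d n)) (Zs a (insert L K) P P')
      ≤ ENNReal.ofReal (boundC d) * D := by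
  have hs : 0 < √p := Real.sqrt_pos.2 (by linarith)
  set S := ENNReal.ofReal (√p) with hS
  have hSt : ∀ k : ℕ, S ^ k * ENNReal.ofReal ((√p)⁻¹ ^ k) = 1 := by
    intro k
    rw [hS, ← ENNReal.ofReal_pow hs.le, ← ENNReal.ofReal_mul (by positivity), ← mul_pow,
      mul_inv_cancel₀ hs.ne']
    simp
  have hcard : ∀ R : Finset (Finset (Fin d)), R.card ≤ 2 ^ d := fun R => by
    simpa using Finset.card_le_univ R
  have h42 : (1 : ℝ) ≤ 4 * √2 := by
    have : (1 : ℝ) ≤ √2 := Real.one_le_sqrt.2 (by norm_num)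
    linarith
  have hpc : ∀ Q ∈ P.powerset, S ^ P.card = S ^ Q.card * S ^ (P \ Q).card := by
    intro Q hQ
    rw [← pow_add, Finset.card_sdiff_of_subset (Finset.mem_powerset.1 hQ),
      Nat.add_sub_cancel' (Finset.card_le_card (Finset.mem_powerset.1 hQ))]
  have hN : (P.powerset.card : ℝ≥0∞) ≤ ENNReal.ofReal (2 ^ (2 ^ d)) := by
    rw [Finset.card_powerset, ENNReal.ofReal_pow (by norm_num)]
    push_cast
    rw [ENNReal.ofReal_ofNat]
    exact pow_le_pow_right₀ (by norm_num) (hcard P)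
  refine (mul_le_mul_right (T_step a K P P' L hLK hT hp) _).trans ?_
  have hA : S ^ P.card * ∑ Q ∈ P.powerset, ENNReal.ofReal ((√p)⁻¹ ^ (P \ Q).card)
          * lp p (gam (GIdx d n)) (Zs a K Q ((P \ Q) ∪ ({L} ∪ P')))
        ≤ ENNReal.ofReal (2 ^ (2 ^ d)) * D := by
    rw [Finset.mul_sum]
    refine (Finset.sum_le_card_nsmul _ _ D fun Q hQ => ?_).trans ?_
    · rw [hpc Q hQ, mul_assoc, ← mul_assoc (S ^ (P \ Q).card), hSt, one_mul]
      exact hD _ _ (hT.mean hLK (Finset.mem_powerset.1 hQ))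
    · rw [nsmul_eq_mul]; gcongr
  have hB : S ^ P.card * (S * ∑ Q ∈ P.powerset,
          ENNReal.ofReal ((√p)⁻¹ ^ (P \ Q).card * (4 * √2) ^ (P \ Q).card)
          * lp p (gam (GIdx d n)) (Zs a K (insert (L ∪ (P \ Q).sup id) Q) P'))
        ≤ ENNReal.ofReal (2 ^ (2 ^ d)) * (ENNReal.ofReal ((4 * √2) ^ (2 ^ d)) * D) := by
    rw [Finset.mul_sum, Finset.mul_sum]
    refine (Finset.sum_le_card_nsmul _ _ (ENNReal.ofReal ((4 * √2) ^ (2 ^ d)) * D)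
      fun Q hQ => ?_).trans ?_
    · have hQ' := Finset.mem_powerset.1 hQ
      have h1 := hD _ _ (hT.var hLK hQ')
      rw [Finset.card_insert_of_notMem (hT.notMem_Q hQ')] at h1
      rw [hpc Q hQ, ENNReal.ofReal_mul (by positivity)]
      set TT := lp p (gam (GIdx d n)) (Zs a K (insert (L ∪ (P \ Q).sup id) Q) P')
      calc _ = (S ^ (P \ Q).card * ENNReal.ofReal ((√p)⁻¹ ^ (P \ Q).card)) *
            (ENNReal.ofReal ((4 * √2) ^ (P \ Q).card) * (S ^ (Q.card + 1) * TT)) := by ring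
        _ ≤ _ := by
            rw [hSt, one_mul]
            gcongr
            exact hcard _
    · rw [nsmul_eq_mul]; gcongr
  calc _ = ENNReal.ofReal (stepC d) * (S ^ P.card * (∑ Q ∈ P.powerset,
          ENNReal.ofReal ((√p)⁻¹ ^ (P \ Q).card)
          * lp p (gam (GIdx d n)) (Zs a K Q ((P \ Q) ∪ ({L} ∪ P')))) + S ^ P.card * (S *
          ∑ Q ∈ P.powerset, ENNReal.ofReal ((√p)⁻¹ ^ (P \ Q).card * (4 * √2) ^ (P \ Q).card)
          * lp p (gam (GIdx d n)) (Zs a K (insert (L ∪ (P \ Q).sup id) Q) P'))) := by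
        ring
    _ ≤ ENNReal.ofReal (stepC d) * (ENNReal.ofReal (2 ^ (2 ^ d)) * D +
          ENNReal.ofReal (2 ^ (2 ^ d)) * (ENNReal.ofReal ((4 * √2) ^ (2 ^ d)) * D)) := by
        gcongr
    _ = _ := by
        unfold boundC
        rw [ENNReal.ofReal_mul (stepC_nonneg d), ENNReal.ofReal_mul (by positivity),
          ENNReal.ofReal_add (by norm_num) (by positivity), ENNReal.ofReal_one]
        ring

/-- All Gaussian blocks subject to the `p`-th moment are removed by iterating `bound_step`. -/
lemma bound_all {p : ℝ} (hp : 1 ≤ p) {D : ℝ≥0∞}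
    (hD : ∀ P P' : Finset (Finset (Fin d)), Tri ∅ P P' → ∀ x ∈ (Ball P : Set (GIdx d n → ℝ)),
      ENNReal.ofReal (√p) ^ P.card * nrm a P' (fun i => mono P x i) ≤ D)
    (hT : Tri K P P') :
    ENNReal.ofReal (√p) ^ P.card * lp p (gam (GIdx d n)) (Zs a K P P')
      ≤ ENNReal.ofReal (boundC d) ^ K.card * D := by
  induction K using Finset.induction_on generalizing P P' with
  | empty =>
    have : Zs (n := n) a ∅ P P' = fun _ => ⨆ x ∈ (Ball P : Set (GIdx d n → ℝ)),
        nrm a P' (fun i => mono P x i) := by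
      funext w; simp [Zs, mono_empty]
    rw [this, lp_const (by linarith)]
    simp only [Finset.card_empty, pow_zero, one_mul, ENNReal.mul_iSup]
    exact iSup₂_le fun x hx => hD P P' hT x hx
  | insert L K hLK ih =>
    rw [Finset.card_insert_of_notMem hLK, pow_succ', mul_assoc]
    exact bound_step a K P P' L hLK hp (fun P P' h => ih P P' h) hT

/-- The family of singletons contained in `J`. -/
def sing (J : Finset (Fin d)) : Finset (Finset (Fin d)) := J.image fun l => ({l} : Finset (Fin d))

/-- Upper bound for the moments of the chaos in all singleton blocks, in an arbitrary normed
space, by the mixed quantities in which no random block carries a supremum. -/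
lemma banach_upper {p : ℝ} (hp : 1 ≤ p) {D : ℝ≥0∞}
    (hD : ∀ P P' : Finset (Finset (Fin d)), Tri ∅ P P' → ∀ x ∈ (Ball P : Set (GIdx d n → ℝ)),
      ENNReal.ofReal (√p) ^ P.card * nrm a P' (fun i => mono P x i) ≤ D) :
    lp p (gam (GIdx d n)) (fun w => ‖∑ i, mono (sing Finset.univ) w i • a i‖ₑ)
      ≤ ENNReal.ofReal (boundC d) ^ d * D := by
  have hT : Tri (sing (Finset.univ : Finset (Fin d))) ∅ ∅ := by
    refine ⟨by simp, by simp, by simp, ?_, ?_, ?_⟩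
    · intro I hI
      simp only [sing, Finset.union_empty, Finset.mem_image] at hI
      obtain ⟨l, _, rfl⟩ := hI
      simp
    · intro I hI I' hI' hne
      simp only [sing, Finset.union_empty, Finset.mem_image] at hI hI'
      obtain ⟨l, _, rfl⟩ := hI
      obtain ⟨l', _, rfl⟩ := hI'
      simp only [Finset.disjoint_singleton]
      rintro rfl
      exact hne rfl
    · rw [Finset.eq_univ_iff_forall]
      intro l
      exact Finset.mem_sup.2 ⟨{l}, by simp [sing], by simp⟩
  have h := bound_all a (sing Finset.univ) ∅ ∅ hp hD hT
  have hc : (sing (Finset.univ : Finset (Fin d))).card = d := by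
    unfold sing
    rw [Finset.card_image_of_injective _ Finset.singleton_injective]
    simp
  rw [hc, Finset.card_empty, pow_zero, one_mul] at h
  refine le_trans (lp_mono (by linarith) fun w => ?_) h
  refine le_trans ?_ (le_Zs a _ ∅ ∅ w 0 (by simp))
  simp [nrm, mono_empty]

end
end LqChaos

/-! ### Chaoses with values in `L_q` -/

namespace LqChaos
noncomputable section

section minkowski
variable {X W : Type*} [MeasurableSpace X] [MeasurableSpace W] {ν : Measure X} {γ : Measure W}

/-- Minkowski's integral inequality, for a minorant `h` of the inner integral whose `L_q` norm
is finite. -/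
lemma minkowski [SFinite ν] [SFinite γ] {q : ℝ} (hq : 1 ≤ q) {h : X → ℝ≥0∞} {f : X → W → ℝ≥0∞}
    (hh : Measurable h) (hf : Measurable (Function.uncurry f))
    (hfin : lp q ν h ≠ ⊤) (hle : ∀ t, h t ≤ ∫⁻ w, f t w ∂γ) :
    lp q ν h ≤ ∫⁻ w, lp q ν (fun t => f t w) ∂γ := by
  have hq0 : 0 < q := by linarith
  have hft : ∀ t, Measurable (f t) := fun t => hf.comp measurable_prodMk_left
  have hfw : ∀ w, Measurable fun t => f t w := fun w => hf.comp measurable_prodMk_right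
  rcases hq.eq_or_lt with rfl | h1
  · simp only [lp_one]
    rw [← lintegral_lintegral_swap hf.aemeasurable]
    exact lintegral_mono hle
  have hsplit : ∀ a : ℝ≥0∞, a ^ q = a * a ^ (q - 1) := fun a => by
    conv_lhs => rw [show q = 1 + (q - 1) by ring]
    rw [ENNReal.rpow_add_of_nonneg _ _ (by norm_num) (by linarith), ENNReal.rpow_one]
  by_cases h0 : lp q ν h = 0
  · simp [h0]
  have hc : q.HolderConjugate (q / (q - 1)) := by
    rw [← Real.conjExponent]; exact Real.HolderConjugate.conjExponent h1
  have key : lp q ν h ^ q ≤ (∫⁻ w, lp q ν (fun t => f t w) ∂γ) * lp q ν h ^ (q - 1) := by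
    rw [lp_rpow hq0]
    calc ∫⁻ t, h t ^ q ∂ν ≤ ∫⁻ t, ∫⁻ w, f t w * h t ^ (q - 1) ∂γ ∂ν := by
          refine lintegral_mono fun t => ?_
          rw [lintegral_mul_const _ (hft t)]
          rw [hsplit]
          gcongr
          exact hle t
      _ = ∫⁻ w, ∫⁻ t, f t w * h t ^ (q - 1) ∂ν ∂γ := by
          refine lintegral_lintegral_swap (Measurable.aemeasurable ?_)
          exact hf.mul ((hh.comp measurable_fst).pow_const _)
      _ ≤ ∫⁻ w, lp q ν (fun t => f t w) * lp q ν h ^ (q - 1) ∂γ := by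
          refine lintegral_mono fun w => ?_
          refine (ENNReal.lintegral_mul_rpow_le_lintegral_rpow_mul_lintegral_rpow hc
            (hfw w).aemeasurable hh.aemeasurable).trans (le_of_eq ?_)
          unfold lp
          rw [← ENNReal.rpow_mul]
          congr 2
          field_simp
      _ = _ := by
          rw [lintegral_mul_const]
          have : Measurable fun p : W × X => f p.2 p.1 ^ q := (hf.comp measurable_swap).pow_const q
          exact (this.lintegral_prod_right').pow_const _
  rw [hsplit] at key
  refine (ENNReal.mul_le_mul_iff_left ?_ ?_).1 key
  · simp [h0, hfin]
  · exact ENNReal.rpow_ne_top_of_nonneg (by linarith) hfin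

end minkowski

variable {d n : ℕ} {X : Type*} [MeasurableSpace X]

lemma measurable_HS {W : Type*} [MeasurableSpace W] (L : Finset (Fin d))
    {f : (Fin d → Fin n) → W → ℝ} (hf : ∀ i, Measurable (f i)) :
    Measurable fun t => HS L fun i => f i t := by
  unfold HS
  refine Finset.measurable_sum _ fun i _ => Finset.measurable_sum _ fun i' _ => ?_
  split_ifs <;> fun_prop

lemma sqrt_HS_le (L : Finset (Fin d)) (c : (Fin d → Fin n) → ℝ) : √(HS L c) ≤ ∑ i, |c i| := by
  refine Real.sqrt_le_iff.2 ⟨by positivity, ?_⟩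
  rw [sq, Finset.sum_mul_sum]
  unfold HS
  refine Finset.sum_le_sum fun i _ => Finset.sum_le_sum fun i' _ => ?_
  split_ifs
  · rw [← abs_mul]; exact le_abs_self _
  · positivity

lemma measurable_scalar_chaos (R : Finset (Finset (Fin d))) {f : (Fin d → Fin n) → X → ℝ}
    (hf : ∀ i, Measurable (f i)) :
    Measurable (Function.uncurry fun (t : X) (w : GIdx d n → ℝ) =>
      ENNReal.ofReal |∑ i, f i t * mono R w i|) := by
  unfold Function.uncurry
  simp only
  have : ∀ i, Measurable fun p : X × (GIdx d n → ℝ) => f i p.1 := fun i =>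
    (hf i).comp measurable_fst
  have h2 : ∀ i, Measurable fun p : X × (GIdx d n → ℝ) => mono R p.2 i := fun i =>
    (measurable_mono R i).comp measurable_snd
  fun_prop

/-- The mean `L_q` norm of a chaos is controlled by that of its square function: Jensen, Fubini, and
the scalar upper bound at each point. -/
lemma base_upper {ν : Measure X} [SFinite ν] {q : ℝ} (hq : 1 ≤ q) (R : Finset (Finset (Fin d)))
    {f : (Fin d → Fin n) → X → ℝ} (hf : ∀ i, Measurable (f i)) :
    ∫⁻ w, lp q ν (fun t => ENNReal.ofReal |∑ i, f i t * mono R w i|) ∂gam (GIdx d n)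
      ≤ ENNReal.ofReal ((4 * √(max q 2)) ^ R.card) *
        lp q ν (fun t => ENNReal.ofReal (√(HS (R.sup id) fun i => f i t))) := by
  have hq0 : 0 < q := by linarith
  have hm := measurable_scalar_chaos R hf
  have hm' : Measurable (Function.uncurry fun (w : GIdx d n → ℝ) (t : X) =>
      ENNReal.ofReal |∑ i, f i t * mono R w i| ^ q) := (hm.comp measurable_swap).pow_const q
  have hHS := measurable_HS (R.sup id) hf
  refine (lintegral_le_lp hq ?_).trans ?_
  · exact (hm'.lintegral_prod_right').pow_const _
  rw [← lp_const_mul hq0 _ (by fun_prop), lp_le_iff hq0]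
  simp only [lp_rpow hq0]
  rw [lintegral_lintegral_swap hm'.aemeasurable]
  refine lintegral_mono fun t => ?_
  rw [← lp_le_iff hq0]
  refine (lp_mono_exp hq0 (le_max_left q 2) (by fun_prop)).trans ?_
  refine (chaos_upper (le_max_right q 2) R _).trans_eq ?_
  rw [ENNReal.ofReal_mul (by positivity)]

/-- The mean `L_q` norm of a chaos dominates that of its square function: Minkowski, and the scalar
first moment bound at each point. -/
lemma base_lower {ν : Measure X} [SFinite ν] {q : ℝ} (hq : 1 ≤ q) (R : Finset (Finset (Fin d)))
    {f : (Fin d → Fin n) → X → ℝ} (hf : ∀ i, Measurable (f i))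
    (hfin : lp q ν (fun t => ENNReal.ofReal (√(HS (R.sup id) fun i => f i t))) ≠ ⊤) :
    ENNReal.ofReal ((1 / 27) ^ R.card) *
        lp q ν (fun t => ENNReal.ofReal (√(HS (R.sup id) fun i => f i t)))
      ≤ ∫⁻ w, lp q ν (fun t => ENNReal.ofReal |∑ i, f i t * mono R w i|) ∂gam (GIdx d n) := by
  have hq0 : 0 < q := by linarith
  have hHS := measurable_HS (R.sup id) hf
  rw [← lp_const_mul hq0 _ (by fun_prop)]
  refine minkowski hq (by fun_prop) (measurable_scalar_chaos R hf) ?_ fun t => ?_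
  · rw [lp_const_mul hq0 _ (by fun_prop)]
    exact ENNReal.mul_ne_top ENNReal.ofReal_ne_top hfin
  · rw [← ENNReal.ofReal_mul (by positivity)]
    exact chaos_lower_one R _

lemma lp_restrict {μ : Measure X} {q : ℝ} (hq : 0 < q) {S : Set X} (hS : MeasurableSet S)
    {h : X → ℝ≥0∞} (h0 : ∀ t ∉ S, h t = 0) : lp q (μ.restrict S) h = lp q μ h := by
  unfold lp
  rw [← lintegral_indicator hS]
  congr 2
  funext t
  by_cases ht : t ∈ S
  · simp [ht]
  · simp [ht, h0 t ht, hq]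

variable {μ : Measure X} {q : ℝ} [hF : Fact ((1 : ℝ≥0∞) ≤ ENNReal.ofReal q)]
  (A : (Fin d → Fin n) → Lp ℝ (ENNReal.ofReal q) μ)

/-- Finitely many elements of `L_q` vanish off a set on which the measure is σ-finite. -/
lemma exists_sigmaFinite_support (hq : 1 ≤ q) :
    ∃ S : Set X, MeasurableSet S ∧ SigmaFinite (μ.restrict S) ∧ ∀ i, ∀ t ∉ S, A i t = 0 := by
  have hm : MemLp (fun t => ∑ i, ‖A i t‖) (ENNReal.ofReal q) μ :=
    memLp_finset_sum _ fun i _ => (Lp.memLp (A i)).norm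
  have hs : StronglyMeasurable (fun t => ∑ i, ‖A i t‖) :=
    Finset.stronglyMeasurable_fun_sum _ fun i _ => (Lp.stronglyMeasurable (A i)).norm
  obtain ⟨S, hS, h0, hσ⟩ := (hm.finStronglyMeasurable_of_stronglyMeasurable hs
    (by simp; linarith) ENNReal.ofReal_ne_top).exists_set_sigmaFinite
  refine ⟨S, hS, hσ, fun i t ht => ?_⟩
  have := (Finset.sum_eq_zero_iff_of_nonneg (fun i _ => norm_nonneg (A i t))).1 (h0 t ht) i
    (Finset.mem_univ i)
  simpa using this

lemma measurable_A (i) : Measurable (A i : X → ℝ) := (Lp.stronglyMeasurable (A i)).measurable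

lemma enorm_Lp (hq : 1 ≤ q) (a : Lp ℝ (ENNReal.ofReal q) μ) :
    ‖a‖ₑ = lp q μ (fun t => ENNReal.ofReal |a t|) := by
  rw [Lp.enorm_def, eLpNorm_eq_lintegral_rpow_enorm_toReal (by simp; linarith) ENNReal.ofReal_ne_top,
    ENNReal.toReal_ofReal (by linarith)]
  simp only [lp, Real.enorm_eq_ofReal_abs]

lemma coeFn_comb (c : (Fin d → Fin n) → ℝ) (s : Finset (Fin d → Fin n)) :
    ((∑ i ∈ s, c i • A i : Lp ℝ (ENNReal.ofReal q) μ) : X → ℝ) =ᵐ[μ]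
      fun t => ∑ i ∈ s, c i * A i t := by
  induction s using Finset.induction_on with
  | empty =>
    simp only [Finset.sum_empty]
    exact Lp.coeFn_zero ℝ (ENNReal.ofReal q) μ
  | insert i s hi ih =>
    rw [Finset.sum_insert hi]
    filter_upwards [ih, Lp.coeFn_add (c i • A i) (∑ i ∈ s, c i • A i), Lp.coeFn_smul (c i) (A i)]
      with t h1 h2 h3
    rw [h2, Pi.add_apply, h1, h3, Finset.sum_insert hi]
    rfl

lemma enorm_comb (hq : 1 ≤ q) (c : (Fin d → Fin n) → ℝ) :
    ‖∑ i, c i • A i‖ₑ = lp q μ (fun t => ENNReal.ofReal |∑ i, c i * A i t|) := by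
  rw [enorm_Lp hq]
  unfold lp
  congr 1
  refine lintegral_congr_ae ?_
  filter_upwards [coeFn_comb A c Finset.univ] with t ht
  rw [ht]

/-- The `L_q` norm of the square function `(∑_{i_L} (∑ c_i a_i)²)^{1/2}`, the inner sum running
over the coordinates outside `L`. -/
def hsn (L : Finset (Fin d)) (c : (Fin d → Fin n) → ℝ) : ℝ≥0∞ :=
  lp q μ (fun t => ENNReal.ofReal (√(HS L fun i => c i * A i t)))

lemma hsn_le (hq : 1 ≤ q) (L : Finset (Fin d)) (c : (Fin d → Fin n) → ℝ) (hc : ∀ i, |c i| ≤ 1) :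
    hsn A L c ≤ ∑ i, ‖A i‖ₑ := by
  have hA := measurable_A A
  unfold hsn
  calc _ ≤ lp q μ (fun t => ∑ i, ENNReal.ofReal |A i t|) := by
        refine lp_mono (by linarith) fun t => ?_
        rw [← ENNReal.ofReal_sum_of_nonneg (fun _ _ => abs_nonneg _)]
        refine ENNReal.ofReal_le_ofReal ((sqrt_HS_le L _).trans ?_)
        refine Finset.sum_le_sum fun i _ => ?_
        rw [abs_mul]
        exact mul_le_of_le_one_left (abs_nonneg _) (hc i)
    _ ≤ ∑ i, lp q μ (fun t => ENNReal.ofReal |A i t|) := by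
        have hm : ∀ i, Measurable fun t => ENNReal.ofReal |A i t| := fun i => by
          have := hA i
          fun_prop
        exact lp_sum_le hq _ _ hm
    _ = _ := by simp only [enorm_Lp hq]

lemma nrm_eq (hq : 1 ≤ q) (R : Finset (Finset (Fin d))) (c : (Fin d → Fin n) → ℝ) :
    nrm A R c = ∫⁻ w, lp q μ (fun t => ENNReal.ofReal |∑ i, (c i * A i t) * mono R w i|)
      ∂gam (GIdx d n) := by
  unfold nrm
  refine lintegral_congr fun w => ?_
  rw [enorm_comb A hq]
  congr 1
  funext t
  congr 2
  exact Finset.sum_congr rfl fun i _ => by ring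

lemma nrm_upper (hq : 1 ≤ q) (R : Finset (Finset (Fin d))) (c : (Fin d → Fin n) → ℝ) :
    nrm A R c ≤ ENNReal.ofReal ((4 * √(max q 2)) ^ R.card) * hsn A (R.sup id) c := by
  obtain ⟨S, hS, hσ, h0⟩ := exists_sigmaFinite_support A hq
  have hq0 : 0 < q := by linarith
  have h := base_upper (ν := μ.restrict S) hq R (f := fun i t => c i * A i t)
    (fun i => (measurable_A A i).const_mul _)
  rw [nrm_eq A hq]
  unfold hsn
  rw [lp_restrict hq0 hS (fun t ht => by simp [HS, h0 _ t ht])] at h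
  simp only [fun w => lp_restrict (μ := μ) hq0 hS (h := fun t =>
    ENNReal.ofReal |∑ i, (c i * A i t) * mono R w i|) (fun t ht => by simp [h0 _ t ht])] at h
  exact h

lemma nrm_lower (hq : 1 ≤ q) (R : Finset (Finset (Fin d))) (c : (Fin d → Fin n) → ℝ)
    (hc : ∀ i, |c i| ≤ 1) :
    ENNReal.ofReal ((1 / 27) ^ R.card) * hsn A (R.sup id) c ≤ nrm A R c := by
  obtain ⟨S, hS, hσ, h0⟩ := exists_sigmaFinite_support A hq
  have hq0 : 0 < q := by linarith
  have e := lp_restrict (μ := μ) hq0 hS (h := fun t =>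
    ENNReal.ofReal (√(HS (R.sup id) fun i => c i * A i t))) (fun t ht => by simp [HS, h0 _ t ht])
  have h := base_lower (ν := μ.restrict S) hq R (f := fun i t => c i * A i t)
    (fun i => (measurable_A A i).const_mul _) (by
      rw [e]
      exact ((hsn_le A hq _ c hc).trans_lt (ENNReal.sum_lt_top.2 fun i _ => enorm_lt_top)).ne)
  rw [nrm_eq A hq]
  unfold hsn
  rw [e] at h
  simp only [fun w => lp_restrict (μ := μ) hq0 hS (h := fun t =>
    ENNReal.ofReal |∑ i, (c i * A i t) * mono R w i|) (fun t ht => by simp [h0 _ t ht])] at h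
  exact h

end
end LqChaos

/-! ### Deterministic norms and the upper bound -/

namespace LqChaos
noncomputable section

variable {d n : ℕ}

/-- A multi-index is the pair of its restrictions to `J` and to the complement of `J`. -/
def glueEquiv (J : Finset (Fin d)) :
    ({l // l ∈ Finset.univ \ J} → Fin n) × ({l // l ∈ J} → Fin n) ≃ (Fin d → Fin n) where
  toFun z := glue J z.2 z.1
  invFun i := (res _ i, res _ i)
  left_inv := by
    rintro ⟨u, v⟩
    refine Prod.ext ?_ ?_
    · funext l
      have := (Finset.mem_sdiff.1 l.2).2
      simp [res, glue, this]
    · funext l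
      simp [res, glue]
  right_inv i := by
    funext l
    by_cases h : l ∈ J <;> simp [glue, res, h]

lemma glue_agree (J : Finset (Fin d)) (v v' : {l // l ∈ J} → Fin n)
    (u u' : {l // l ∈ Finset.univ \ J} → Fin n) :
    (∀ l ∈ Finset.univ \ J, glue J v u l = glue J v' u' l) ↔ u = u' := by
  constructor
  · intro h
    funext l
    have h1 := h l.1 l.2
    have := (Finset.mem_sdiff.1 l.2).2
    simpa [glue, this] using h1
  · rintro rfl l hl
    have := (Finset.mem_sdiff.1 hl).2
    simp [glue, this]

lemma HS_glue (J : Finset (Fin d)) (c : (Fin d → Fin n) → ℝ) :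
    HS (Finset.univ \ J) c = ∑ u, (∑ v, c (glue J v u)) ^ 2 := by
  unfold HS
  rw [← (glueEquiv J).sum_comp]
  simp only [fun i : Fin d → Fin n => (((glueEquiv J).sum_comp
    (fun i' => if ∀ l ∈ Finset.univ \ J, i l = i' l then c i * c i' else 0)).symm)]
  simp only [glueEquiv, Equiv.coe_fn_mk, Fintype.sum_prod_type, glue_agree]
  refine Finset.sum_congr rfl fun u _ => ?_
  rw [sq, Finset.sum_mul_sum]
  refine Finset.sum_congr rfl fun v _ => ?_
  rw [Finset.sum_eq_single u]
  · simp
  · intro u' _ hu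
    simp [Ne.symm hu]
  · simp

lemma abs_mono_le_one {P : Finset (Finset (Fin d))} {x : GIdx d n → ℝ}
    (hx : ∀ I ∈ P, ∑ v, x ⟨I, v⟩ ^ 2 ≤ 1) (i : Fin d → Fin n) : |mono P x i| ≤ 1 := by
  unfold mono
  rw [Finset.abs_prod]
  refine Finset.prod_le_one (fun _ _ => abs_nonneg _) fun I hI => ?_
  rw [← sq_le_one_iff_abs_le_one]
  exact (Finset.single_le_sum (f := fun v => x ⟨I, v⟩ ^ 2) (fun _ _ => sq_nonneg _)
    (Finset.mem_univ (res I i))).trans (hx I hI)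

section
variable {X : Type*} [MeasurableSpace X] {μ : Measure X} {q : ℝ}
  [hF : Fact ((1 : ℝ≥0∞) ≤ ENNReal.ofReal q)]
  (A : (Fin d → Fin n) → Lp ℝ (ENNReal.ofReal q) μ)

lemma hsn_lt_top (hq : 1 ≤ q) (L : Finset (Fin d)) {c : (Fin d → Fin n) → ℝ}
    (hc : ∀ i, |c i| ≤ 1) : hsn A L c < ⊤ :=
  (hsn_le A hq L c hc).trans_lt (ENNReal.sum_lt_top.2 fun i _ => enorm_lt_top)

/-- The expression inside the supremum defining `tNormLq`, in terms of `hsn`. -/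
lemma term_eq (hq : 1 ≤ q) (J : Finset (Fin d)) (P : Finset (Finset (Fin d)))
    (x : (I : Finset (Fin d)) → ({l // l ∈ I} → Fin n) → ℝ)
    (hx : ∀ I ∈ P, ∑ v, x I v ^ 2 ≤ 1) :
    (∫ t, (∑ u : {l // l ∈ Finset.univ \ J} → Fin n,
          (∑ v : {l // l ∈ J} → Fin n,
            (∏ I ∈ P, x I fun l => glue J v u l.1) * A (glue J v u) t) ^ 2)
        ^ (q / 2) ∂ μ) ^ (1 / q)
      = (hsn A (Finset.univ \ J) (mono P fun j => x j.1 j.2)).toReal := by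
  have hq0 : 0 < q := by linarith
  set c := mono (n := n) P fun j => x j.1 j.2 with hc
  have hm : Measurable fun t => HS (Finset.univ \ J) fun i => c i * A i t :=
    measurable_HS _ fun i => (measurable_A A i).const_mul _
  have e : ∀ t, (∑ u : {l // l ∈ Finset.univ \ J} → Fin n,
          (∑ v : {l // l ∈ J} → Fin n,
            (∏ I ∈ P, x I fun l => glue J v u l.1) * A (glue J v u) t) ^ 2)
        = HS (Finset.univ \ J) fun i => c i * A i t := by
    intro t
    rw [HS_glue]
    rfl
  simp only [e]
  rw [integral_eq_lintegral_of_nonneg_ae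
    (Filter.Eventually.of_forall fun t => Real.rpow_nonneg (HS_nonneg _ _) _)
    (hm.pow_const _).aestronglyMeasurable]
  unfold hsn lp
  rw [ENNReal.toReal_rpow]
  congr 3
  funext t
  rw [ENNReal.ofReal_rpow_of_nonneg (Real.sqrt_nonneg _) hq0.le, Real.sqrt_eq_rpow,
    ← Real.rpow_mul (HS_nonneg _ _)]
  congr 2
  ring

lemma hsn_le_tNormLq (hq : 1 ≤ q) (J : Finset (Fin d)) (P : Finset (Finset (Fin d)))
    (x : GIdx d n → ℝ) (hx : ∀ I ∈ P, ∑ v, x ⟨I, v⟩ ^ 2 ≤ 1) :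
    hsn A (Finset.univ \ J) (mono P x) ≤ ENNReal.ofReal (tNormLq μ q A J P) := by
  rw [← ENNReal.ofReal_toReal (hsn_lt_top A hq _ (abs_mono_le_one hx)).ne]
  refine ENNReal.ofReal_le_ofReal (le_csSup ⟨(∑ i, ‖A i‖ₑ).toReal, ?_⟩
    ⟨fun I v => x ⟨I, v⟩, hx, (term_eq A hq J P (fun I v => x ⟨I, v⟩) hx).symm⟩)
  rintro r ⟨y, hy, rfl⟩
  rw [term_eq A hq J P y hy]
  exact ENNReal.toReal_mono (ENNReal.sum_lt_top.2 fun i _ => enorm_lt_top).ne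
    (hsn_le A hq _ _ (abs_mono_le_one hy))

lemma tNormLq_le (hq : 1 ≤ q) (J : Finset (Fin d)) (P : Finset (Finset (Fin d))) {M : ℝ}
    (hM : 0 ≤ M) (h : ∀ x : GIdx d n → ℝ, (∀ I ∈ P, ∑ v, x ⟨I, v⟩ ^ 2 ≤ 1) →
      hsn A (Finset.univ \ J) (mono P x) ≤ ENNReal.ofReal M) : tNormLq μ q A J P ≤ M := by
  refine Real.sSup_le ?_ hM
  rintro r ⟨y, hy, rfl⟩
  rw [term_eq A hq J P y hy]
  exact ENNReal.toReal_le_of_le_ofReal hM (h (fun j => y j.1 j.2) hy)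

lemma tNormLq_nonneg (hq : 1 ≤ q) (J : Finset (Fin d)) (P : Finset (Finset (Fin d))) :
    0 ≤ tNormLq μ q A J P := by
  refine Real.sSup_nonneg ?_
  rintro r ⟨y, hy, rfl⟩
  rw [term_eq A hq J P y hy]
  exact ENNReal.toReal_nonneg

/-- The deterministic quantity that controls the moments. -/
def total (p : ℝ) : ℝ := ∑ J : Finset (Fin d), ∑ P ∈ partitionsOf J,
  p ^ ((P.card : ℝ) / 2) * tNormLq μ q A J P

lemma term_le_total (hq : 1 ≤ q) {p : ℝ} (hp : 1 ≤ p) {J : Finset (Fin d)}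
    {P : Finset (Finset (Fin d))} (hP : P ∈ partitionsOf J) :
    p ^ ((P.card : ℝ) / 2) * tNormLq μ q A J P ≤ total A p := by
  have h0 : ∀ J P, 0 ≤ p ^ ((P.card : ℝ) / 2) * tNormLq μ q A J P := fun J P =>
    mul_nonneg (by positivity) (tNormLq_nonneg A hq J P)
  refine (Finset.single_le_sum (f := fun P => p ^ ((P.card : ℝ) / 2) * tNormLq μ q A J P)
    (fun P _ => h0 J P) hP).trans ?_
  exact Finset.single_le_sum (f := fun J => ∑ P ∈ partitionsOf J,
    p ^ ((P.card : ℝ) / 2) * tNormLq μ q A J P)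
    (fun J _ => Finset.sum_nonneg fun P _ => h0 J P) (Finset.mem_univ J)

lemma sqrt_pow_eq {p : ℝ} (hp : 1 ≤ p) (k : ℕ) : √p ^ k = p ^ ((k : ℝ) / 2) := by
  rw [Real.sqrt_eq_rpow, ← Real.rpow_natCast, ← Real.rpow_mul (by linarith)]
  congr 1
  ring

lemma sqrt_max_pow_le (hd : 1 ≤ d) (hq : 1 ≤ q) {k : ℕ} (hk : k ≤ d) :
    (4 * √(max q 2)) ^ k ≤ 8 ^ d * q ^ ((d : ℝ) - 1 / 2) := by
  have h1 : √(max q 2) ≤ 2 * √q := by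
    refine Real.sqrt_le_iff.2 ⟨by positivity, ?_⟩
    rw [mul_pow, Real.sq_sqrt (by linarith)]
    exact max_le (by linarith) (by linarith)
  have hs : 1 ≤ √q := Real.one_le_sqrt.2 hq
  calc (4 * √(max q 2)) ^ k ≤ (8 * √q) ^ k :=
        pow_le_pow_left₀ (by positivity) (by linarith) k
    _ ≤ (8 * √q) ^ d := pow_le_pow_right₀ (by linarith) hk
    _ = 8 ^ d * q ^ ((d : ℝ) / 2) := by rw [mul_pow, sqrt_pow_eq hq]
    _ ≤ _ := by
        have : (1 : ℝ) ≤ d := by exact_mod_cast hd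
        gcongr
        linarith

lemma card_le_of_part {P : Finset (Finset (Fin d))} (h0 : ∀ I ∈ P, I.Nonempty)
    (h1 : ∀ I ∈ P, ∀ I' ∈ P, I ≠ I' → Disjoint I I') : P.card ≤ d := by
  have : ∀ I ∈ P, 1 ≤ I.card := fun I hI => (h0 I hI).card_pos
  calc P.card = ∑ I ∈ P, 1 := by simp
    _ ≤ ∑ I ∈ P, I.card := Finset.sum_le_sum this
    _ = (P.biUnion id).card := (Finset.card_biUnion h1).symm
    _ ≤ d := by simpa using Finset.card_le_univ (P.biUnion id)

/-- The total bound for the mixed quantities in which no random block carries a supremum. -/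
lemma base_bound (hd : 1 ≤ d) (hq : 1 ≤ q) {p : ℝ} (hp : 1 ≤ p)
    (P P' : Finset (Finset (Fin d))) (hT : Tri ∅ P P') (x : GIdx d n → ℝ) (hx : x ∈ Ball P) :
    ENNReal.ofReal (√p) ^ P.card * nrm A P' (fun i => mono P x i)
      ≤ ENNReal.ofReal (8 ^ d * q ^ ((d : ℝ) - 1 / 2) * total A p) := by
  have hpart := hT.part
  rw [Finset.empty_union] at hpart
  have hP : P ∈ partitionsOf (P.sup id) := by
    simp only [partitionsOf, Finset.mem_filter, Finset.mem_univ, true_and]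
    exact ⟨fun I hI => hpart.1 I (Finset.mem_union_left _ hI), fun I hI I' hI' hne =>
      hpart.2.1 I (Finset.mem_union_left _ hI) I' (Finset.mem_union_left _ hI') hne, rfl⟩
  have hcard : P'.card ≤ d := card_le_of_part
    (fun I hI => hpart.1 I (Finset.mem_union_right _ hI)) (fun I hI I' hI' hne =>
      hpart.2.1 I (Finset.mem_union_right _ hI) I' (Finset.mem_union_right _ hI') hne)
  have hsup : P'.sup id = Finset.univ \ P.sup id := by
    have hu := hpart.2.2
    rw [Finset.sup_union] at hu
    have hdj : Disjoint (P.sup id) (P'.sup id) := by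
      rw [Finset.disjoint_sup_left]
      intro I hI
      rw [Finset.disjoint_sup_right]
      intro I' hI'
      refine hpart.2.1 I (Finset.mem_union_left _ hI) I' (Finset.mem_union_right _ hI') ?_
      rintro rfl
      exact Finset.disjoint_left.1 hT.disj3 hI hI'
    rw [← hu]
    simp only [Finset.sup_eq_union]
    rw [Finset.union_sdiff_cancel_left hdj]
  have h1 := nrm_upper A hq P' (mono P x)
  rw [hsup] at h1
  have h2 := hsn_le_tNormLq A hq (P.sup id) P x hx.1
  have ht := tNormLq_nonneg A hq (P.sup id) P
  calc _ ≤ ENNReal.ofReal (√p) ^ P.card * (ENNReal.ofReal ((4 * √(max q 2)) ^ P'.card) *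
        ENNReal.ofReal (tNormLq μ q A (P.sup id) P)) := by
        gcongr
        exact h1.trans (by gcongr)
    _ = ENNReal.ofReal ((4 * √(max q 2)) ^ P'.card *
        (p ^ ((P.card : ℝ) / 2) * tNormLq μ q A (P.sup id) P)) := by
        rw [← ENNReal.ofReal_pow (Real.sqrt_nonneg _), ← ENNReal.ofReal_mul (by positivity),
          ← ENNReal.ofReal_mul (by positivity), sqrt_pow_eq hp]
        congr 1
        ring
    _ ≤ _ := by
        refine ENNReal.ofReal_le_ofReal ?_
        exact mul_le_mul (sqrt_max_pow_le hd hq hcard) (term_le_total A hq hp hP)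
          (by positivity) (by positivity)

end

section
variable {F : Type*} [NormedAddCommGroup F] [NormedSpace ℝ F] (a : (Fin d → Fin n) → F)

lemma mono_sing (J : Finset (Fin d)) (w : GIdx d n → ℝ) (i : Fin d → Fin n) :
    mono (sing J) w i = ∏ k ∈ J, w ⟨{k}, fun _ => i k⟩ := by
  unfold mono sing
  rw [Finset.prod_image (fun k _ k' _ h => Finset.singleton_injective h)]
  refine Finset.prod_congr rfl fun k _ => ?_
  congr 1
  unfold pos res
  congr 1
  funext l
  rw [Finset.mem_singleton.1 l.2]

/-- The chaos in the variables `ω (k, v)` is the chaos in the singleton blocks. -/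
lemma lintegral_decChaos {p : ℝ} (hp : 1 ≤ p) :
    lp p (gam (Fin d × Fin n)) (fun w => ‖decChaos a w‖ₑ)
      = lp p (gam (GIdx d n)) (fun w => ‖∑ i, mono (sing Finset.univ) w i • a i‖ₑ) := by
  have hinj : Function.Injective
      (fun z : Fin d × Fin n => (⟨{z.1}, fun _ => z.2⟩ : GIdx d n)) := by
    rintro ⟨k, v⟩ ⟨k', v'⟩ h
    obtain ⟨h1, h2⟩ := Sigma.mk.inj h
    simp only at h1
    obtain rfl := Finset.singleton_injective h1
    have := congrFun (eq_of_heq h2) ⟨k, by simp⟩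
    simp only at this
    rw [this]
  unfold lp
  have hc : Continuous fun w : Fin d × Fin n → ℝ => decChaos a w := by
    unfold decChaos; fun_prop
  rw [← lintegral_reindex _ hinj (fun w => ‖decChaos a w‖ₑ ^ p)
    ((hc.enorm.measurable).pow_const p)]
  simp only [decChaos, mono_sing]

/-- Finiteness rules out the junk values of the Bochner integral in `momP`. -/
lemma ofReal_momP {p : ℝ} (hp : 1 ≤ p)
    (hfin : lp p (gam (GIdx d n)) (fun w => ‖∑ i, mono (sing Finset.univ) w i • a i‖ₑ) ≠ ⊤) :
    ENNReal.ofReal (momP a p)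
      = lp p (gam (GIdx d n)) (fun w => ‖∑ i, mono (sing Finset.univ) w i • a i‖ₑ) := by
  have hp0 : 0 < p := by linarith
  have hc : Continuous fun w : Fin d × Fin n → ℝ => decChaos a w := by
    unfold decChaos; fun_prop
  rw [← lintegral_decChaos a hp] at hfin ⊢
  rw [← ENNReal.ofReal_toReal hfin]
  congr 1
  unfold momP lp
  rw [integral_eq_lintegral_of_nonneg_ae (Filter.Eventually.of_forall fun t => by positivity)
    (by exact (hc.norm.measurable.pow_const p).aestronglyMeasurable), ENNReal.toReal_rpow]
  congr 3
  funext w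
  rw [← ENNReal.ofReal_rpow_of_nonneg (norm_nonneg _) hp0.le, ofReal_norm]

end

/-- The upper bound of the theorem, with both sides in `[0,∞]`. -/
lemma lp_upper {X : Type*} [MeasurableSpace X] {μ : Measure X} {q : ℝ}
    [hF : Fact ((1 : ℝ≥0∞) ≤ ENNReal.ofReal q)]
    (A : (Fin d → Fin n) → Lp ℝ (ENNReal.ofReal q) μ)
    (hd : 1 ≤ d) (hq : 1 ≤ q) {p : ℝ} (hp : 1 ≤ p) :
    lp p (gam (GIdx d n)) (fun w => ‖∑ i, mono (sing Finset.univ) w i • A i‖ₑ)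
      ≤ ENNReal.ofReal (boundC d) ^ d *
        ENNReal.ofReal (8 ^ d * q ^ ((d : ℝ) - 1 / 2) * total A p) :=
  banach_upper A hp fun P P' hT x hx => base_bound A hd hq hp P P' hT x hx

end
end LqChaos

/-! ### The lower bound and the theorem -/

namespace LqChaos
noncomputable section

variable {d n : ℕ}

lemma sup_sing (J : Finset (Fin d)) : (sing J).sup id = J := by
  ext l
  simp only [Finset.mem_sup, sing, Finset.mem_image]
  constructor
  · rintro ⟨_, ⟨k, hk, rfl⟩, hl⟩
    rw [id_eq, Finset.mem_singleton] at hl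
    rwa [hl]
  · intro hl
    exact ⟨{l}, ⟨l, hl, rfl⟩, by simp⟩

lemma card_sing (J : Finset (Fin d)) : (sing J).card = J.card :=
  Finset.card_image_of_injective _ Finset.singleton_injective

lemma sing_union (J K : Finset (Fin d)) : sing (J ∪ K) = sing J ∪ sing K :=
  Finset.image_union _ _

lemma disjoint_sing {J K : Finset (Fin d)} (h : Disjoint J K) : Disjoint (sing J) (sing K) := by
  rw [Finset.disjoint_left]
  intro I hI hI'
  simp only [sing, Finset.mem_image] at hI hI'
  obtain ⟨k, hk, rfl⟩ := hI
  obtain ⟨k', hk', e⟩ := hI'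
  rw [Finset.singleton_inj] at e
  subst e
  exact Finset.disjoint_left.1 h hk hk'

/-- Cauchy–Schwarz: pairing with a unit array on the block `I` is dominated by `HS I`. -/
lemma sum_le_sqrt_HS (I : Finset (Fin d)) (c : (Fin d → Fin n) → ℝ) (x : GIdx d n → ℝ)
    (hx : ∑ v, x ⟨I, v⟩ ^ 2 ≤ 1) : ∑ i, x (pos I i) * c i ≤ √(HS I c) := by
  have e : ∑ i, x (pos I i) * c i = ∑ j : GIdx d n, (if j.1 = I then x j else 0) *
      ∑ i, if pos I i = j then c i else 0 := by
    simp only [Finset.mul_sum]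
    rw [Finset.sum_comm]
    refine Finset.sum_congr rfl fun i _ => ?_
    rw [Finset.sum_eq_single (pos I i)]
    · simp [pos]
    · intro j _ hj
      simp [hj.symm]
    · simp
  have h1 : ∑ j : GIdx d n, (if j.1 = I then x j else 0) ^ 2 ≤ 1 := by
    rw [Fintype.sum_sigma, Finset.sum_eq_single I]
    · simpa using hx
    · intro I' _ hI'
      simp [hI']
    · simp
  rw [e, HS_eq]
  refine (Real.sum_mul_le_sqrt_mul_sqrt _ _ _).trans ?_
  exact mul_le_of_le_one_left (Real.sqrt_nonneg _) (Real.sqrt_le_one.2 h1)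

section
variable {F : Type*} [NormedAddCommGroup F] [NormedSpace ℝ F] (a : (Fin d → Fin n) → F)

/-- The factor kept when a block of Gaussians is replaced by a deterministic unit array. -/
def lowC (d : ℕ) : ℝ := (1 / 27) ^ d

lemma lowC_pos (d : ℕ) : 0 < lowC d := by unfold lowC; positivity

lemma pow_card_ge (J : Finset (Fin d)) : lowC d ≤ (1 / 27 : ℝ) ^ (sing J).card := by
  unfold lowC
  refine pow_le_pow_of_le_one (by norm_num) (by norm_num) ?_
  rw [card_sing]
  simpa using Finset.card_le_univ J

/-- One block of Gaussians against a unit array on it: a norming functional reduces to scalars. -/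
lemma block_inner {p : ℝ} (hp : 1 ≤ p) {I : Finset (Fin d)} (hI : I.Nonempty)
    (x : GIdx d n → ℝ) (hx : ∑ v, x ⟨I, v⟩ ^ 2 ≤ 1) :
    ENNReal.ofReal (lowC d * √p) * ‖∑ i, x (pos I i) • a i‖ₑ
      ≤ lp p (gam (GIdx d n)) (fun w => ‖∑ i, mono (sing I) w i • a i‖ₑ) := by
  obtain ⟨φ, hφ, hφ'⟩ := exists_dual_vector'' ℝ (∑ i, x (pos I i) • a i)
  have h1 : ‖∑ i, x (pos I i) • a i‖ ≤ √(HS I fun i => φ (a i)) := by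
    have : ‖∑ i, x (pos I i) • a i‖ = ∑ i, x (pos I i) * φ (a i) := by
      have h := hφ'
      simp only [map_sum, map_smul, smul_eq_mul] at h
      exact h.symm
    rw [this]
    exact sum_le_sqrt_HS I _ x hx
  have hne : (sing I).Nonempty := by
    unfold sing; exact hI.image _
  have h2 := chaos_lower hp hne (fun i => φ (a i))
  rw [sup_sing] at h2
  calc _ = ENNReal.ofReal (lowC d * √p * ‖∑ i, x (pos I i) • a i‖) := by
        rw [ENNReal.ofReal_mul (mul_nonneg (lowC_pos d).le (Real.sqrt_nonneg _)), ofReal_norm]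
    _ ≤ ENNReal.ofReal ((1 / 27) ^ (sing I).card * √p * √(HS I fun i => φ (a i))) := by
        refine ENNReal.ofReal_le_ofReal ?_
        have := pow_card_ge I
        gcongr
    _ ≤ _ := h2
    _ ≤ _ := by
        refine lp_mono (by linarith) fun w => ?_
        rw [← ofReal_norm]
        refine ENNReal.ofReal_le_ofReal ?_
        have e : ∑ i, φ (a i) * mono (sing I) w i = φ (∑ i, mono (sing I) w i • a i) := by
          simp only [map_sum, map_smul, smul_eq_mul, mul_comm]
        rw [e, ← Real.norm_eq_abs]
        exact (φ.le_opNorm _).trans (mul_le_of_le_one_left (norm_nonneg _) hφ)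

/-- The Gaussian variables with coordinates in `I` are replaced by a unit array on the block `I`, in
the presence of further Gaussian blocks `R`. -/
lemma block_step {p : ℝ} (hp : 1 ≤ p) {I : Finset (Fin d)} (hI : I.Nonempty)
    {R : Finset (Finset (Fin d))} (hR : Disjoint (sing I) R)
    (x : GIdx d n → ℝ) (hx : ∑ v, x ⟨I, v⟩ ^ 2 ≤ 1) :
    ENNReal.ofReal (lowC d * √p) *
        lp p (gam (GIdx d n)) (fun w => ‖∑ i, mono R w i • x (pos I i) • a i‖ₑ)
      ≤ lp p (gam (GIdx d n)) (fun w => ‖∑ i, mono (sing I ∪ R) w i • a i‖ₑ) := by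
  have hp0 : 0 < p := by linarith
  have hm : Measurable fun w : GIdx d n → ℝ => ‖∑ i, mono R w i • x (pos I i) • a i‖ₑ :=
    (Continuous.enorm (by fun_prop)).measurable
  rw [← lp_const_mul hp0 _ hm, lp_le_iff hp0, lp_rpow hp0]
  have e := lintegral_mono_merge (n := n) hR.symm (fun f => ‖∑ i, f i • a i‖ₑ ^ p)
    ((Continuous.enorm (by fun_prop)).measurable.pow_const p)
  rw [Finset.union_comm, ← e]
  refine lintegral_mono fun w => ?_
  have h := block_inner (fun i => mono R w i • a i) hp hI x hx
  have e1 : ∑ i, x (pos I i) • mono R w i • a i = ∑ i, mono R w i • x (pos I i) • a i :=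
    Finset.sum_congr rfl fun i _ => smul_comm _ _ _
  have e2 : ∀ w' : GIdx d n → ℝ, ∑ i, mono (sing I) w' i • mono R w i • a i
      = ∑ i, (mono R w i * mono (sing I) w' i) • a i := fun w' =>
    Finset.sum_congr rfl fun i _ => by rw [smul_smul, mul_comm]
  simp only [e1, e2] at h
  have h' := ENNReal.rpow_le_rpow h hp0.le
  rwa [lp_rpow hp0] at h'

/-- `block_step` iterated over all the blocks of `P`. -/
lemma blocks_lower {p : ℝ} (hp : 1 ≤ p) (P : Finset (Finset (Fin d)))
    (hne : ∀ I ∈ P, I.Nonempty) (hdj : ∀ I ∈ P, ∀ I' ∈ P, I ≠ I' → Disjoint I I')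
    (K : Finset (Fin d)) (hK : ∀ I ∈ P, Disjoint I K)
    (x : GIdx d n → ℝ) (hx : ∀ I ∈ P, ∑ v, x ⟨I, v⟩ ^ 2 ≤ 1) :
    ENNReal.ofReal (lowC d * √p) ^ P.card *
        lp p (gam (GIdx d n)) (fun w => ‖∑ i, (mono P x i * mono (sing K) w i) • a i‖ₑ)
      ≤ lp p (gam (GIdx d n)) (fun w => ‖∑ i, mono (sing (P.sup id ∪ K)) w i • a i‖ₑ) := by
  induction P using Finset.induction_on generalizing a with
  | empty => simp [mono_empty]
  | insert I P hIP ih =>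
    have hih := ih (fun i => x (pos I i) • a i)
      (fun I' h => hne I' (Finset.mem_insert_of_mem h))
      (fun I' h I'' h' => hdj I' (Finset.mem_insert_of_mem h) I'' (Finset.mem_insert_of_mem h'))
      (fun I' h => hK I' (Finset.mem_insert_of_mem h))
      (fun I' h => hx I' (Finset.mem_insert_of_mem h))
    have hI := Finset.mem_insert_self I P
    have hd1 : Disjoint I (P.sup id ∪ K) := by
      rw [Finset.disjoint_union_right, Finset.disjoint_sup_right]
      refine ⟨fun I' hI' => hdj I hI I' (Finset.mem_insert_of_mem hI') ?_, hK I hI⟩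
      rintro rfl
      exact hIP hI'
    have h := block_step a hp (hne I hI) (disjoint_sing hd1) x (hx I hI)
    rw [← sing_union, ← Finset.union_assoc] at h
    rw [Finset.card_insert_of_notMem hIP, pow_succ', mul_assoc, Finset.sup_insert]
    refine le_trans ?_ h
    gcongr
    refine le_trans (le_of_eq ?_) hih
    congr 2
    funext w
    congr 1
    refine Finset.sum_congr rfl fun i _ => ?_
    rw [mono_insert hIP, smul_smul]
    congr 1
    ring

end

lemma lowC_pow_le {k : ℕ} (hk : k ≤ d) : lowC d ^ d ≤ lowC d ^ k := by
  refine pow_le_pow_of_le_one (lowC_pos d).le ?_ hk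
  unfold lowC
  exact pow_le_one₀ (by norm_num) (by norm_num)

/-- The lower bound for a single pair `(J, P)`. -/
lemma lower_term {X : Type*} [MeasurableSpace X] {μ : Measure X} {q : ℝ}
    [hF : Fact ((1 : ℝ≥0∞) ≤ ENNReal.ofReal q)]
    (A : (Fin d → Fin n) → Lp ℝ (ENNReal.ofReal q) μ)
    (hq : 1 ≤ q) {p : ℝ} (hp : 1 ≤ p) {M : ℝ} (hM0 : 0 ≤ M)
    (hM : lp p (gam (GIdx d n)) (fun w => ‖∑ i, mono (sing Finset.univ) w i • A i‖ₑ)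
      ≤ ENNReal.ofReal M) {J : Finset (Fin d)}
    {P : Finset (Finset (Fin d))} (hP : P ∈ partitionsOf J) :
    lowC d ^ (d + 1) * (p ^ ((P.card : ℝ) / 2) * tNormLq μ q A J P) ≤ M := by
  simp only [partitionsOf, Finset.mem_filter, Finset.mem_univ, true_and] at hP
  obtain ⟨h0, h1, h2⟩ := hP
  have hlow := lowC_pos d
  have hp0 : 0 < p := by linarith
  set κ := lowC d ^ (d + 1) * p ^ ((P.card : ℝ) / 2) with hκ
  have hκ0 : 0 < κ := by positivity
  rw [← mul_assoc, ← hκ, ← le_div_iff₀' hκ0]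
  refine tNormLq_le A hq J P (by positivity) fun x hx => ?_
  rw [ENNReal.ofReal_div_of_pos hκ0, ENNReal.le_div_iff_mul_le (by simp [hκ0]) (by simp)]
  rw [mul_comm]
  have hJ : J ∪ (Finset.univ \ J) = Finset.univ := Finset.union_sdiff_of_subset (by simp)
  have hb := blocks_lower A hp P h0 h1 (Finset.univ \ J) (fun I hI => by
    refine Finset.disjoint_sdiff.mono_left ?_
    rw [← h2]
    exact Finset.le_sup (f := id) hI) x hx
  rw [h2, hJ] at hb
  refine le_trans ?_ (hb.trans hM)
  have h3 := nrm_lower A hq (sing (Finset.univ \ J)) (mono P x) (abs_mono_le_one hx)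
  rw [sup_sing] at h3
  have h4 : nrm A (sing (Finset.univ \ J)) (mono P x) ≤ _ :=
    lintegral_le_lp hp (measurable_enorm_chaos A (sing (Finset.univ \ J)) (mono P x))
  have h5 : ENNReal.ofReal κ ≤ ENNReal.ofReal (lowC d * √p) ^ P.card *
      ENNReal.ofReal ((1 / 27) ^ (sing (Finset.univ \ J)).card) := by
    rw [← ENNReal.ofReal_pow (by positivity), ← ENNReal.ofReal_mul (by positivity)]
    refine ENNReal.ofReal_le_ofReal ?_
    rw [hκ, mul_pow, sqrt_pow_eq hp, pow_succ]
    have h6 := pow_card_ge (Finset.univ \ J)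
    have h7 := lowC_pow_le (card_le_of_part h0 h1)
    calc _ = lowC d ^ d * p ^ ((P.card : ℝ) / 2) * lowC d := by ring
      _ ≤ _ := by gcongr
  calc _ ≤ _ := mul_le_mul_left h5 _
    _ ≤ _ := by
      rw [mul_assoc]
      gcongr
      exact h3.trans h4

/-- The number of pairs `(J, P)`. -/
def pairC (d : ℕ) : ℝ := ∑ J : Finset (Fin d), ((partitionsOf J).card : ℝ)

/-- The pairs `(J, P)` are summed, their number being a function of `d`. -/
lemma total_le {X : Type*} [MeasurableSpace X] {μ : Measure X} {q : ℝ}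
    [hF : Fact ((1 : ℝ≥0∞) ≤ ENNReal.ofReal q)]
    (A : (Fin d → Fin n) → Lp ℝ (ENNReal.ofReal q) μ)
    (hq : 1 ≤ q) {p : ℝ} (hp : 1 ≤ p) {M : ℝ} (hM0 : 0 ≤ M)
    (hM : lp p (gam (GIdx d n)) (fun w => ‖∑ i, mono (sing Finset.univ) w i • A i‖ₑ)
      ≤ ENNReal.ofReal M) :
    lowC d ^ (d + 1) * total A p ≤ pairC d * M := by
  unfold total pairC
  rw [Finset.mul_sum, Finset.sum_mul]
  refine Finset.sum_le_sum fun J _ => ?_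
  rw [Finset.mul_sum, ← nsmul_eq_mul]
  exact Finset.sum_le_card_nsmul _ _ _ fun P hP => lower_term A hq hp hM0 hM hP

lemma two_sided {X : Type*} [MeasurableSpace X] {μ : Measure X} {q : ℝ}
    [hF : Fact ((1 : ℝ≥0∞) ≤ ENNReal.ofReal q)]
    (A : (Fin d → Fin n) → Lp ℝ (ENNReal.ofReal q) μ)
    (hd : 1 ≤ d) (hq : 1 ≤ q) {p : ℝ} (hp : 1 ≤ p) :
    lowC d ^ (d + 1) * total A p ≤ pairC d * momP A p ∧
    momP A p ≤ boundC d ^ d * 8 ^ d * q ^ ((d : ℝ) - 1 / 2) * total A p := by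
  have hup := lp_upper A hd hq hp
  have hB : 0 ≤ boundC d := by
    have := stepC_nonneg d
    unfold boundC
    positivity
  rw [← ENNReal.ofReal_pow hB, ← ENNReal.ofReal_mul (by positivity)] at hup
  have hmom := ofReal_momP A hp (hup.trans_lt ENNReal.ofReal_lt_top).ne
  have h0 : 0 ≤ momP A p := by
    unfold momP
    refine Real.rpow_nonneg (integral_nonneg fun w => ?_) _
    positivity
  have ht : 0 ≤ total A p := Finset.sum_nonneg fun J _ => Finset.sum_nonneg fun P _ =>
    mul_nonneg (by positivity) (tNormLq_nonneg A hq J P)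
  refine ⟨total_le A hq hp h0 hmom.ge, ?_⟩
  rw [← hmom, ENNReal.ofReal_le_ofReal_iff (by positivity)] at hup
  refine hup.trans (le_of_eq ?_)
  ring

end
end LqChaos

theorem Lq_chaos_moment_two_sided (d : ℕ) (hd : 1 ≤ d) :
    ∃ C : ℝ, 0 < C ∧
      ∀ (n : ℕ) (q : ℝ) (hq : 1 ≤ q) (X : Type*) (mX : MeasurableSpace X)
        (μ : Measure X),
        haveI : Fact ((1 : ℝ≥0∞) ≤ ENNReal.ofReal q) :=
          ⟨by rw [← ENNReal.ofReal_one]; exact ENNReal.ofReal_le_ofReal hq⟩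
        ∀ (A : (Fin d → Fin n) → Lp ℝ (ENNReal.ofReal q) μ) (p : ℝ), 1 ≤ p →
          (1 / C) * q ^ ((1 - (d : ℝ)) / 2) *
              ∑ J : Finset (Fin d), ∑ P ∈ partitionsOf J,
                p ^ ((P.card : ℝ) / 2) * tNormLq μ q A J P
            ≤ momP A p ∧
          momP A p ≤ C * q ^ ((d : ℝ) - 1 / 2) *
              ∑ J : Finset (Fin d), ∑ P ∈ partitionsOf J,
                p ^ ((P.card : ℝ) / 2) * tNormLq μ q A J P := by
  have hl := LqChaos.lowC_pos d
  have hpair : 0 ≤ LqChaos.pairC d := by unfold LqChaos.pairC; positivity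
  have hB : 0 ≤ LqChaos.boundC d := by
    have := LqChaos.stepC_nonneg d
    unfold LqChaos.boundC
    positivity
  refine ⟨1 + LqChaos.boundC d ^ d * 8 ^ d + LqChaos.pairC d / LqChaos.lowC d ^ (d + 1),
    by positivity, ?_⟩
  intro n q hq X mX μ
  haveI : Fact ((1 : ℝ≥0∞) ≤ ENNReal.ofReal q) :=
    ⟨by rw [← ENNReal.ofReal_one]; exact ENNReal.ofReal_le_ofReal hq⟩
  intro A p hp
  obtain ⟨h1, h2⟩ := LqChaos.two_sided A hd hq hp
  have hmom : 0 ≤ momP A p := by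
    unfold momP
    refine Real.rpow_nonneg (integral_nonneg fun w => ?_) _
    positivity
  have ht : 0 ≤ LqChaos.total A p := Finset.sum_nonneg fun J _ => Finset.sum_nonneg fun P _ =>
    mul_nonneg (by positivity) (LqChaos.tNormLq_nonneg A hq J P)
  change (1 / _) * _ * LqChaos.total A p ≤ _ ∧ _ ≤ _ * _ * LqChaos.total A p
  have hq1 : q ^ ((1 - (d : ℝ)) / 2) ≤ 1 := by
    refine Real.rpow_le_one_of_one_le_of_nonpos hq ?_
    have : (1 : ℝ) ≤ d := by exact_mod_cast hd
    linarith
  have hq2 : 0 ≤ q ^ ((1 - (d : ℝ)) / 2) := by positivity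
  have h3 : LqChaos.total A p ≤ LqChaos.pairC d / LqChaos.lowC d ^ (d + 1) * momP A p := by
    rw [div_mul_eq_mul_div, le_div_iff₀ (by positivity), mul_comm]
    exact h1
  constructor
  · rw [mul_assoc, one_div_mul_eq_div, div_le_iff₀ (by positivity)]
    calc _ ≤ 1 * LqChaos.total A p := mul_le_mul_of_nonneg_right hq1 ht
      _ ≤ LqChaos.pairC d / LqChaos.lowC d ^ (d + 1) * momP A p := by rw [one_mul]; exact h3
      _ ≤ (1 + LqChaos.boundC d ^ d * 8 ^ d + LqChaos.pairC d / LqChaos.lowC d ^ (d + 1)) *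
          momP A p :=
        mul_le_mul_of_nonneg_right (le_add_of_nonneg_left (by positivity)) hmom
      _ = _ := mul_comm _ _
  · refine h2.trans ?_
    gcongr
    have : 0 ≤ LqChaos.pairC d / LqChaos.lowC d ^ (d + 1) := by positivity
    linarith
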